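/- arXiv:2102.02778 — 2 statements merged into one kernel-verified Lean document; each statement's English description precedes it below -/
import Mathlib

section
/- Let X be an infinite-dimensional Banach space with non-trivial type, i.e. X has Rademacher type p for some p > 1 (there is a constant T such that for every finite sequence x₁,…,x_m in X the average over all choices of signs ε_i ∈ {−1,1} of ‖Σ ε_i x_i‖ is at most T·(Σ‖x_i‖^p)^{1/p}). Then P(²X) is not complemented in Lip₀(B_X). -/
open Metric Set Real

noncomputable section

/-- The closed unit ball of a normed space, as a pointed metric space. -/
def UBall (X : Type*) [NormedAddCommGroup X] : Set X := Metric.closedBall (0 : X) 1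

/-- The base point of the unit ball. -/
def zeroB (X : Type*) [NormedAddCommGroup X] : ↥(UBall X) :=
  ⟨0, Metric.mem_closedBall_self zero_le_one⟩

/-- `Lip₀(B_X)`: real-valued Lipschitz functions on the closed unit ball vanishing at `0`. -/
def Lip0B (X : Type*) [NormedAddCommGroup X] : Set (↥(UBall X) → ℝ) :=
  {f | (∃ K : NNReal, LipschitzWith K f) ∧ f (zeroB X) = 0}

/-- The image of the space `P(ᵏX)` of `k`-homogeneous polynomials on `X` inside the
functions on the unit ball, via the restriction embedding `P ↦ P↾_{B_X}`. -/
def PhomB (k : ℕ) (X : Type*) [NormedAddCommGroup X] [NormedSpace ℝ X] :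
    Set (↥(UBall X) → ℝ) :=
  {f | ∃ M : ContinuousMultilinearMap ℝ (fun _ : Fin k => X) ℝ,
    ∀ x : ↥(UBall X), f x = M (fun _ => (x : X))}

/-- `C₀¹(B_E)`: functions on the closed unit ball that are continuous on the closed ball,
continuously differentiable on the open ball with uniformly continuous derivative,
and vanish at `0`. -/
def C01B (E : Type*) [NormedAddCommGroup E] [NormedSpace ℝ E] :
    Set (↥(UBall E) → ℝ) :=
  {f | ∃ g : E → ℝ,
    (∀ x : ↥(UBall E), f x = g x) ∧
    ContinuousOn g (UBall E) ∧ g 0 = 0 ∧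
    ∃ g' : E → (E →L[ℝ] ℝ),
      (∀ x ∈ Metric.ball (0 : E) 1, HasFDerivAt g (g' x) x) ∧
      UniformContinuousOn g' (Metric.ball (0 : E) 1)}

/-!
Non-trivial type implies K-convexity (Pisier). The noise semigroup on `L²({-1, 1}ⁿ; X)` is an
average of conditional expectations `E`. If a product `∏ (1 - E i)` of `N` differences had norm
above `2 ^ N - 1 / 2`, there would be vectors `v i` of norm at most one whose signed sums all have
norm at least `N / 2`, contradicting type for large `N`. So the semigroup satisfies the
Kato–Beurling condition `‖(1 - P) ^ N‖ ≤ 2 ^ N - 1 / 2` for all `n`; it is therefore holomorphic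
with bounds independent of `n`, and its first spectral projection, the Rademacher projection, is
uniformly bounded.

Successive draws from an ultrafilter of differences give arbitrarily long finite sequences `φ` in
the infinite-dimensional dual, bounded above and below, all of whose signed sums have norms
comparable to some `A`. Scale `φ` so that `∑ l, φ l x ^ 2 ≤ ‖x‖ ^ 2`. The Riesz products
`∏ l, (1 + i ε l φ l x)` then have Lipschitz constants of order `A` on the ball, and their
Walsh coefficient at `{k, l}` is `-φ k φ l`, which is fixed by a projection onto the quadratic
forms. Testing the images of the Riesz products on the signed sums of vectors `z l`, obtained from
`φ` by K-convexity and with trace `∑ k, φ k (z k)` of order `A`, bounds the square of this trace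
by a multiple of `A`. Hence `A` is bounded, and undoing the scaling bounds the original signed sums
independently of the length `m`. But type `p` makes the average signed sum of `m` unit vectors at
most `T m ^ (1 / p)`, so by duality the signed sums of `φ` grow at least like `m ^ (1 - 1 / p)`.
-/

/-! ### A gauge on complex-valued functions -/

section Gauge

open MeasureTheory

/-- The size of a complex-valued function `m` under a real functional calculus `Φ`. It replaces
the norm of the complexification of `𝔅`, and is equivalent to it; the price is a factor `2` in
`complexGauge_const_mul_le`. -/
def complexGauge {ι 𝔅 : Type*} [NormedRing 𝔅] [NormedAlgebra ℝ 𝔅] (Φ : (ι → ℝ) →ₐ[ℝ] 𝔅)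
    (m : ι → ℂ) : ℝ :=
  ‖Φ fun i => (m i).re‖ + ‖Φ fun i => (m i).im‖

variable {ι 𝔅 : Type*} [NormedRing 𝔅] [NormedAlgebra ℝ 𝔅] (Φ : (ι → ℝ) →ₐ[ℝ] 𝔅)

lemma complexGauge_nonneg (m : ι → ℂ) : 0 ≤ complexGauge Φ m :=
  add_nonneg (norm_nonneg _) (norm_nonneg _)

lemma complexGauge_ofReal (r : ι → ℝ) : complexGauge Φ (fun i => (r i : ℂ)) = ‖Φ r‖ := by
  have him : (fun i => ((r i : ℂ)).im) = 0 := by ext; simp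
  simp only [complexGauge, Complex.ofReal_re, him, map_zero, norm_zero, add_zero]

lemma complexGauge_one : complexGauge Φ (fun _ => 1) = ‖Φ 1‖ := by
  simpa using complexGauge_ofReal Φ 1

lemma complexGauge_add_le (m n : ι → ℂ) :
    complexGauge Φ (fun i => m i + n i) ≤ complexGauge Φ m + complexGauge Φ n := by
  have hre : (fun i => (m i + n i).re) = (fun i => (m i).re) + fun i => (n i).re := by ext i; simp
  have him : (fun i => (m i + n i).im) = (fun i => (m i).im) + fun i => (n i).im := by ext i; simp
  simp only [complexGauge, hre, him, map_add]
  linarith [norm_add_le (Φ fun i => (m i).re) (Φ fun i => (n i).re),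
    norm_add_le (Φ fun i => (m i).im) (Φ fun i => (n i).im)]

lemma complexGauge_mul_le (m n : ι → ℂ) :
    complexGauge Φ (fun i => m i * n i) ≤ complexGauge Φ m * complexGauge Φ n := by
  have hre : (fun i => (m i * n i).re) =
      (fun i => (m i).re) * (fun i => (n i).re) - (fun i => (m i).im) * fun i => (n i).im := by
    ext i; simp
  have him : (fun i => (m i * n i).im) =
      (fun i => (m i).re) * (fun i => (n i).im) + (fun i => (m i).im) * fun i => (n i).re := by
    ext i; simp
  simp only [complexGauge, hre, him, map_sub, map_add, map_mul]
  generalize Φ (fun i => (m i).re) = a, Φ (fun i => (m i).im) = b,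
    Φ (fun i => (n i).re) = c, Φ (fun i => (n i).im) = d
  calc ‖a * c - b * d‖ + ‖a * d + b * c‖
      ≤ (‖a‖ * ‖c‖ + ‖b‖ * ‖d‖) + (‖a‖ * ‖d‖ + ‖b‖ * ‖c‖) :=
        add_le_add ((norm_sub_le _ _).trans (add_le_add (norm_mul_le _ _) (norm_mul_le _ _)))
          ((norm_add_le _ _).trans (add_le_add (norm_mul_le _ _) (norm_mul_le _ _)))
    _ = (‖a‖ + ‖b‖) * (‖c‖ + ‖d‖) := by ring

lemma complexGauge_const_mul_le (c : ℂ) (m : ι → ℂ) :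
    complexGauge Φ (fun i => c * m i) ≤ 2 * ‖c‖ * complexGauge Φ m := by
  have hre : (fun i => (c * m i).re) =
      c.re • (fun i => (m i).re) - c.im • fun i => (m i).im := by ext i; simp
  have him : (fun i => (c * m i).im) =
      c.re • (fun i => (m i).im) + c.im • fun i => (m i).re := by ext i; simp
  simp only [complexGauge, hre, him, map_sub, map_add, map_smul]
  generalize Φ (fun i => (m i).re) = a, Φ (fun i => (m i).im) = b
  calc ‖c.re • a - c.im • b‖ + ‖c.re • b + c.im • a‖
      ≤ (|c.re| * ‖a‖ + |c.im| * ‖b‖) + (|c.re| * ‖b‖ + |c.im| * ‖a‖) := by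
        simp only [← Real.norm_eq_abs, ← norm_smul]
        exact add_le_add (norm_sub_le _ _) (norm_add_le _ _)
    _ ≤ (‖c‖ * ‖a‖ + ‖c‖ * ‖b‖) + (‖c‖ * ‖b‖ + ‖c‖ * ‖a‖) := by
        gcongr <;> first | exact Complex.abs_re_le_norm c | exact Complex.abs_im_le_norm c
    _ = 2 * ‖c‖ * (‖a‖ + ‖b‖) := by ring

lemma complexGauge_sum_le {α : Type*} (s : Finset α) (f : α → ι → ℂ) :
    complexGauge Φ (fun i => ∑ j ∈ s, f j i) ≤ ∑ j ∈ s, complexGauge Φ (f j) := by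
  classical
  induction s using Finset.induction_on with
  | empty => simpa using (complexGauge_ofReal Φ 0).le
  | insert a s ha ih =>
    simp only [Finset.sum_insert ha]
    exact (complexGauge_add_le Φ _ _).trans (by gcongr)

variable [Finite ι]

lemma continuous_complexGauge : Continuous (complexGauge Φ) := by
  have hΦ : Continuous Φ := Φ.toLinearMap.continuous_of_finiteDimensional
  unfold complexGauge
  fun_prop

lemma complexGauge_le_of_hasSum {α : Type*} {f : α → ι → ℂ} {m : ι → ℂ}
    (hf : ∀ i, HasSum (fun j => f j i) (m i)) {b : α → ℝ} {B : ℝ}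
    (hfb : ∀ j, complexGauge Φ (f j) ≤ b j) (hb : HasSum b B) : complexGauge Φ m ≤ B := by
  have hpartial : Filter.Tendsto (fun (s : Finset α) i => ∑ j ∈ s, f j i) Filter.atTop (nhds m) :=
    tendsto_pi_nhds.2 hf
  refine le_of_tendsto_of_tendsto (((continuous_complexGauge Φ).tendsto m).comp hpartial) hb ?_
  exact .of_forall fun s => (complexGauge_sum_le Φ s f).trans (Finset.sum_le_sum fun j _ => hfb j)

lemma norm_map_integral_le {α E F : Type*} [MeasurableSpace α] {μ : Measure α}
    [NormedAddCommGroup E] [NormedSpace ℝ E] [CompleteSpace E] [NormedAddCommGroup F]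
    [NormedSpace ℝ F] (L : E →L[ℝ] F) {f : α → E} (hf : Integrable f μ) :
    ‖L (∫ s, f s ∂μ)‖ ≤ ∫ s, ‖L (f s)‖ ∂μ := by
  let J : F →L[ℝ] UniformSpace.Completion F := UniformSpace.Completion.toComplL
  have hJ : ∀ v, ‖J v‖ = ‖v‖ := UniformSpace.Completion.norm_coe
  calc ‖L (∫ s, f s ∂μ)‖ = ‖(J ∘L L) (∫ s, f s ∂μ)‖ := (hJ _).symm
    _ = ‖∫ s, (J ∘L L) (f s) ∂μ‖ := by rw [(J ∘L L).integral_comp_comm hf]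
    _ ≤ ∫ s, ‖(J ∘L L) (f s)‖ ∂μ := norm_integral_le_integral_norm _
    _ = ∫ s, ‖L (f s)‖ ∂μ := by simp only [ContinuousLinearMap.comp_apply, hJ]

lemma complexGauge_integral_le {α : Type*} [MeasurableSpace α] {μ : Measure α} {f : α → ι → ℂ}
    (hf : ∀ i, Integrable (fun s => f s i) μ) {g : α → ℝ} (hg : Integrable g μ)
    (hfg : ∀ᵐ s ∂μ, complexGauge Φ (f s) ≤ g s) :
    complexGauge Φ (fun i => ∫ s, f s i ∂μ) ≤ ∫ s, g s ∂μ := by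
  cases nonempty_fintype ι
  let L : (ι → ℝ) →L[ℝ] 𝔅 := LinearMap.toContinuousLinearMap Φ.toLinearMap
  have hre : Integrable (fun s i => (f s i).re) μ := .of_eval fun i => (hf i).re
  have him : Integrable (fun s i => (f s i).im) μ := .of_eval fun i => (hf i).im
  have integral_re_eq : (fun i => (∫ s, f s i ∂μ).re) = ∫ s, (fun i => (f s i).re) ∂μ := by
    ext i
    rw [eval_integral (f := fun s i => (f s i).re) fun i => (hf i).re]
    exact (integral_re (hf i)).symm
  have integral_im_eq : (fun i => (∫ s, f s i ∂μ).im) = ∫ s, (fun i => (f s i).im) ∂μ := by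
    ext i
    rw [eval_integral (f := fun s i => (f s i).im) fun i => (hf i).im]
    exact (integral_im (hf i)).symm
  calc complexGauge Φ (fun i => ∫ s, f s i ∂μ)
      = ‖L (∫ s, (fun i => (f s i).re) ∂μ)‖ + ‖L (∫ s, (fun i => (f s i).im) ∂μ)‖ := by
        rw [← integral_re_eq, ← integral_im_eq]; rfl
    _ ≤ (∫ s, ‖L fun i => (f s i).re‖ ∂μ) + ∫ s, ‖L fun i => (f s i).im‖ ∂μ :=
        add_le_add (norm_map_integral_le L hre) (norm_map_integral_le L him)
    _ = ∫ s, complexGauge Φ (f s) ∂μ :=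
        (integral_add (L.integrable_comp hre).norm (L.integrable_comp him).norm).symm
    _ ≤ ∫ s, g s ∂μ :=
        integral_mono_ae ((L.integrable_comp hre).norm.add (L.integrable_comp him).norm) hg hfg

end Gauge

/-! ### Kato's criterion: bounds on the resolvent -/

section Resolvent

lemma norm_le_div_of_mul_one_sub_eq_one {R : Type*} [NormedRing R] (h1 : ‖(1 : R)‖ ≤ 1)
    {x w : R} (hx : x * (1 - w) = 1) (hw : ‖w‖ ≤ 1) {N : ℕ} {θ : ℝ} (hθ : ‖w ^ N‖ ≤ θ)
    (hθ1 : θ < 1) : ‖x‖ ≤ N / (1 - θ) := by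
  have hpow (j : ℕ) : ‖w ^ j‖ ≤ 1 := by
    rcases j.eq_zero_or_pos with rfl | hj
    · simpa using h1
    · exact (norm_pow_le' w hj).trans (pow_le_one₀ (norm_nonneg _) hw)
  have hx_eq : x = ∑ j ∈ Finset.range N, w ^ j + x * w ^ N := by
    have := congrArg (x * ·) (mul_neg_geom_sum w N)
    simp only [← mul_assoc, hx, one_mul, mul_sub, mul_one] at this
    rw [this, sub_add_cancel]
  have hle : ‖x‖ ≤ N + ‖x‖ * θ := by
    calc ‖x‖ ≤ ‖∑ j ∈ Finset.range N, w ^ j‖ + ‖x * w ^ N‖ := by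
          conv_lhs => rw [hx_eq]
          exact norm_add_le _ _
      _ ≤ N + ‖x‖ * θ := by
          refine add_le_add ?_ ((norm_mul_le _ _).trans (by gcongr))
          simpa using norm_sum_le_of_le (Finset.range N) fun j _ => hpow j
  rw [le_div_iff₀ (by linarith)]
  linarith

variable {ι 𝔅 : Type*} [NormedRing 𝔅] [NormedAlgebra ℝ 𝔅] {Φ : (ι → ℝ) →ₐ[ℝ] 𝔅}

/-- The constant of Kato's criterion in terms of the power `N` occurring in it. -/
def katoConst (N : ℕ) : ℝ := N * 2 ^ (N + 1)

lemma katoConst_nonneg (N : ℕ) : 0 ≤ katoConst N := by unfold katoConst; positivity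

lemma norm_map_inv_one_add_mul_le (h1 : ‖Φ 1‖ ≤ 1) {u : ι → ℝ} (hu0 : 0 ≤ u) (hu1 : u ≤ 1)
    (hu : ‖Φ u‖ ≤ 1) {N : ℕ} (hN : ‖Φ ((1 - u) ^ N)‖ ≤ 2 ^ N - 1 / 2) {a : ℝ} (ha0 : 0 ≤ a)
    (ha1 : a ≤ 1) : ‖Φ fun i => (1 + a * u i)⁻¹‖ ≤ katoConst N := by
  -- `1 + a u = (1 + a) (1 - w)`, where `w = b (1 - u)` has `‖Φ (w ^ N)‖ < 1` as `b ≤ 1 / 2`.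
  set b : ℝ := a / (1 + a) with hb
  have hb0 : 0 ≤ b := by positivity
  have hb1 : b ≤ 1 / 2 := by rw [hb, div_le_iff₀ (by linarith)]; linarith
  set w : ι → ℝ := b • (1 - u) with hw
  have hw1 : ‖Φ w‖ ≤ 1 := by
    rw [hw, map_smul, map_sub, norm_smul, Real.norm_of_nonneg hb0]
    nlinarith [norm_sub_le (Φ 1) (Φ u), norm_nonneg (Φ 1 - Φ u)]
  have hwN : ‖Φ w ^ N‖ ≤ 1 - 1 / 2 ^ (N + 1) := by
    rw [← map_pow, hw, smul_pow, map_smul, norm_smul, norm_pow, Real.norm_of_nonneg hb0]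
    calc b ^ N * ‖Φ ((1 - u) ^ N)‖ ≤ (1 / 2) ^ N * (2 ^ N - 1 / 2) := by gcongr
      _ = 1 - 1 / 2 ^ (N + 1) := by rw [one_div_pow, pow_succ]; field_simp
  have hinv : Φ (fun i => (1 - w i)⁻¹) * (1 - Φ w) = 1 := by
    rw [← map_one Φ, ← map_sub, ← map_mul]
    congr 1
    ext i
    have : w i < 1 := by
      have := hu0 i; have := hu1 i
      simp only [hw, Pi.smul_apply, Pi.sub_apply, Pi.one_apply, Pi.zero_apply, smul_eq_mul] at *
      nlinarith
    exact inv_mul_cancel₀ (by simpa [sub_eq_zero] using this.ne')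
  have hfactor : (fun i => (1 + a * u i)⁻¹) = (1 + a)⁻¹ • fun i => (1 - w i)⁻¹ := by
    ext i
    simp only [Pi.smul_apply, smul_eq_mul, ← mul_inv]
    congr 1
    simp only [hw, hb, Pi.smul_apply, Pi.sub_apply, Pi.one_apply, smul_eq_mul]
    field_simp
    ring
  rw [hfactor, map_smul, norm_smul, Real.norm_of_nonneg (by positivity)]
  calc (1 + a)⁻¹ * ‖Φ fun i => (1 - w i)⁻¹‖ ≤ 1 * (N / (1 - (1 - 1 / 2 ^ (N + 1)))) := by
        gcongr
        · exact inv_le_one_of_one_le₀ (by linarith)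
        · refine norm_le_div_of_mul_one_sub_eq_one (by simpa using h1) hinv hw1 hwN ?_
          linarith [show (0 : ℝ) < 1 / 2 ^ (N + 1) by positivity]
    _ = katoConst N := by simp [katoConst]

lemma cexp_neg_mul_pi_div_abs_im {lam : ℂ} (him : lam.im ≠ 0) :
    Complex.exp (-lam * (π / |lam.im| : ℝ)) = -(rexp (-lam.re * (π / |lam.im|)) : ℝ) := by
  have hsplit : -lam * (π / |lam.im| : ℝ) =
      (-lam.re * (π / |lam.im|) : ℝ) + (-lam.im * (π / |lam.im|) : ℝ) * Complex.I := by
    nth_rw 1 [← Complex.re_add_im lam]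
    push_cast
    ring
  rw [hsplit, Complex.exp_add, ← Complex.ofReal_exp]
  suffices Complex.exp ((-lam.im * (π / |lam.im|) : ℝ) * Complex.I) = -1 by rw [this]; ring
  rcases him.lt_or_gt with h | h
  · have : -lam.im * (π / |lam.im|) = π := by rw [abs_of_neg h]; field_simp
    rw [this, Complex.exp_pi_mul_I]
  · have : -lam.im * (π / |lam.im|) = -π := by rw [abs_of_pos h]; field_simp
    rw [this, Complex.ofReal_neg, neg_mul, Complex.exp_neg, Complex.exp_pi_mul_I]
    norm_num

/-- The constant in the resolvent estimate `‖(lam + κ)⁻¹‖ ≤ resolventConst N / ‖lam‖`. -/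
def resolventConst (N : ℕ) : ℝ := 2 + 2 * π * katoConst N

lemma resolventConst_pos (N : ℕ) : 0 < resolventConst N :=
  add_pos_of_pos_of_nonneg two_pos (mul_nonneg (by positivity) (katoConst_nonneg N))

variable {κ : ι → ℝ} {N : ℕ}

/-- The contraction semigroup `h ↦ Φ (exp (-h κ))` satisfies the Kato–Beurling condition: the
`N`-th powers of its differences with the identity have norm uniformly below `2 ^ N`. This makes
the semigroup holomorphic, with bounds depending only on `N`. -/
structure IsKatoSemigroup (Φ : (ι → ℝ) →ₐ[ℝ] 𝔅) (κ : ι → ℝ) (N : ℕ) : Prop where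
  nonneg : 0 ≤ κ
  norm_exp_le : ∀ h : ℝ, 0 ≤ h → ‖Φ fun i => rexp (-(h * κ i))‖ ≤ 1
  norm_one_sub_exp_pow_le :
    ∀ h : ℝ, 0 ≤ h → ‖Φ ((1 - fun i => rexp (-(h * κ i))) ^ N)‖ ≤ 2 ^ N - 1 / 2

namespace IsKatoSemigroup

lemma smul (hκ : IsKatoSemigroup Φ κ N) {c : ℝ} (hc : 0 ≤ c) : IsKatoSemigroup Φ (c • κ) N where
  nonneg := smul_nonneg hc hκ.nonneg
  norm_exp_le h hh := by
    simpa only [Pi.smul_apply, smul_eq_mul, mul_assoc] using hκ.norm_exp_le (h * c) (by positivity)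
  norm_one_sub_exp_pow_le h hh := by
    simpa only [Pi.smul_apply, smul_eq_mul, mul_assoc]
      using hκ.norm_one_sub_exp_pow_le (h * c) (by positivity)

lemma norm_map_one_le (hκ : IsKatoSemigroup Φ κ N) : ‖Φ 1‖ ≤ 1 := by
  have := hκ.norm_exp_le 0 le_rfl
  simp only [zero_mul, neg_zero, Real.exp_zero] at this
  exact this

lemma add_ne_zero (hκ : IsKatoSemigroup Φ κ N) {lam : ℂ} (hlam : 0 < lam.re) (i : ι) :
    lam + κ i ≠ 0 := by
  intro h
  have := congrArg Complex.re h
  simp only [Complex.add_re, Complex.ofReal_re, Complex.zero_re] at this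
  linarith [show 0 ≤ κ i from hκ.nonneg i]

lemma complexGauge_exp_le (hκ : IsKatoSemigroup Φ κ N) (lam : ℂ) {s : ℝ} (hs : 0 ≤ s) :
    complexGauge Φ (fun i => Complex.exp (-(lam + κ i) * s)) ≤ 2 * rexp (-lam.re * s) := by
  have hsplit : (fun i => Complex.exp (-(lam + κ i) * s)) =
      fun i => Complex.exp (-lam * s) * (rexp (-(s * κ i)) : ℝ) := by
    ext i
    push_cast
    rw [← Complex.exp_add]
    ring_nf
  rw [hsplit]
  refine (complexGauge_const_mul_le Φ _ _).trans ?_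
  rw [complexGauge_ofReal Φ fun i => rexp (-(s * κ i)), Complex.norm_exp]
  have hre : (-lam * s).re = -lam.re * s := by simp
  rw [hre]
  exact mul_le_of_le_one_right (by positivity) (hκ.norm_exp_le s hs)

variable [Finite ι]

lemma complexGauge_inv_mul_re_le (hκ : IsKatoSemigroup Φ κ N) {lam : ℂ} (hlam : 0 < lam.re) :
    complexGauge Φ (fun i => (lam + κ i)⁻¹) * lam.re ≤ 2 := by
  have hneg (i : ι) : (-(lam + κ i)).re < 0 := by
    have : 0 ≤ κ i := hκ.nonneg i
    simpa using by linarith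
  have hlaplace : (fun i => (lam + κ i)⁻¹) =
      fun i => ∫ s : ℝ in Ioi 0, Complex.exp (-(lam + κ i) * s) := by
    ext i
    rw [integral_exp_mul_complex_Ioi (hneg i)]
    simp only [Complex.ofReal_zero, mul_zero, Complex.exp_zero, neg_div_neg_eq, one_div]
  have hbound : complexGauge Φ (fun i => (lam + κ i)⁻¹) ≤
      ∫ s : ℝ in Ioi 0, 2 * rexp (-lam.re * s) := by
    rw [hlaplace]
    refine complexGauge_integral_le Φ
      (fun i => integrableOn_exp_mul_complex_Ioi (hneg i) 0)
      ((integrableOn_exp_mul_Ioi (by linarith) 0).const_mul 2) ?_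
    exact (MeasureTheory.ae_restrict_iff' measurableSet_Ioi).2
      (.of_forall fun s hs => hκ.complexGauge_exp_le lam (le_of_lt hs))
  rw [MeasureTheory.integral_const_mul, integral_exp_mul_Ioi (by linarith)] at hbound
  calc _ ≤ 2 * (-rexp (-lam.re * 0) / -lam.re) * lam.re := by gcongr
    _ = 2 := by simp; field_simp

lemma complexGauge_one_sub_exp_div_le (hκ : IsKatoSemigroup Φ κ N) {lam : ℂ} (hlam : 0 < lam.re)
    {t : ℝ} (ht : 0 ≤ t) :
    complexGauge Φ (fun i => (1 - Complex.exp (-(lam + κ i) * t)) / (lam + κ i)) ≤ 2 * t := by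
  have hintegral : (fun i => (1 - Complex.exp (-(lam + κ i) * t)) / (lam + κ i)) =
      fun i => ∫ s : ℝ in Ioc 0 t, Complex.exp (-(lam + κ i) * s) := by
    ext i
    rw [← intervalIntegral.integral_of_le ht,
      integral_exp_mul_complex (neg_ne_zero.2 (hκ.add_ne_zero hlam i))]
    simp only [Complex.ofReal_zero, mul_zero, Complex.exp_zero]
    rw [div_neg, ← neg_div, neg_sub]
  have hexp (s : ℝ) (hs : s ∈ Ioc 0 t) :
      complexGauge Φ (fun i => Complex.exp (-(lam + κ i) * s)) ≤ 2 := by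
    refine (hκ.complexGauge_exp_le lam hs.1.le).trans ?_
    have : rexp (-lam.re * s) ≤ 1 := Real.exp_le_one_iff.2 (by nlinarith [hs.1])
    linarith
  rw [hintegral]
  calc _ ≤ ∫ _ in Ioc 0 t, (2 : ℝ) := by
        refine complexGauge_integral_le Φ (fun i => ?_) (by simp)
          ((MeasureTheory.ae_restrict_iff' measurableSet_Ioc).2 (.of_forall hexp))
        exact (Continuous.integrableOn_Icc (by fun_prop)).mono_set Ioc_subset_Icc_self
    _ = 2 * t := by simp [ht, mul_comm]

lemma complexGauge_inv_mul_abs_im_le (hκ : IsKatoSemigroup Φ κ N) {lam : ℂ}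
    (hlam : 0 < lam.re) :
    complexGauge Φ (fun i => (lam + κ i)⁻¹) * |lam.im| ≤ 2 * π * katoConst N := by
  rcases eq_or_ne lam.im 0 with him | him
  · simpa [him] using mul_nonneg (by positivity) (katoConst_nonneg N)
  -- At this time `exp (-lam t)` is negative, so Kato's condition inverts `1 - exp (-(lam + κ) t)`.
  set t : ℝ := π / |lam.im| with ht
  have ht0 : 0 ≤ t := by positivity
  set a : ℝ := rexp (-lam.re * t)
  set u : ι → ℝ := fun i => rexp (-(t * κ i))
  have hneg : Complex.exp (-lam * t) = -(a : ℝ) := cexp_neg_mul_pi_div_abs_im him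
  have hexp (i : ι) : Complex.exp (-(lam + κ i) * t) = -(a * u i : ℝ) := by
    rw [neg_add, add_mul, Complex.exp_add, hneg]
    push_cast [u]
    ring_nf
  have hfactor : (fun i => (lam + κ i)⁻¹) = fun i => ((1 + a * u i)⁻¹ : ℝ) *
      ((1 - Complex.exp (-(lam + κ i) * t)) / (lam + κ i)) := by
    ext i
    have hne : ((1 + a * u i : ℝ) : ℂ) ≠ 0 := by
      exact_mod_cast (show 0 < 1 + a * u i by positivity).ne'
    have hadd := hκ.add_ne_zero hlam i
    rw [hexp, sub_neg_eq_add, Complex.ofReal_inv, ← Complex.ofReal_one, ← Complex.ofReal_add]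
    field_simp
  have hkato : ‖Φ fun i => (1 + a * u i)⁻¹‖ ≤ katoConst N :=
    norm_map_inv_one_add_mul_le hκ.norm_map_one_le (fun i => (Real.exp_pos _).le)
      (fun i => Real.exp_le_one_iff.2 (neg_nonpos.2 (mul_nonneg ht0 (hκ.nonneg i))))
      (hκ.norm_exp_le t ht0) (hκ.norm_one_sub_exp_pow_le t ht0) (Real.exp_pos _).le
      (Real.exp_le_one_iff.2 (by nlinarith))
  calc _ ≤ katoConst N * (2 * t) * |lam.im| := by
        gcongr
        rw [hfactor]
        refine (complexGauge_mul_le Φ _ _).trans ?_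
        rw [complexGauge_ofReal Φ fun i => (1 + a * u i)⁻¹]
        exact mul_le_mul hkato (hκ.complexGauge_one_sub_exp_div_le hlam ht0)
          (complexGauge_nonneg _ _) (katoConst_nonneg N)
    _ = 2 * π * katoConst N := by rw [ht]; field_simp

lemma complexGauge_inv_le (hκ : IsKatoSemigroup Φ κ N) {lam : ℂ} (hlam : 0 < lam.re) :
    complexGauge Φ (fun i => (lam + κ i)⁻¹) ≤ resolventConst N / ‖lam‖ := by
  have hnorm : 0 < ‖lam‖ := norm_pos_iff.2 fun h => by simp [h] at hlam
  rw [le_div_iff₀ hnorm, resolventConst]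
  calc _ ≤ complexGauge Φ (fun i => (lam + κ i)⁻¹) * (lam.re + |lam.im|) := by
        gcongr
        · exact complexGauge_nonneg _ _
        · simpa [abs_of_pos hlam] using Complex.norm_le_abs_re_add_abs_im lam
    _ ≤ _ := by
        rw [mul_add]
        exact add_le_add (hκ.complexGauge_inv_mul_re_le hlam)
          (hκ.complexGauge_inv_mul_abs_im_le hlam)

end IsKatoSemigroup

end Resolvent

/-! ### Fourier inversion -/

section FourierInversion

open MeasureTheory Filter Topology FourierTransform

lemma integrableOn_sq_mul_exp_neg_mul {a : ℝ} (ha : 0 < a) :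
    IntegrableOn (fun x : ℝ => x ^ 2 * rexp (-a * x)) (Ioi 0) := by
  simpa using integrableOn_rpow_mul_exp_neg_mul_rpow (p := 1) (s := 2) (b := a) (by norm_num)
    one_pos ha

lemma tendsto_cexp_neg_mul_mul_pow_atTop {b : ℂ} (hb : 0 < b.re) (n : ℕ) :
    Tendsto (fun x : ℝ => Complex.exp (-b * x) * (x : ℂ) ^ n) atTop (𝓝 0) := by
  rw [tendsto_zero_iff_norm_tendsto_zero]
  refine (tendsto_rpow_mul_exp_neg_mul_atTop_nhds_zero n b.re hb).congr' ?_
  filter_upwards [eventually_ge_atTop 0] with x hx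
  simp [Complex.norm_exp, abs_of_nonneg hx, mul_comm]

lemma integral_sq_mul_cexp_neg_mul {b : ℂ} (hb : 0 < b.re) :
    ∫ x in Ioi (0 : ℝ), (x : ℂ) ^ 2 * Complex.exp (-b * x) = 2 / b ^ 3 := by
  have hb0 : b ≠ 0 := by rintro rfl; simp at hb
  let F (x : ℝ) : ℂ :=
    -(Complex.exp (-b * x) * ((x : ℂ) ^ 2 / b + 2 * x / b ^ 2 + 2 / b ^ 3))
  have hderiv (x : ℝ) (_ : x ∈ Ici (0 : ℝ)) :
      HasDerivAt F ((x : ℂ) ^ 2 * Complex.exp (-b * x)) x := by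
    have hx : HasDerivAt (fun x : ℝ => (x : ℂ)) 1 x := Complex.ofRealCLM.hasDerivAt
    have hpoly := (((hx.pow 2).div_const b).add ((hx.const_mul 2).div_const (b ^ 2))).add_const
      (2 / b ^ 3)
    refine ((hx.const_mul (-b)).cexp.mul hpoly).neg.congr_deriv ?_
    simp only [Pi.add_apply, Pi.pow_apply]
    field_simp
    push_cast
    ring
  have hint : IntegrableOn (fun x : ℝ => (x : ℂ) ^ 2 * Complex.exp (-b * x)) (Ioi 0) :=
    (integrableOn_sq_mul_exp_neg_mul hb).mono' (by fun_prop)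
      (.of_forall fun x => by simp [Complex.norm_exp])
  have hlim : Tendsto F atTop (𝓝 0) := by
    have h := ((((tendsto_cexp_neg_mul_mul_pow_atTop hb 2).mul_const (1 / b)).add
      ((tendsto_cexp_neg_mul_mul_pow_atTop hb 1).mul_const (2 / b ^ 2))).add
      ((tendsto_cexp_neg_mul_mul_pow_atTop hb 0).mul_const (2 / b ^ 3))).neg
    simp only [zero_mul, add_zero, neg_zero] at h
    exact h.congr fun x => by simp only [F]; ring
  rw [integral_Ioi_of_hasDerivAt_of_tendsto' hderiv hint hlim]
  simp [F]

/-- The function `x ↦ x ^ 2 exp (-a x)` on the positive half-line, extended by `0`. Its Fourier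
transform is `2 / (a + 2 π i ξ) ^ 3`, the cube of a resolvent. -/
def sqExpOnPos (a x : ℝ) : ℂ := ((max x 0 ^ 2 * rexp (-a * x) : ℝ) : ℂ)

lemma continuous_sqExpOnPos (a : ℝ) : Continuous (sqExpOnPos a) := by
  unfold sqExpOnPos
  fun_prop

lemma sqExpOnPos_eq_indicator (a : ℝ) :
    sqExpOnPos a = (Ioi (0 : ℝ)).indicator fun x => ((x ^ 2 * rexp (-a * x) : ℝ) : ℂ) := by
  ext x
  rcases lt_or_ge 0 x with hx | hx
  · rw [indicator_of_mem (mem_Ioi.2 hx), sqExpOnPos, max_eq_left hx.le]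
  · simp [sqExpOnPos, hx]

lemma integrable_sqExpOnPos {a : ℝ} (ha : 0 < a) : Integrable (sqExpOnPos a) := by
  rw [sqExpOnPos_eq_indicator, integrable_indicator_iff measurableSet_Ioi]
  exact (integrableOn_sq_mul_exp_neg_mul ha).ofReal

lemma fourier_sqExpOnPos {a : ℝ} (ha : 0 < a) :
    𝓕 (sqExpOnPos a) = fun ξ : ℝ => 2 / (a + 2 * π * ξ * Complex.I) ^ 3 := by
  ext ξ
  have hre : 0 < ((a : ℂ) + 2 * π * ξ * Complex.I).re := by simpa using ha
  rw [Real.fourier_real_eq_integral_exp_smul, ← integral_sq_mul_cexp_neg_mul hre,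
    ← integral_indicator measurableSet_Ioi, sqExpOnPos_eq_indicator]
  congr 1
  ext x
  by_cases hx : x ∈ Ioi (0 : ℝ)
  · simp only [indicator_of_mem hx, smul_eq_mul]
    push_cast
    rw [mul_left_comm, ← Complex.exp_add]
    ring_nf
  · simp only [indicator_of_notMem hx, smul_zero]

lemma normSq_add_two_pi_mul_I (a ξ : ℝ) :
    ‖(a + 2 * π * ξ * Complex.I : ℂ)‖ ^ 2 = a ^ 2 + (2 * π * ξ) ^ 2 := by
  rw [← Complex.normSq_eq_norm_sq]
  exact_mod_cast Complex.normSq_add_mul_I a (2 * π * ξ)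

lemma integrable_two_div_pow_three {a : ℝ} (ha : 0 < a) :
    Integrable fun ξ : ℝ => 2 / (a + 2 * π * ξ * Complex.I : ℂ) ^ 3 := by
  have hnorm (ξ : ℝ) : a ≤ ‖(a + 2 * π * ξ * Complex.I : ℂ)‖ :=
    abs_le_of_sq_le_sq' (by rw [normSq_add_two_pi_mul_I]; nlinarith) (norm_nonneg _) |>.2
  have hdominant : Integrable fun x : ℝ => 2 / a ^ 3 * (1 + (2 * π / a * x) ^ 2)⁻¹ :=
    (integrable_inv_one_add_sq.comp_mul_left' (by positivity)).const_mul _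
  refine hdominant.mono' (Continuous.aestronglyMeasurable ?_) (.of_forall fun ξ => ?_)
  · exact .div (by fun_prop) (by fun_prop) fun ξ =>
      pow_ne_zero _ (norm_pos_iff.1 (ha.trans_le (hnorm ξ)))
  · have hscale : 2 / a ^ 3 * (1 + (2 * π / a * ξ) ^ 2)⁻¹ =
        2 / (a * (a ^ 2 + (2 * π * ξ) ^ 2)) := by
      field_simp
    rw [norm_div, norm_pow, Complex.norm_ofNat, hscale, ← normSq_add_two_pi_mul_I, pow_succ']
    have := ha.trans_le (hnorm ξ)
    gcongr
    exact hnorm ξ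

lemma integral_cexp_mul_two_div_pow_three {a : ℝ} (ha : 0 < a) :
    ∫ ξ : ℝ, Complex.exp (2 * π * ξ * Complex.I) * (2 / (a + 2 * π * ξ * Complex.I) ^ 3) =
      Complex.exp (-a) := by
  have hinv := (integrable_sqExpOnPos ha).fourierInv_fourier_eq
    (fourier_sqExpOnPos ha ▸ integrable_two_div_pow_three ha)
    (continuous_sqExpOnPos a).continuousAt (v := 1)
  rw [Real.fourierInv_eq', fourier_sqExpOnPos ha] at hinv
  simpa [sqExpOnPos] using hinv

end FourierInversion

/-! ### Holomorphy of the semigroup and its first spectral projection -/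

section Multiplier

open MeasureTheory

variable {ι 𝔅 : Type*} [NormedRing 𝔅] [NormedAlgebra ℝ 𝔅] {Φ : (ι → ℝ) →ₐ[ℝ] 𝔅}
  {κ : ι → ℝ} {N : ℕ}

/-- The constant in the estimate `‖κ exp (-κ)‖ ≤ derivConst N` for the derivative of a Kato
semigroup. -/
def derivConst (N : ℕ) : ℝ :=
  4 * rexp 1 * (1 + 2 * resolventConst N) * resolventConst N ^ 2 * π

lemma derivConst_pos (N : ℕ) : 0 < derivConst N := by
  have := resolventConst_pos N
  unfold derivConst
  positivity

/-- The time at which the power series of `exp (i θ κ)`, `0 ≤ θ ≤ 2 π`, converges against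
`exp (-t κ)`. -/
def analyticTime (N : ℕ) : ℝ := 4 * π * rexp 1 * derivConst N

lemma analyticTime_pos (N : ℕ) : 0 < analyticTime N := by
  have := derivConst_pos N
  unfold analyticTime
  positivity

/-- The point `1 + 2 π i ξ` of the line on which the resolvent is integrated. -/
def resolventLine (ξ : ℝ) : ℂ := 1 + 2 * π * ξ * Complex.I

lemma re_resolventLine_pos (ξ : ℝ) : 0 < (resolventLine ξ).re := by simp [resolventLine]

lemma one_add_sq_le_norm_resolventLine_sq (ξ : ℝ) : 1 + ξ ^ 2 ≤ ‖resolventLine ξ‖ ^ 2 := by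
  have := normSq_add_two_pi_mul_I 1 ξ
  rw [Complex.ofReal_one] at this
  rw [resolventLine, this, mul_pow]
  nlinarith [sq_nonneg ξ, one_le_pow₀ (n := 2) (by linarith [pi_gt_three] : 1 ≤ 2 * π)]

/-- The integrand of the representation of `x exp (-x)` as an integral of cubes of resolvents. -/
def resolventWeight (x ξ : ℝ) : ℂ :=
  (2 * rexp 1 * Complex.exp (2 * π * ξ * Complex.I)) * (x * ((resolventLine ξ + x)⁻¹) ^ 3)

lemma resolventWeight_eq (x ξ : ℝ) :
    resolventWeight x ξ = ((rexp 1 * x : ℝ) : ℂ) * (Complex.exp (2 * π * ξ * Complex.I) *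
      (2 / (((1 + x : ℝ) : ℂ) + 2 * π * ξ * Complex.I) ^ 3)) := by
  have : ((1 + x : ℝ) : ℂ) + 2 * π * ξ * Complex.I = resolventLine ξ + x := by
    rw [resolventLine]; push_cast; ring
  rw [this, resolventWeight]
  push_cast
  field_simp

lemma integrable_resolventWeight {x : ℝ} (hx : 0 ≤ x) : Integrable (resolventWeight x) := by
  simp only [funext (resolventWeight_eq x)]
  refine (Integrable.of_integral_ne_zero ?_).const_mul _
  rw [integral_cexp_mul_two_div_pow_three (by linarith)]
  exact Complex.exp_ne_zero _

lemma integral_resolventWeight {x : ℝ} (hx : 0 ≤ x) :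
    ∫ ξ, resolventWeight x ξ = ((x * rexp (-x) : ℝ) : ℂ) := by
  simp only [resolventWeight_eq]
  rw [integral_const_mul, integral_cexp_mul_two_div_pow_three (by linarith), ← Complex.ofReal_neg,
    ← Complex.ofReal_exp, ← Complex.ofReal_mul, neg_add, Real.exp_add, mul_right_comm,
    ← mul_assoc (rexp 1), ← Real.exp_add, add_neg_cancel, Real.exp_zero, one_mul, mul_comm]

namespace IsKatoSemigroup

variable [Finite ι]

lemma complexGauge_mul_inv_pow_three_le (hκ : IsKatoSemigroup Φ κ N) {z : ℂ} (hz : 0 < z.re) :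
    complexGauge Φ (fun i => κ i * ((z + κ i)⁻¹) ^ 3) ≤
      (1 + 2 * resolventConst N) * (resolventConst N ^ 2 * (‖z‖ ^ 2)⁻¹) := by
  set B := resolventConst N
  have hB : 0 < B := resolventConst_pos N
  have hnorm : 0 < ‖z‖ := norm_pos_iff.2 fun h => by simp [h] at hz
  have hres : complexGauge Φ (fun i => (z + κ i)⁻¹) ≤ B / ‖z‖ := hκ.complexGauge_inv_le hz
  have hfactor : (fun i => κ i * ((z + κ i)⁻¹) ^ 3) = fun i =>
      (1 + -z * (z + κ i)⁻¹) * ((z + κ i)⁻¹ * (z + κ i)⁻¹) := by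
    ext i
    have := hκ.add_ne_zero hz i
    field_simp
    ring
  have hbdd : complexGauge Φ (fun i => 1 + -z * (z + κ i)⁻¹) ≤ 1 + 2 * B := by
    refine (complexGauge_add_le Φ (fun _ => 1) _).trans (add_le_add ?_ ?_)
    · exact (complexGauge_one Φ).trans_le hκ.norm_map_one_le
    · refine (complexGauge_const_mul_le Φ _ _).trans ?_
      calc 2 * ‖-z‖ * _ ≤ 2 * ‖z‖ * (B / ‖z‖) := by rw [norm_neg]; gcongr
        _ = 2 * B := by field_simp
  have hsq : complexGauge Φ (fun i => (z + κ i)⁻¹ * (z + κ i)⁻¹) ≤ B ^ 2 * (‖z‖ ^ 2)⁻¹ :=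
    calc _ ≤ B / ‖z‖ * (B / ‖z‖) := (complexGauge_mul_le Φ _ _).trans
            (mul_le_mul hres hres (complexGauge_nonneg _ _) (by positivity))
      _ = B ^ 2 * (‖z‖ ^ 2)⁻¹ := by field_simp
  rw [hfactor]
  exact (complexGauge_mul_le Φ _ _).trans
    (mul_le_mul hbdd hsq (complexGauge_nonneg _ _) (by positivity))

lemma norm_mul_exp_neg_le (hκ : IsKatoSemigroup Φ κ N) :
    ‖Φ fun i => κ i * rexp (-κ i)‖ ≤ derivConst N := by
  set B := resolventConst N
  have hB : 0 < B := resolventConst_pos N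
  have hcube_le (ξ : ℝ) : complexGauge Φ (fun i => κ i * ((resolventLine ξ + κ i)⁻¹) ^ 3) ≤
      (1 + 2 * B) * (B ^ 2 * (1 + ξ ^ 2)⁻¹) := by
    refine (hκ.complexGauge_mul_inv_pow_three_le (re_resolventLine_pos ξ)).trans ?_
    gcongr
    exact one_add_sq_le_norm_resolventLine_sq ξ
  have hweight_le (ξ : ℝ) : complexGauge Φ (fun i => resolventWeight (κ i) ξ) ≤
      4 * rexp 1 * (1 + 2 * B) * B ^ 2 * (1 + ξ ^ 2)⁻¹ := by
    have hnorm : ‖(2 * rexp 1 * Complex.exp (2 * π * ξ * Complex.I) : ℂ)‖ = 2 * rexp 1 := by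
      rw [norm_mul, norm_mul, Complex.norm_exp, Complex.norm_real]
      simp
    refine (complexGauge_const_mul_le Φ _ _).trans ?_
    rw [hnorm]
    calc _ ≤ 2 * (2 * rexp 1) * ((1 + 2 * B) * (B ^ 2 * (1 + ξ ^ 2)⁻¹)) :=
          mul_le_mul_of_nonneg_left (hcube_le ξ) (by positivity)
      _ = _ := by ring
  rw [← complexGauge_ofReal, derivConst, ← integral_univ_inv_one_add_sq, ← integral_const_mul]
  simp only [← integral_resolventWeight (hκ.nonneg _)]
  exact complexGauge_integral_le Φ (fun i => integrable_resolventWeight (hκ.nonneg i))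
    (integrable_inv_one_add_sq.const_mul _) (.of_forall hweight_le)

lemma norm_pow_mul_exp_neg_le (hκ : IsKatoSemigroup Φ κ N) {t : ℝ} (ht : 0 < t) (j : ℕ) :
    ‖Φ fun i => κ i ^ j * rexp (-(t * κ i))‖ ≤ (derivConst N * j / t) ^ j := by
  rcases j.eq_zero_or_pos with rfl | hj
  · simpa using hκ.norm_exp_le t ht.le
  have hj' : (0 : ℝ) < j := by exact_mod_cast hj
  have hpow : (fun i => κ i ^ j * rexp (-(t * κ i))) =
      ((j / t) • fun i => ((t / j) • κ) i * rexp (-((t / j) • κ) i)) ^ j := by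
    ext i
    simp only [Pi.pow_apply, Pi.smul_apply, smul_eq_mul]
    rw [← mul_assoc, ← mul_assoc, div_mul_div_cancel₀ ht.ne', div_self hj'.ne', one_mul, mul_pow,
      ← Real.exp_nat_mul]
    congr 2
    field_simp
  rw [hpow, map_pow]
  refine (norm_pow_le' _ hj).trans (pow_le_pow_left₀ (norm_nonneg _) ?_ _)
  rw [map_smul, norm_smul, Real.norm_of_nonneg (by positivity)]
  calc _ ≤ j / t * derivConst N := by
        gcongr
        exact (hκ.smul (by positivity)).norm_mul_exp_neg_le
    _ = _ := by ring

lemma taylor_term_le (hκ : IsKatoSemigroup Φ κ N) {θ : ℝ} (hθ0 : 0 ≤ θ) (hθ : θ ≤ 2 * π) (j : ℕ) :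
    θ ^ j / j.factorial * ‖Φ fun i => κ i ^ j * rexp (-(analyticTime N * κ i))‖ ≤
      (1 / 2) ^ j := by
  set t := analyticTime N with ht
  have hC := derivConst_pos N
  have ht0 : 0 < t := analyticTime_pos N
  have hfact : (j : ℝ) ^ j / j.factorial ≤ rexp 1 ^ j := by
    rw [← Real.exp_nat_mul, mul_one]
    exact Real.pow_div_factorial_le_exp _ j.cast_nonneg j
  calc _ ≤ θ ^ j / j.factorial * (derivConst N * j / t) ^ j := by
        gcongr
        exact hκ.norm_pow_mul_exp_neg_le ht0 j
    _ = (θ * derivConst N / t) ^ j * ((j : ℝ) ^ j / j.factorial) := by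
        simp only [div_pow, mul_pow]; ring
    _ ≤ (θ * derivConst N / t) ^ j * rexp 1 ^ j := by gcongr
    _ = (θ / (4 * π)) ^ j := by
        rw [← mul_pow, ht, analyticTime]
        congr 1
        field_simp
    _ ≤ (1 / 2) ^ j := by
        refine pow_le_pow_left₀ (by positivity) ?_ j
        rw [div_le_iff₀ (by positivity)]
        linarith

lemma complexGauge_cexp_mul_exp_neg_le (hκ : IsKatoSemigroup Φ κ N) {θ : ℝ} (hθ0 : 0 ≤ θ)
    (hθ : θ ≤ 2 * π) :
    complexGauge Φ (fun i => Complex.exp (θ * Complex.I * κ i) *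
      (rexp (-(analyticTime N * κ i)) : ℝ)) ≤ 4 := by
  set t := analyticTime N
  refine complexGauge_le_of_hasSum Φ (f := fun j i => (θ * Complex.I) ^ j / (j.factorial : ℂ) *
    ((κ i ^ j * rexp (-(t * κ i)) : ℝ) : ℂ)) (b := fun j => 2 * (1 / 2 : ℝ) ^ j)
    (fun i => ?_) (fun j => ?_) ?_
  · have hexp := NormedSpace.expSeries_div_hasSum_exp (θ * Complex.I * κ i : ℂ)
    rw [← Complex.exp_eq_exp_ℂ] at hexp
    refine (hexp.mul_right ((rexp (-(t * κ i)) : ℝ) : ℂ)).congr_fun fun j => ?_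
    push_cast
    rw [mul_pow (θ * Complex.I)]
    ring
  · refine (complexGauge_const_mul_le Φ _ _).trans ?_
    rw [complexGauge_ofReal Φ fun i => κ i ^ j * rexp (-(t * κ i)), mul_assoc]
    have hnorm : ‖(θ * Complex.I) ^ j / (j.factorial : ℂ)‖ = θ ^ j / j.factorial := by
      simp [abs_of_nonneg hθ0]
    rw [hnorm]
    exact mul_le_mul_of_nonneg_left (hκ.taylor_term_le hθ0 hθ j) two_pos.le
  · simpa [show (2 : ℝ) * 2 = 4 by norm_num] using hasSum_geometric_two.mul_left (2 : ℝ)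

end IsKatoSemigroup

lemma integral_cexp_int_mul_I (n : ℤ) :
    ∫ θ in (0 : ℝ)..2 * π, Complex.exp (n * Complex.I * θ) = if n = 0 then 2 * π else 0 := by
  split_ifs with hn
  · simp [hn]
  · have hn' : (n : ℂ) * Complex.I ≠ 0 := mul_ne_zero (by exact_mod_cast hn) Complex.I_ne_zero
    have hperiod : Complex.exp (n * Complex.I * ((2 * π : ℝ) : ℂ)) = 1 := by
      rw [Complex.exp_eq_one_iff]
      exact ⟨n, by push_cast; ring⟩
    rw [integral_exp_mul_complex hn', hperiod]
    simp

/-- The integrand of the Fourier integral which extracts the first spectral projection from the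
functions `exp (i θ k - t k)` on the spectrum `ℕ`. -/
def firstCoeffIntegrand (t : ℝ) (k : ℕ) (θ : ℝ) : ℂ :=
  ((rexp t / (2 * π) : ℝ) * Complex.exp (-(θ * Complex.I))) *
    (Complex.exp (θ * Complex.I * (k : ℝ)) * (rexp (-(t * k)) : ℝ))

lemma integrableOn_firstCoeffIntegrand (t : ℝ) (k : ℕ) (a b : ℝ) :
    IntegrableOn (firstCoeffIntegrand t k) (Ioc a b) := by
  unfold firstCoeffIntegrand
  exact (Continuous.integrableOn_Icc (by fun_prop)).mono_set Ioc_subset_Icc_self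

lemma integral_firstCoeffIntegrand (t : ℝ) (k : ℕ) :
    ∫ θ in Ioc 0 (2 * π), firstCoeffIntegrand t k θ = if k = 1 then 1 else 0 := by
  have heq (θ : ℝ) : firstCoeffIntegrand t k θ =
      ((rexp t / (2 * π) * rexp (-(t * k)) : ℝ) : ℂ) *
        Complex.exp (((k - 1 : ℤ) : ℂ) * Complex.I * θ) := by
    have hexp : Complex.exp (((k - 1 : ℤ) : ℂ) * Complex.I * θ) =
        Complex.exp (-(θ * Complex.I)) * Complex.exp (θ * Complex.I * (k : ℝ)) := by
      rw [← Complex.exp_add]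
      push_cast
      ring_nf
    rw [hexp, firstCoeffIntegrand]
    push_cast
    ring
  simp only [heq]
  rw [integral_const_mul, ← intervalIntegral.integral_of_le (by positivity),
    integral_cexp_int_mul_I]
  rcases eq_or_ne k 1 with h | h
  · have hexp : rexp t * rexp (-(t * (1 : ℕ))) = 1 := by rw [← Real.exp_add]; simp
    rw [if_pos h, h, if_pos (by simp), div_mul_eq_mul_div, hexp]
    push_cast
    field_simp
  · rw [if_neg h, if_neg (by omega), Complex.ofReal_zero, mul_zero]

/-- The bound on the first spectral projection of a Kato semigroup with spectrum in `ℕ`. -/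
def projConst (N : ℕ) : ℝ := 8 * rexp (analyticTime N)

lemma IsKatoSemigroup.complexGauge_firstCoeffIntegrand_le [Finite ι] {k : ι → ℕ}
    (hk : IsKatoSemigroup Φ (fun i => (k i : ℝ)) N) {θ : ℝ} (hθ0 : 0 ≤ θ) (hθ : θ ≤ 2 * π) :
    complexGauge Φ (fun i => firstCoeffIntegrand (analyticTime N) (k i) θ) ≤
      projConst N / (2 * π) := by
  have hnorm : ‖((rexp (analyticTime N) / (2 * π) : ℝ) * Complex.exp (-(θ * Complex.I)) : ℂ)‖ =
      rexp (analyticTime N) / (2 * π) := by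
    rw [norm_mul, Complex.norm_exp, Complex.norm_real, Real.norm_of_nonneg (by positivity)]
    simp
  refine (complexGauge_const_mul_le Φ _ _).trans ?_
  rw [hnorm]
  calc _ ≤ 2 * (rexp (analyticTime N) / (2 * π)) * 4 := by
        gcongr
        exact hk.complexGauge_cexp_mul_exp_neg_le hθ0 hθ
    _ = projConst N / (2 * π) := by rw [projConst]; ring

theorem IsKatoSemigroup.norm_indicator_eq_one_le [Finite ι] {k : ι → ℕ}
    (hk : IsKatoSemigroup Φ (fun i => (k i : ℝ)) N) :
    ‖Φ fun i => if k i = 1 then 1 else 0‖ ≤ projConst N := by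
  have hintegral : (fun i => (((if k i = 1 then 1 else 0 : ℝ)) : ℂ)) =
      fun i => ∫ θ in Ioc 0 (2 * π), firstCoeffIntegrand (analyticTime N) (k i) θ := by
    ext i
    rw [integral_firstCoeffIntegrand]
    split_ifs <;> simp
  rw [← complexGauge_ofReal, hintegral]
  calc _ ≤ ∫ _ in Ioc 0 (2 * π), projConst N / (2 * π) :=
        complexGauge_integral_le Φ (fun i => integrableOn_firstCoeffIntegrand _ _ _ _) (by simp)
          ((ae_restrict_iff' measurableSet_Ioc).2
            (.of_forall fun θ hθ => hk.complexGauge_firstCoeffIntegrand_le hθ.1.le hθ.2))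
    _ = projConst N := by
        simp only [integral_const, MeasurableSet.univ, measureReal_restrict_apply, univ_inter,
          volume_real_Ioc, sub_zero, max_eq_left two_pi_pos.le, smul_eq_mul]
        field_simp

end Multiplier

/-! ### Walsh functions and Walsh multipliers -/

section Walsh

open Matrix

/-- The sign `±1` encoded by a Boolean; functions `ω : ι → Bool` stand for the points of the
discrete cube `{-1, 1} ^ ι`. -/
def boolSign (b : Bool) : ℝ := if b then 1 else -1

lemma boolSign_mul_self (b : Bool) : boolSign b * boolSign b = 1 := by cases b <;> simp [boolSign]

lemma abs_boolSign (b : Bool) : |boolSign b| = 1 := by cases b <;> simp [boolSign]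

variable {ι : Type*}

/-- The Walsh function `ω ↦ ∏ i ∈ A, ω i` on the discrete cube. -/
def walsh (A : Finset ι) (ω : ι → Bool) : ℝ := ∏ i ∈ A, boolSign (ω i)

lemma sum_powerset_walsh_mul_walsh (S : Finset ι) (ω η : ι → Bool) :
    ∑ A ∈ S.powerset, walsh A ω * walsh A η =
      ∏ i ∈ S, (1 + boolSign (ω i) * boolSign (η i)) := by
  simp only [Finset.prod_one_add, walsh, Finset.prod_mul_distrib]

variable [Fintype ι] [DecidableEq ι]

lemma sum_walsh_mul_walsh (A B : Finset ι) :
    ∑ ω, walsh A ω * walsh B ω = if A = B then 2 ^ Fintype.card ι else 0 := by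
  have hprod (ω : ι → Bool) : walsh A ω * walsh B ω =
      ∏ i, (if i ∈ A then boolSign (ω i) else 1) * if i ∈ B then boolSign (ω i) else 1 := by
    rw [Finset.prod_mul_distrib]
    simp [walsh, Finset.prod_ite_mem]
  simp only [hprod]
  rw [← Fintype.prod_sum fun (i : ι) (b : Bool) =>
    (if i ∈ A then boolSign b else 1) * if i ∈ B then boolSign b else 1]
  split_ifs with h
  · have hfactor (i : ι) : ∑ b : Bool,
        ((if i ∈ A then boolSign b else 1) * if i ∈ A then boolSign b else 1) = 2 := by
      by_cases hi : i ∈ A <;> simp [hi, boolSign_mul_self]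
    simp only [← h, hfactor, Finset.prod_const, Finset.card_univ]
  · obtain ⟨i, hi⟩ : ∃ i, ¬ (i ∈ A ↔ i ∈ B) := by
      by_contra! hc
      exact h (Finset.ext hc)
    refine Finset.prod_eq_zero (Finset.mem_univ i) ?_
    by_cases hA : i ∈ A <;> by_cases hB : i ∈ B <;> simp_all [boolSign]

/-- The matrix of the Walsh functions. -/
def walshMatrix (ι : Type*) : Matrix (ι → Bool) (Finset ι) ℝ := .of fun ω A => walsh A ω

lemma walshMatrix_transpose_mul_self :
    (walshMatrix ι)ᵀ * walshMatrix ι = (2 ^ Fintype.card ι : ℝ) • 1 := by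
  ext A B
  simp [walshMatrix, mul_apply, sum_walsh_mul_walsh, one_apply]

lemma walshMatrix_mul_transpose_self {ι : Type*} [Fintype ι] :
    walshMatrix ι * (walshMatrix ι)ᵀ = (2 ^ Fintype.card ι : ℝ) • 1 := by
  classical
  have hleft : ((2 ^ Fintype.card ι : ℝ)⁻¹ • (walshMatrix ι)ᵀ) * walshMatrix ι = 1 := by
    rw [Matrix.smul_mul, walshMatrix_transpose_mul_self, inv_smul_smul₀ (by positivity)]
  have hright := (mul_eq_one_comm_of_card_eq (Finset ι) (ι → Bool) ℝ (by simp)).1 hleft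
  rwa [Matrix.mul_smul, inv_smul_eq_iff₀ (by positivity)] at hright

/-- The Walsh multiplier with symbol `m`, as a matrix: the operator on functions on the discrete
cube which multiplies the Walsh function of `A` by `m A`. -/
def walshMultiplierMatrix (ι : Type*) [Fintype ι] [DecidableEq ι] :
    (Finset ι → ℝ) →ₐ[ℝ] Matrix (ι → Bool) (ι → Bool) ℝ :=
  .ofLinearMap
    { toFun m := (2 ^ Fintype.card ι : ℝ)⁻¹ • (walshMatrix ι * diagonal m * (walshMatrix ι)ᵀ)
      map_add' m m' := by
        rw [← smul_add, ← Matrix.add_mul, ← Matrix.mul_add, diagonal_add]; rfl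
      map_smul' c m := by
        simp [diagonal_smul, smul_comm c] }
    (by
      simp [walshMatrix_mul_transpose_self])
    (by
      intro m m'
      have hmid : walshMatrix ι * diagonal m * (walshMatrix ι)ᵀ *
            (walshMatrix ι * diagonal m' * (walshMatrix ι)ᵀ) =
          (2 ^ Fintype.card ι : ℝ) • (walshMatrix ι * diagonal (m * m') * (walshMatrix ι)ᵀ) := by
        calc _ = walshMatrix ι * diagonal m * ((walshMatrix ι)ᵀ * walshMatrix ι) *
              (diagonal m' * (walshMatrix ι)ᵀ) := by simp only [Matrix.mul_assoc]
          _ = (2 ^ Fintype.card ι : ℝ) •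
              (walshMatrix ι * (diagonal m * diagonal m') * (walshMatrix ι)ᵀ) := by
            simp only [walshMatrix_transpose_mul_self, Matrix.mul_smul, Matrix.smul_mul,
              Matrix.mul_one, Matrix.mul_assoc]
          _ = _ := by rw [diagonal_mul_diagonal]; rfl
      simp only [LinearMap.coe_mk, AddHom.coe_mk, Matrix.smul_mul, Matrix.mul_smul, hmid]
      rw [inv_smul_smul₀ (by positivity)])

lemma walshMultiplierMatrix_apply (m : Finset ι → ℝ) (ω η : ι → Bool) :
    walshMultiplierMatrix ι m ω η =
      (2 ^ Fintype.card ι)⁻¹ * ∑ A, m A * (walsh A ω * walsh A η) := by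
  simp [walshMultiplierMatrix, walshMatrix, mul_apply, diagonal_apply, mul_assoc, mul_left_comm]

/-- The symbol of the conditional expectation onto the coordinates in `S`. -/
def condExpSymbol (S : Finset ι) : Finset ι → ℝ := fun A => if A ⊆ S then 1 else 0

lemma prod_condExpSymbol {α : Type*} (B : Finset α) (S : α → Finset ι) :
    ∏ a ∈ B, condExpSymbol (S a) = condExpSymbol (B.inf S) := by
  ext A
  simp [condExpSymbol, Finset.prod_apply, Finset.prod_ite_zero]

lemma walshMultiplierMatrix_condExpSymbol_apply (S : Finset ι) (ω η : ι → Bool) :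
    walshMultiplierMatrix ι (condExpSymbol S) ω η =
      (2 ^ Fintype.card ι)⁻¹ * ∏ i ∈ S, (1 + boolSign (ω i) * boolSign (η i)) := by
  rw [← sum_powerset_walsh_mul_walsh, walshMultiplierMatrix_apply]
  simp only [condExpSymbol, ite_mul, one_mul, zero_mul, ← Finset.sum_filter]
  congr 2
  ext A
  simp

lemma sum_walshMultiplierMatrix_apply (m : Finset ι → ℝ) (ω : ι → Bool) :
    ∑ η, walshMultiplierMatrix ι m ω η = m ∅ := by
  have hsum (A : Finset ι) : ∑ η, walsh A η = if A = ∅ then 2 ^ Fintype.card ι else 0 := by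
    simpa [walsh] using sum_walsh_mul_walsh A ∅
  simp only [walshMultiplierMatrix_apply, ← Finset.mul_sum]
  rw [Finset.sum_comm]
  simp only [← Finset.mul_sum, hsum]
  simp only [walsh, mul_ite, mul_zero, Finset.sum_ite_eq', Finset.mem_univ, if_true,
    Finset.prod_empty, one_mul]
  field_simp

lemma walshMultiplierMatrix_condExpSymbol_mem (S : Finset ι) :
    walshMultiplierMatrix ι (condExpSymbol S) ∈ doublyStochastic ℝ (ι → Bool) := by
  refine mem_doublyStochastic_iff_sum.2 ⟨fun ω η => ?_, fun ω => ?_, fun η => ?_⟩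
  · rw [walshMultiplierMatrix_condExpSymbol_apply]
    refine mul_nonneg (by positivity) (Finset.prod_nonneg fun i _ => ?_)
    cases ω i <;> cases η i <;> norm_num [boolSign]
  · simp [sum_walshMultiplierMatrix_apply, condExpSymbol]
  · have hsymm (ω : ι → Bool) : walshMultiplierMatrix ι (condExpSymbol S) ω η =
        walshMultiplierMatrix ι (condExpSymbol S) η ω := by
      simp only [walshMultiplierMatrix_apply, mul_comm (walsh _ ω)]
    simp [hsymm, sum_walshMultiplierMatrix_apply, condExpSymbol]

end Walsh

section KernelOperator

variable {Ω X : Type*} [Fintype Ω] [DecidableEq Ω] [NormedAddCommGroup X] [NormedSpace ℝ X]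

/-- The action of a scalar matrix on the `ℓ²`-space of `X`-valued functions. -/
def matrixOperator (Ω X : Type*) [Fintype Ω] [DecidableEq Ω] [NormedAddCommGroup X]
    [NormedSpace ℝ X] :
    Matrix Ω Ω ℝ →ₐ[ℝ] PiLp 2 (fun _ : Ω => X) →L[ℝ] PiLp 2 (fun _ : Ω => X) :=
  .ofLinearMap
    { toFun M := ((PiLp.continuousLinearEquiv 2 ℝ (fun _ : Ω => X)).symm :
          (Ω → X) →L[ℝ] PiLp 2 (fun _ : Ω => X)) ∘L
        (ContinuousLinearMap.pi fun ω => ∑ η, M ω η • PiLp.proj 2 (fun _ : Ω => X) η)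
      map_add' M M' := by ext; simp [add_smul, Finset.sum_add_distrib]
      map_smul' c M := by ext; simp [Finset.smul_sum, smul_smul] }
    (by ext; simp [Matrix.one_apply])
    (fun M M' => by
      ext
      simpa [Matrix.mul_apply, Finset.smul_sum, Finset.sum_smul, smul_smul] using Finset.sum_comm)

lemma matrixOperator_apply (M : Matrix Ω Ω ℝ) (F : PiLp 2 fun _ : Ω => X) (ω : Ω) :
    matrixOperator Ω X M F ω = ∑ η, M ω η • F η := by
  simp [matrixOperator]

lemma norm_matrixOperator_le_one {M : Matrix Ω Ω ℝ} (hM : M ∈ doublyStochastic ℝ Ω) :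
    ‖matrixOperator Ω X M‖ ≤ 1 := by
  refine ContinuousLinearMap.opNorm_le_bound _ zero_le_one fun F => ?_
  rw [one_mul]
  refine le_of_sq_le_sq ?_ (norm_nonneg _)
  rw [PiLp.norm_sq_eq_of_L2, PiLp.norm_sq_eq_of_L2]
  calc ∑ ω, ‖matrixOperator Ω X M F ω‖ ^ 2 ≤ ∑ ω, (∑ η, M ω η * ‖F η‖) ^ 2 := by
        gcongr with ω
        rw [matrixOperator_apply]
        refine norm_sum_le_of_le _ fun η _ => ?_
        rw [norm_smul, Real.norm_of_nonneg (nonneg_of_mem_doublyStochastic hM)]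
    _ ≤ ∑ ω, ∑ η, M ω η * ‖F η‖ ^ 2 := by
        gcongr with ω
        exact Real.pow_arith_mean_le_arith_mean_pow _ _ _
          (fun η _ => nonneg_of_mem_doublyStochastic hM) (sum_row_of_mem_doublyStochastic hM ω)
          (fun η _ => norm_nonneg _) 2
    _ = ∑ η, ‖F η‖ ^ 2 := by
        rw [Finset.sum_comm]
        simp only [← Finset.sum_mul, sum_col_of_mem_doublyStochastic hM, one_mul]

end KernelOperator

section WalshMultiplier

variable {ι X : Type*} [Fintype ι] [NormedAddCommGroup X] [NormedSpace ℝ X]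

/-- The Rademacher sum `∑ i, ε i • x i`. -/
def rademacherSum (x : ι → X) (ε : ι → Bool) : X := ∑ i, boolSign (ε i) • x i

lemma rademacherSum_smul (t : ℝ) (x : ι → X) (ε : ι → Bool) :
    rademacherSum (t • x) ε = t • rademacherSum x ε := by
  simp only [rademacherSum, Pi.smul_apply, Finset.smul_sum, smul_comm t]

variable [DecidableEq ι]

/-- The `i`-th Rademacher coefficient `2⁻ⁿ ∑ ω, ω i • F ω` of a function on the discrete cube. -/
def rademacherCoeff (F : (ι → Bool) → X) (i : ι) : X :=
  (2 ^ Fintype.card ι : ℝ)⁻¹ • ∑ ω, boolSign (ω i) • F ω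

/-- The Walsh multiplier with symbol `m`, acting on `X`-valued functions on the discrete cube. -/
def walshMultiplier (ι X : Type*) [Fintype ι] [DecidableEq ι] [NormedAddCommGroup X]
    [NormedSpace ℝ X] : (Finset ι → ℝ) →ₐ[ℝ]
      PiLp 2 (fun _ : ι → Bool => X) →L[ℝ] PiLp 2 (fun _ : ι → Bool => X) :=
  (matrixOperator (ι → Bool) X).comp (walshMultiplierMatrix ι)

lemma norm_walshMultiplier_condExpSymbol_le (S : Finset ι) :
    ‖walshMultiplier ι X (condExpSymbol S)‖ ≤ 1 :=
  norm_matrixOperator_le_one (walshMultiplierMatrix_condExpSymbol_mem S)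

lemma walshMultiplier_card_eq_one_apply (F : PiLp 2 fun _ : ι → Bool => X) (ω : ι → Bool) :
    walshMultiplier ι X (fun A => if A.card = 1 then 1 else 0) F ω =
      rademacherSum (rademacherCoeff F) ω := by
  have hentry (η : ι → Bool) :
      walshMultiplierMatrix ι (fun A => if A.card = 1 then 1 else 0) ω η =
        ∑ i, boolSign (ω i) * ((2 ^ Fintype.card ι)⁻¹ * boolSign (η i)) := by
    simp only [walshMultiplierMatrix_apply, ite_mul, one_mul, zero_mul, ← Finset.sum_filter]
    rw [Finset.mul_sum]
    symm
    refine Finset.sum_bij (fun i _ => {i}) (by simp) (by simp) (fun A hA => ?_) ?_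
    · obtain ⟨i, hi⟩ := Finset.card_eq_one.1 (Finset.mem_filter.1 hA).2
      exact ⟨i, Finset.mem_univ _, hi.symm⟩
    · intro i _
      simp only [walsh, Finset.prod_singleton]
      ring
  simp only [walshMultiplier, AlgHom.comp_apply, matrixOperator_apply, rademacherSum,
    rademacherCoeff, hentry, Finset.sum_smul, Finset.smul_sum, smul_smul]
  exact Finset.sum_comm

end WalshMultiplier

/-! ### Rademacher type and K-convexity -/

section PowerSums

variable {ι : Type*} {s : Finset ι} {t : ι → ℝ}

lemma sum_rpow_le_rpow_sum {q : ℝ} (hq : 1 ≤ q) (ht : ∀ i ∈ s, 0 ≤ t i) :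
    ∑ i ∈ s, t i ^ q ≤ (∑ i ∈ s, t i) ^ q := by
  induction s using Finset.cons_induction with
  | empty => simp [Real.zero_rpow (by linarith : q ≠ 0)]
  | cons i s hi ih =>
    rw [Finset.sum_cons, Finset.sum_cons]
    have hs : ∀ j ∈ s, 0 ≤ t j := fun j hj => ht j (Finset.mem_cons_of_mem hj)
    calc t i ^ q + ∑ j ∈ s, t j ^ q ≤ t i ^ q + (∑ j ∈ s, t j) ^ q := by gcongr; exact ih hs
      _ ≤ (t i + ∑ j ∈ s, t j) ^ q :=
        Real.add_rpow_le_rpow_add (ht i (Finset.mem_cons_self _ _)) (Finset.sum_nonneg hs) hq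

lemma rpow_one_div_sum_rpow_le_sqrt {p : ℝ} (hp : 2 ≤ p) (ht : ∀ i ∈ s, 0 ≤ t i) :
    (∑ i ∈ s, t i ^ p) ^ (1 / p) ≤ √(∑ i ∈ s, t i ^ 2) := by
  have hsq : ∑ i ∈ s, t i ^ p ≤ (∑ i ∈ s, t i ^ 2) ^ (p / 2) := by
    refine le_of_eq_of_le (Finset.sum_congr rfl fun i hi => ?_)
      (sum_rpow_le_rpow_sum (by linarith) fun i _ => sq_nonneg (t i))
    rw [← Real.rpow_two, ← Real.rpow_mul (ht i hi), mul_div_cancel₀ _ two_ne_zero]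
  have hsum : 0 ≤ ∑ i ∈ s, t i ^ 2 := Finset.sum_nonneg fun i _ => sq_nonneg (t i)
  calc (∑ i ∈ s, t i ^ p) ^ (1 / p) ≤ ((∑ i ∈ s, t i ^ 2) ^ (p / 2)) ^ (1 / p) :=
        Real.rpow_le_rpow (Finset.sum_nonneg fun i hi => Real.rpow_nonneg (ht i hi) _) hsq
          (by positivity)
    _ = √(∑ i ∈ s, t i ^ 2) := by
        rw [← Real.rpow_mul hsum, Real.sqrt_eq_rpow]
        congr 1
        field_simp

lemma rpow_one_div_sum_rpow_le_card_rpow_mul_sqrt {p : ℝ} (hp0 : 0 < p) (hp2 : p ≤ 2)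
    (ht : ∀ i ∈ s, 0 ≤ t i) :
    (∑ i ∈ s, t i ^ p) ^ (1 / p) ≤ (s.card : ℝ) ^ (1 / p - 1 / 2) * √(∑ i ∈ s, t i ^ 2) := by
  have hpow : ∀ i ∈ s, 0 ≤ t i ^ p := fun i hi => Real.rpow_nonneg (ht i hi) _
  have hholder := Real.rpow_sum_le_const_mul_sum_rpow_of_nonneg s (p := 2 / p)
    ((one_le_div hp0).2 hp2) hpow
  have hsq : ∑ i ∈ s, (t i ^ p) ^ (2 / p) = ∑ i ∈ s, t i ^ 2 := by
    refine Finset.sum_congr rfl fun i hi => ?_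
    rw [← Real.rpow_mul (ht i hi), mul_div_cancel₀ _ hp0.ne', Real.rpow_two]
  rw [hsq] at hholder
  refine le_of_sq_le_sq ?_ (by positivity)
  rw [mul_pow, Real.sq_sqrt (Finset.sum_nonneg fun i _ => sq_nonneg _), ← Real.rpow_mul_natCast
    (Finset.sum_nonneg hpow), ← Real.rpow_mul_natCast (Nat.cast_nonneg _)]
  rwa [show 1 / p * ((2 : ℕ) : ℝ) = 2 / p by push_cast; ring,
    show (1 / p - 1 / 2) * ((2 : ℕ) : ℝ) = 2 / p - 1 by push_cast; ring]

lemma exists_sum_mul_rpow_sum_rpow_le {p : ℝ} (hp : 1 < p) :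
    ∃ b : ℝ, b < 1 ∧ ∀ (n : ℕ) (t : Fin n → ℝ), 0 ≤ t →
      (∑ i, t i) * (∑ i, t i ^ p) ^ (1 / p) ≤ (n : ℝ) ^ b * ∑ i, t i ^ 2 := by
  obtain ⟨a, ha, hlp⟩ : ∃ a : ℝ, a < 1 / 2 ∧ ∀ (n : ℕ) (t : Fin n → ℝ), 0 ≤ t →
      (∑ i, t i ^ p) ^ (1 / p) ≤ (n : ℝ) ^ a * √(∑ i, t i ^ 2) := by
    rcases le_total 2 p with h2 | h2
    · exact ⟨0, by norm_num, fun n t ht => by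
        simpa using rpow_one_div_sum_rpow_le_sqrt h2 fun i (_ : i ∈ Finset.univ) => ht i⟩
    · have : 1 / p < 1 := (div_lt_one (by linarith)).2 hp
      exact ⟨1 / p - 1 / 2, by linarith, fun n t ht => by
        simpa using rpow_one_div_sum_rpow_le_card_rpow_mul_sqrt (by linarith) h2
          fun i (_ : i ∈ Finset.univ) => ht i⟩
  refine ⟨1 / 2 + a, by linarith, fun n t ht => ?_⟩
  rcases n.eq_zero_or_pos with rfl | hn
  · simp
  have hcauchy : ∑ i, t i ≤ √n * √(∑ i, t i ^ 2) := by
    rw [← Real.sqrt_mul (by positivity)]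
    refine Real.le_sqrt_of_sq_le ?_
    simpa using sq_sum_le_card_mul_sum_sq (s := Finset.univ) (f := t)
  calc (∑ i, t i) * (∑ i, t i ^ p) ^ (1 / p)
      ≤ (√n * √(∑ i, t i ^ 2)) * ((n : ℝ) ^ a * √(∑ i, t i ^ 2)) :=
        mul_le_mul hcauchy (hlp n t ht)
          (Real.rpow_nonneg (Finset.sum_nonneg fun i _ => Real.rpow_nonneg (ht i) _) _)
          (by positivity)
    _ = √n * (n : ℝ) ^ a * (√(∑ i, t i ^ 2) * √(∑ i, t i ^ 2)) := by ring
    _ = (n : ℝ) ^ (1 / 2 + a) * ∑ i, t i ^ 2 := by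
        rw [Real.mul_self_sqrt (Finset.sum_nonneg fun i _ => sq_nonneg _), Real.sqrt_eq_rpow,
          ← Real.rpow_add (Nat.cast_pos.2 hn)]

end PowerSums

section RademacherType

variable {X : Type*} [NormedAddCommGroup X] [NormedSpace ℝ X]

/-- `X` has Rademacher type `p` with constant `T`. -/
def HasRademacherType (X : Type*) [NormedAddCommGroup X] [NormedSpace ℝ X] (p T : ℝ) : Prop :=
  ∀ (m : ℕ) (x : Fin m → X),
    (∑ ε, ‖rademacherSum x ε‖) / 2 ^ m ≤ T * (∑ i, ‖x i‖ ^ p) ^ (1 / p)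

lemma norm_rademacherSum_le {ι : Type*} [Fintype ι] (x : ι → X) (ε : ι → Bool) :
    ‖rademacherSum x ε‖ ≤ ∑ i, ‖x i‖ :=
  norm_sum_le_of_le _ fun i _ => by rw [norm_smul, Real.norm_eq_abs, abs_boolSign, one_mul]

lemma HasRademacherType.sum_norm_sq_le {p T c : ℝ} (h : HasRademacherType X p T) {n : ℕ}
    (hc : ∀ t : Fin n → ℝ, 0 ≤ t → (∑ i, t i) * (∑ i, t i ^ p) ^ (1 / p) ≤ c * ∑ i, t i ^ 2)
    (x : Fin n → X) :
    ∑ ε, ‖rademacherSum x ε‖ ^ 2 ≤ 2 ^ n * (|T| * c * ∑ i, ‖x i‖ ^ 2) := by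
  calc ∑ ε, ‖rademacherSum x ε‖ ^ 2 ≤ ∑ ε, (∑ i, ‖x i‖) * ‖rademacherSum x ε‖ := by
        gcongr with ε
        rw [sq]
        gcongr
        exact norm_rademacherSum_le x ε
    _ = (∑ i, ‖x i‖) * (2 ^ n * ((∑ ε, ‖rademacherSum x ε‖) / 2 ^ n)) := by
        rw [← Finset.mul_sum]
        field_simp
    _ ≤ (∑ i, ‖x i‖) * (2 ^ n * (|T| * (∑ i, ‖x i‖ ^ p) ^ (1 / p))) := by
        gcongr
        exact (h n x).trans (by gcongr; exact le_abs_self T)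
    _ = 2 ^ n * (|T| * ((∑ i, ‖x i‖) * (∑ i, ‖x i‖ ^ p) ^ (1 / p))) := by ring
    _ ≤ 2 ^ n * (|T| * (c * ∑ i, ‖x i‖ ^ 2)) := by
        gcongr 2 ^ n * (|T| * ?_)
        exact hc (fun i => ‖x i‖) fun i => norm_nonneg _
    _ = 2 ^ n * (|T| * c * ∑ i, ‖x i‖ ^ 2) := by ring

lemma exists_mul_natCast_rpow_lt (C : ℝ) {b : ℝ} (hb : b < 1) :
    ∃ n : ℕ, C * (n : ℝ) ^ b < n := by
  have hlim : Filter.Tendsto (fun n : ℕ => (n : ℝ) ^ (1 - b)) Filter.atTop Filter.atTop :=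
    (tendsto_rpow_atTop (by linarith)).comp tendsto_natCast_atTop_atTop
  obtain ⟨n, hn, hn0⟩ := ((hlim.eventually_gt_atTop C).and (Filter.eventually_gt_atTop 0)).exists
  have hn0' : (0 : ℝ) < n := Nat.cast_pos.2 hn0
  refine ⟨n, ?_⟩
  calc C * (n : ℝ) ^ b < (n : ℝ) ^ (1 - b) * (n : ℝ) ^ b := by gcongr
    _ = n := by rw [← Real.rpow_add hn0', sub_add_cancel, Real.rpow_one]

lemma HasRademacherType.exists_sum_norm_sq_le {p T : ℝ} (h : HasRademacherType X p T)
    (hp : 1 < p) :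
    ∃ (N : ℕ) (c : ℝ), 0 ≤ c ∧ 4 * c < N ∧ ∀ x : Fin N → X,
      ∑ ε, ‖rademacherSum x ε‖ ^ 2 ≤ 2 ^ N * (c * ∑ i, ‖x i‖ ^ 2) := by
  obtain ⟨b, hb, hpow⟩ := exists_sum_mul_rpow_sum_rpow_le hp
  obtain ⟨N, hN⟩ := exists_mul_natCast_rpow_lt (4 * |T|) hb
  exact ⟨N, |T| * (N : ℝ) ^ b, by positivity, by linarith, h.sum_norm_sq_le (hpow N)⟩

end RademacherType

section CommutingProjections

lemma half_le_of_card_sub_half_lt_sum {α : Type*} [Fintype α] {a : α → ℝ} (ha : ∀ i, a i ≤ 1)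
    (hsum : Fintype.card α - 1 / 2 < ∑ i, a i) (i : α) : 1 / 2 ≤ a i := by
  have hsingle : 1 - a i ≤ ∑ j, (1 - a j) :=
    Finset.single_le_sum (f := fun j => 1 - a j) (fun j _ => sub_nonneg.2 (ha j))
      (Finset.mem_univ i)
  rw [Finset.sum_sub_distrib] at hsingle
  simp only [Finset.sum_const, Finset.card_univ, nsmul_eq_mul, mul_one] at hsingle
  linarith

lemma mul_prod_eq_prod_insert {R ι : Type*} [CommMonoid R] [DecidableEq ι] {e : ι → R}
    (hidem : ∀ i, e i * e i = e i) (B : Finset ι) (i : ι) :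
    (∏ j ∈ B, e j) * e i = ∏ j ∈ insert i B, e j := by
  by_cases hi : i ∈ B
  · rw [Finset.insert_eq_of_mem hi, ← Finset.mul_prod_erase _ _ hi, mul_right_comm, hidem]
  · rw [Finset.prod_insert hi, mul_comm]

lemma boolSign_mul_neg_one_pow_card {ι : Type*} [Fintype ι] [DecidableEq ι] (ε : ι → Bool)
    (i : ι) :
    boolSign (ε i) * (-1) ^ (Finset.univ.filter (ε · = true)).card =
      (-1) ^ (insert i (Finset.univ.filter (ε · = true))).card := by
  by_cases hi : ε i = true
  · rw [Finset.insert_eq_of_mem (by simpa using hi)]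
    simp [boolSign, hi]
  · rw [Finset.card_insert_of_notMem (by simpa using hi), pow_succ']
    simp [boolSign, hi]

variable {R Z ι : Type*} [CommRing R] [Algebra ℝ R] [NormedAddCommGroup Z] [NormedSpace ℝ Z]
  [Fintype ι] {Φ : R →ₐ[ℝ] Z →L[ℝ] Z} {e : ι → R}

lemma exists_half_le_of_lt_norm_prod_one_sub (hprod : ∀ B : Finset ι, ‖Φ (∏ i ∈ B, e i)‖ ≤ 1)
    (hlarge : 2 ^ Fintype.card ι - 1 / 2 < ‖Φ (∏ i, (1 - e i))‖) :
    ∃ (ξ : StrongDual ℝ Z) (z : Z), ‖ξ‖ ≤ 1 ∧ ‖z‖ ≤ 1 ∧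
      ∀ B : Finset ι, 1 / 2 ≤ (-1) ^ B.card * ξ (Φ (∏ i ∈ B, e i) z) := by
  classical
  obtain ⟨z, hz, hlt⟩ := ContinuousLinearMap.exists_lt_apply_of_lt_opNorm _ hlarge
  obtain ⟨ξ, hξ, hξz⟩ := exists_dual_vector'' ℝ (Φ (∏ i, (1 - e i)) z)
  refine ⟨ξ, z, hξ, hz.le, half_le_of_card_sub_half_lt_sum (fun B => ?_) ?_⟩
  · have hle : |ξ (Φ (∏ i ∈ B, e i) z)| ≤ 1 :=
      ξ.le_of_opNorm_le_of_le hξ ((Φ (∏ i ∈ B, e i)).le_of_opNorm_le_of_le (hprod B) hz.le)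
        |>.trans (by norm_num)
    refine (le_abs_self _).trans ?_
    simpa [abs_mul] using hle
  · have hexpand : ∏ i, (1 - e i) = ∑ B : Finset ι, (-1 : ℝ) ^ B.card • ∏ i ∈ B, e i := by
      rw [Finset.prod_sub, Finset.powerset_univ]
      simp [Algebra.smul_def]
    simp only [hexpand, map_sum, map_smul, _root_.sum_apply,
      _root_.smul_apply, smul_eq_mul] at hξz hlt
    rw [Fintype.card_finset, hξz]
    exact_mod_cast hlt

/-- The extremal case of the bound `‖∏ (1 - e i)‖ ≤ 2 ^ N` forces a copy of `ℓ¹`: for all signs,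
the product of the projections with `ε i = 1` detects the Rademacher sum. -/
lemma exists_card_div_two_le_norm_rademacherSum (hidem : ∀ i, e i * e i = e i)
    (hprod : ∀ B : Finset ι, ‖Φ (∏ i ∈ B, e i)‖ ≤ 1)
    (hlarge : 2 ^ Fintype.card ι - 1 / 2 < ‖Φ (∏ i, (1 - e i))‖) :
    ∃ v : ι → Z, (∀ i, ‖v i‖ ≤ 1) ∧ ∀ ε, (Fintype.card ι : ℝ) / 2 ≤ ‖rademacherSum v ε‖ := by
  classical
  obtain ⟨ξ, z, hξ, hz, hhalf⟩ := exists_half_le_of_lt_norm_prod_one_sub hprod hlarge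
  refine ⟨fun i => Φ (e i) z, fun i => ?_, fun ε => ?_⟩
  · simpa using (Φ (e i)).le_of_opNorm_le_of_le (by simpa using hprod {i}) hz
  set B : Finset ι := Finset.univ.filter (ε · = true)
  set v := rademacherSum (fun i => Φ (e i) z) ε
  calc (Fintype.card ι : ℝ) / 2 = ∑ _i : ι, 1 / 2 := by simp [div_eq_mul_inv]
    _ ≤ ∑ i, (-1) ^ (insert i B).card * ξ (Φ (∏ j ∈ insert i B, e j) z) :=
        Finset.sum_le_sum fun i _ => hhalf _
    _ = (-1) ^ B.card * ξ (Φ (∏ j ∈ B, e j) v) := by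
        simp only [v, rademacherSum, map_sum, map_smul, Finset.mul_sum, smul_eq_mul]
        refine Finset.sum_congr rfl fun i _ => ?_
        rw [← mul_prod_eq_prod_insert hidem, ← boolSign_mul_neg_one_pow_card, map_mul,
          mul_apply_eq_comp]
        ring
    _ ≤ |(-1) ^ B.card * ξ (Φ (∏ j ∈ B, e j) v)| := le_abs_self _
    _ = ‖ξ (Φ (∏ j ∈ B, e j) v)‖ := by simp [abs_mul]
    _ ≤ 1 * (1 * ‖v‖) :=
        ξ.le_of_opNorm_le_of_le hξ ((Φ _).le_of_opNorm_le (hprod B) v)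
    _ = ‖v‖ := by ring

end CommutingProjections

section KConvexity

variable {X : Type*} [NormedAddCommGroup X] [NormedSpace ℝ X]

lemma condExpSymbol_mul_self {ι : Type*} [DecidableEq ι] (S : Finset ι) :
    condExpSymbol S * condExpSymbol S = condExpSymbol S := by
  ext A
  simp [condExpSymbol]

lemma sum_norm_rademacherSum_sq_le_of_forall {α ι : Type*} [Fintype α] [DecidableEq α]
    [Fintype ι] {C : ℝ}
    (h : ∀ x : α → X, ∑ ε, ‖rademacherSum x ε‖ ^ 2 ≤ C * ∑ a, ‖x a‖ ^ 2)
    (v : α → PiLp 2 fun _ : ι => X) :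
    ∑ ε, ‖rademacherSum v ε‖ ^ 2 ≤ C * ∑ a, ‖v a‖ ^ 2 := by
  simp only [PiLp.norm_sq_eq_of_L2]
  rw [Finset.sum_comm, Finset.sum_comm (γ := α), Finset.mul_sum]
  refine Finset.sum_le_sum fun ω _ => ?_
  simpa [rademacherSum] using h fun a => v a ω

lemma norm_map_sum_smul_pow_le {α R 𝔅 : Type*} [Fintype α] [CommRing R] [Algebra ℝ R]
    [NormedRing 𝔅] [NormedAlgebra ℝ 𝔅] (Φ : R →ₐ[ℝ] 𝔅) {w : α → ℝ} (hw : 0 ≤ w)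
    (hw1 : ∑ a, w a = 1) {N : ℕ} {r : α → R} {c : ℝ}
    (hc : ∀ f : Fin N → α, ‖Φ (∏ i, r (f i))‖ ≤ c) :
    ‖Φ ((∑ a, w a • r a) ^ N)‖ ≤ c := by
  simp only [Fintype.sum_pow, map_sum]
  have hsmul (f : Fin N → α) : ∏ i, w (f i) • r (f i) = (∏ i, w (f i)) • ∏ i, r (f i) := by
    simp [Algebra.smul_def, Finset.prod_mul_distrib]
  calc ‖∑ f : Fin N → α, Φ (∏ i, w (f i) • r (f i))‖
      ≤ ∑ f : Fin N → α, (∏ i, w (f i)) * c := by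
        refine norm_sum_le_of_le _ fun f _ => ?_
        have hf : 0 ≤ ∏ i, w (f i) := Finset.prod_nonneg fun i _ => hw _
        rw [hsmul, map_smul, norm_smul, Real.norm_of_nonneg hf]
        exact mul_le_mul_of_nonneg_left (hc f) hf
    _ = c := by rw [← Finset.sum_mul, ← Fintype.sum_pow, hw1, one_pow, one_mul]

variable {ι : Type*} [Fintype ι]

/-- The law of the random subset of `ι` which contains each point independently with
probability `s`. -/
def bernoulliWeight (s : ℝ) (S : Finset ι) : ℝ :=
  s ^ S.card * (1 - s) ^ (Fintype.card ι - S.card)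

lemma bernoulliWeight_nonneg {s : ℝ} (h0 : 0 ≤ s) (h1 : s ≤ 1) :
    0 ≤ (bernoulliWeight s : Finset ι → ℝ) := fun _ =>
  mul_nonneg (pow_nonneg h0 _) (pow_nonneg (sub_nonneg.2 h1) _)

lemma sum_bernoulliWeight (s : ℝ) : ∑ S : Finset ι, bernoulliWeight s S = 1 := by
  simp [bernoulliWeight, Fintype.sum_pow_mul_eq_add_pow]

variable [DecidableEq ι]

lemma norm_walshMultiplier_prod_condExpSymbol_le {α : Type*} (B : Finset α) (S : α → Finset ι) :
    ‖walshMultiplier ι X (∏ a ∈ B, condExpSymbol (S a))‖ ≤ 1 := by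
  rw [prod_condExpSymbol]
  exact norm_walshMultiplier_condExpSymbol_le _

lemma norm_walshMultiplier_prod_one_sub_condExpSymbol_le {N : ℕ} {c : ℝ} (hc : 0 ≤ c)
    (hcN : 4 * c < N)
    (h : ∀ x : Fin N → X, ∑ ε, ‖rademacherSum x ε‖ ^ 2 ≤ 2 ^ N * (c * ∑ i, ‖x i‖ ^ 2))
    (S : Fin N → Finset ι) :
    ‖walshMultiplier ι X (∏ i, (1 - condExpSymbol (S i)))‖ ≤ 2 ^ N - 1 / 2 := by
  by_contra! hlarge
  obtain ⟨v, hv, hsum⟩ := exists_card_div_two_le_norm_rademacherSum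
    (Φ := walshMultiplier ι X) (e := fun i => condExpSymbol (S i))
    (fun i => condExpSymbol_mul_self (S i))
    (fun B => norm_walshMultiplier_prod_condExpSymbol_le B S) (by rwa [Fintype.card_fin])
  simp only [← mul_assoc] at h
  rw [Fintype.card_fin] at hsum
  have hlower : 2 ^ N * ((N : ℝ) / 2) ^ 2 ≤ ∑ ε, ‖rademacherSum v ε‖ ^ 2 := by
    calc (2 : ℝ) ^ N * ((N : ℝ) / 2) ^ 2 = ∑ _ε : Fin N → Bool, ((N : ℝ) / 2) ^ 2 := by simp
      _ ≤ _ := by gcongr with ε; exact hsum ε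
  have hupper : ∑ ε, ‖rademacherSum v ε‖ ^ 2 ≤ 2 ^ N * c * N := by
    refine (sum_norm_rademacherSum_sq_le_of_forall h v).trans ?_
    gcongr
    calc ∑ i, ‖v i‖ ^ 2 ≤ ∑ _i : Fin N, (1 : ℝ) := by
          gcongr with i
          exact pow_le_one₀ (norm_nonneg _) (hv i)
      _ = N := by simp
  have hN : ((N : ℝ) / 2) ^ 2 ≤ c * N :=
    le_of_mul_le_mul_left (by linarith) (by positivity : (0 : ℝ) < 2 ^ N)
  nlinarith

lemma sum_bernoulliWeight_smul_condExpSymbol (s : ℝ) :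
    ∑ S : Finset ι, bernoulliWeight s S • condExpSymbol S = fun A => s ^ A.card := by
  ext A
  have hprod : ∏ i, (s + (1 - s) * (if i ∈ A then 0 else 1)) = s ^ A.card := by
    have hfactor (i : ι) : s + (1 - s) * (if i ∈ A then 0 else 1) = if i ∈ A then s else 1 := by
      split_ifs <;> ring
    simp only [hfactor]
    simp [Finset.prod_ite_mem]
  rw [← hprod, Fintype.prod_add, Finset.sum_apply]
  refine Finset.sum_congr rfl fun S _ => ?_
  have hcompl : ∏ i ∈ Sᶜ, (if i ∈ A then (0 : ℝ) else 1) = condExpSymbol S A := by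
    have hswap (i : ι) : (if i ∈ A then (0 : ℝ) else 1) = if i ∉ A then 1 else 0 := by
      split_ifs <;> rfl
    simp only [hswap, Finset.prod_ite_zero, Finset.prod_const_one, condExpSymbol,
      Finset.mem_compl, not_imp_not, Finset.subset_iff]
  rw [Finset.prod_const, Finset.prod_mul_distrib, Finset.prod_const, Finset.card_compl, hcompl,
    Pi.smul_apply, smul_eq_mul, bernoulliWeight, mul_assoc]

lemma isKatoSemigroup_walshMultiplier {N : ℕ}
    (h : ∀ S : Fin N → Finset ι,
      ‖walshMultiplier ι X (∏ i, (1 - condExpSymbol (S i)))‖ ≤ 2 ^ N - 1 / 2) :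
    IsKatoSemigroup (walshMultiplier ι X) (fun A => (A.card : ℝ)) N := by
  have hexp (t : ℝ) : (fun A : Finset ι => rexp (-(t * A.card))) =
      ∑ S : Finset ι, bernoulliWeight (rexp (-t)) S • condExpSymbol S := by
    rw [sum_bernoulliWeight_smul_condExpSymbol]
    ext A
    rw [← Real.exp_nat_mul]
    ring_nf
  have hw {t : ℝ} (ht : 0 ≤ t) : 0 ≤ (bernoulliWeight (rexp (-t)) : Finset ι → ℝ) :=
    bernoulliWeight_nonneg (Real.exp_nonneg _) (Real.exp_le_one_iff.2 (by linarith))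
  refine ⟨fun A => Nat.cast_nonneg _, fun t ht => ?_, fun t ht => ?_⟩
  · have := norm_map_sum_smul_pow_le (walshMultiplier ι X) (hw ht) (sum_bernoulliWeight _)
      (N := 1) (r := condExpSymbol)
      fun f => norm_walshMultiplier_prod_condExpSymbol_le Finset.univ f
    rwa [pow_one, ← hexp] at this
  · have hsub : 1 - (fun A : Finset ι => rexp (-(t * A.card))) =
        ∑ S : Finset ι, bernoulliWeight (rexp (-t)) S • (1 - condExpSymbol S) := by
      simp only [smul_sub, Finset.sum_sub_distrib, ← Finset.sum_smul, sum_bernoulliWeight,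
        one_smul, hexp]
    rw [hsub]
    exact norm_map_sum_smul_pow_le _ (hw ht) (sum_bernoulliWeight _) h

/-- Pisier's theorem: a space of non-trivial type is K-convex. -/
theorem HasRademacherType.exists_sum_norm_rademacherSum_rademacherCoeff_sq_le {p T : ℝ}
    (h : HasRademacherType X p T) (hp : 1 < p) :
    ∃ C : ℝ, 0 ≤ C ∧ ∀ (n : ℕ) (F : (Fin n → Bool) → X),
      ∑ ω, ‖rademacherSum (rademacherCoeff F) ω‖ ^ 2 ≤ C * ∑ ω, ‖F ω‖ ^ 2 := by
  obtain ⟨N, c, hc, hcN, hsq⟩ := h.exists_sum_norm_sq_le hp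
  refine ⟨projConst N ^ 2, sq_nonneg _, fun n F => ?_⟩
  have hkato : IsKatoSemigroup (walshMultiplier (Fin n) X) (fun A => (A.card : ℝ)) N :=
    isKatoSemigroup_walshMultiplier
      (norm_walshMultiplier_prod_one_sub_condExpSymbol_le hc hcN hsq)
  have hle := pow_le_pow_left₀ (norm_nonneg _)
    (ContinuousLinearMap.le_of_opNorm_le _ hkato.norm_indicator_eq_one_le (WithLp.toLp 2 F)) 2
  simpa only [mul_pow, PiLp.norm_sq_eq_of_L2, walshMultiplier_card_eq_one_apply] using hle

end KConvexity

/-! ### Unconditional finite sequences -/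

section Spreading

open Filter Topology

variable {Y : Type*} [NormedAddCommGroup Y] {V : Ultrafilter Y} {R : ℝ}

lemma tendsto_limUnder_of_eventually_abs_le {α : Type*} {W : Ultrafilter α} {f : α → ℝ} {B : ℝ}
    (h : ∀ᶠ y in (W : Filter α), |f y| ≤ B) : Tendsto f W (𝓝 (limUnder W f)) := by
  have hmem : ↑(W.map f) ≤ 𝓟 (Set.Icc (-B) B) :=
    tendsto_principal.2 (h.mono fun y hy => abs_le.1 hy)
  obtain ⟨x, -, hx⟩ := isCompact_Icc.ultrafilter_le_nhds _ hmem
  exact tendsto_nhds_limUnder ⟨x, hx⟩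

/-- The ultrafilter of the differences `ψ i - ψ j` as first `j` and then `i` tends to infinity. -/
def differenceUltrafilter (ψ : ℕ → Y) : Ultrafilter Y :=
  (hyperfilter ℕ).bind fun i => (hyperfilter ℕ).map fun j => ψ i - ψ j

lemma eventually_differenceUltrafilter {ψ : ℕ → Y} {q : Y → Prop} :
    (∀ᶠ y in (differenceUltrafilter ψ : Filter Y), q y) ↔
      ∀ᶠ i in (hyperfilter ℕ : Filter ℕ), ∀ᶠ j in (hyperfilter ℕ : Filter ℕ), q (ψ i - ψ j) :=
  Iff.rfl

lemma eventually_norm_le_differenceUltrafilter {ψ : ℕ → Y} (hψ : ∀ n, ‖ψ n‖ ≤ R) :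
    ∀ᶠ y in (differenceUltrafilter ψ : Filter Y), ‖y‖ ≤ 2 * R :=
  eventually_differenceUltrafilter.2 <| Eventually.of_forall fun i => Eventually.of_forall fun j =>
    (norm_sub_le _ _).trans (by linarith [hψ i, hψ j])

lemma eventually_one_le_norm_differenceUltrafilter
    {ψ : ℕ → Y} (hsep : Pairwise fun i j => 1 ≤ ‖ψ i - ψ j‖) :
    ∀ᶠ y in (differenceUltrafilter ψ : Filter Y), 1 ≤ ‖y‖ := by
  refine eventually_differenceUltrafilter.2 (Eventually.of_forall fun i => ?_)
  have hne : ∀ᶠ j in (hyperfilter ℕ : Filter ℕ), j ≠ i :=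
    hyperfilter_le_cofinite (Set.finite_singleton i).compl_mem_cofinite
  filter_upwards [hne] with j hj using hsep hj.symm

variable [NormedSpace ℝ Y]

lemma tendsto_limUnder_add_smul {F : Y → ℝ} (hF : LipschitzWith 1 F)
    (hR : ∀ᶠ y in (V : Filter Y), ‖y‖ ≤ R) (v : Y) (c : ℝ) :
    Tendsto (fun y => F (v + c • y)) V (𝓝 (limUnder V fun y => F (v + c • y))) := by
  refine tendsto_limUnder_of_eventually_abs_le (B := |c| * R + |F v|) ?_
  filter_upwards [hR] with y hy
  have hdiff : |F (v + c • y) - F v| ≤ |c| * R := by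
    have := hF.norm_sub_le (v + c • y) v
    rw [add_sub_cancel_left, norm_smul, NNReal.coe_one, one_mul] at this
    exact this.trans (mul_le_mul_of_nonneg_left hy (abs_nonneg c))
  linarith [abs_sub_abs_le_abs_sub (F (v + c • y)) (F v)]

/-- The iterated limit `lim_{y₁ → V} ⋯ lim_{y_k → V} ‖v + a₁ y₁ + ⋯ + a_k y_k‖`. -/
def iteratedLimNorm (V : Ultrafilter Y) : (k : ℕ) → (Fin k → ℝ) → Y → ℝ
  | 0, _, v => ‖v‖
  | k + 1, a, v => limUnder V fun y => iteratedLimNorm V k (fun i => a i.succ) (v + a 0 • y)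

lemma lipschitzWith_iteratedLimNorm (hR : ∀ᶠ y in (V : Filter Y), ‖y‖ ≤ R)
    {k : ℕ} (a : Fin k → ℝ) :
    LipschitzWith 1 (iteratedLimNorm V k a) := by
  induction k with
  | zero => exact lipschitzWith_one_norm
  | succ k ih =>
    refine LipschitzWith.of_dist_le_mul fun v w => ?_
    have hlim (v : Y) := tendsto_limUnder_add_smul (ih fun i => a i.succ) hR v (a 0)
    refine le_of_tendsto ((hlim v).dist (hlim w)) (Eventually.of_forall fun y => ?_)
    simpa using (ih fun i => a i.succ).dist_le_mul (v + a 0 • y) (w + a 0 • y)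

lemma tendsto_iteratedLimNorm (hR : ∀ᶠ y in (V : Filter Y), ‖y‖ ≤ R)
    {k : ℕ} (a : Fin (k + 1) → ℝ) (v : Y) :
    Tendsto (fun y => iteratedLimNorm V k (fun i => a i.succ) (v + a 0 • y)) V
      (𝓝 (iteratedLimNorm V (k + 1) a v)) :=
  tendsto_limUnder_add_smul (lipschitzWith_iteratedLimNorm hR _) hR v (a 0)

lemma iteratedLimNorm_succ_of_eq_zero (hR : ∀ᶠ y in (V : Filter Y), ‖y‖ ≤ R)
    {k : ℕ} {a : Fin (k + 1) → ℝ} (ha : a 0 = 0) (v : Y) :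
    iteratedLimNorm V (k + 1) a v = iteratedLimNorm V k (fun i => a i.succ) v := by
  refine tendsto_nhds_unique (tendsto_iteratedLimNorm hR a v) ?_
  simp only [ha, zero_smul, add_zero]
  exact tendsto_const_nhds

lemma iteratedLimNorm_add_le (hR : ∀ᶠ y in (V : Filter Y), ‖y‖ ≤ R)
    {k : ℕ} (a b : Fin k → ℝ) (v w : Y) :
    iteratedLimNorm V k (a + b) (v + w) ≤ iteratedLimNorm V k a v + iteratedLimNorm V k b w := by
  induction k generalizing v w with
  | zero => exact norm_add_le v w
  | succ k ih =>
    refine le_of_tendsto_of_tendsto' (tendsto_iteratedLimNorm hR (a + b) (v + w))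
      ((tendsto_iteratedLimNorm hR a v).add (tendsto_iteratedLimNorm hR b w)) fun y => ?_
    rw [Pi.add_apply, add_smul, add_add_add_comm]
    exact ih (fun i => a i.succ) (fun i => b i.succ) (v + a 0 • y) (w + b 0 • y)

lemma iteratedLimNorm_smul (hR : ∀ᶠ y in (V : Filter Y), ‖y‖ ≤ R)
    {k : ℕ} (c : ℝ) (a : Fin k → ℝ) (v : Y) :
    iteratedLimNorm V k (c • a) (c • v) = |c| * iteratedLimNorm V k a v := by
  induction k generalizing v with
  | zero => exact norm_smul c v
  | succ k ih =>
    refine tendsto_nhds_unique (tendsto_iteratedLimNorm hR (c • a) (c • v)) ?_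
    refine ((tendsto_iteratedLimNorm hR a v).const_mul |c|).congr fun y => ?_
    rw [← ih, smul_add, smul_smul]
    rfl

lemma convexOn_iteratedLimNorm (hR : ∀ᶠ y in (V : Filter Y), ‖y‖ ≤ R) {k : ℕ} (a : Fin k → ℝ) :
    ConvexOn ℝ univ (iteratedLimNorm V k a) := by
  refine ⟨convex_univ, fun v _ w _ s t hs ht hst => ?_⟩
  calc iteratedLimNorm V k a (s • v + t • w)
      = iteratedLimNorm V k (s • a + t • a) (s • v + t • w) := by rw [← add_smul, hst, one_smul]
    _ ≤ iteratedLimNorm V k (s • a) (s • v) + iteratedLimNorm V k (t • a) (t • w) :=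
        iteratedLimNorm_add_le hR _ _ _ _
    _ = s • iteratedLimNorm V k a v + t • iteratedLimNorm V k a w := by
        rw [iteratedLimNorm_smul hR, iteratedLimNorm_smul hR, abs_of_nonneg hs, abs_of_nonneg ht,
          smul_eq_mul, smul_eq_mul]

lemma iteratedLimNorm_zero (hR : ∀ᶠ y in (V : Filter Y), ‖y‖ ≤ R) (k : ℕ) (v : Y) :
    iteratedLimNorm V k 0 v = ‖v‖ := by
  induction k with
  | zero => rfl
  | succ k ih => exact (iteratedLimNorm_succ_of_eq_zero hR rfl v).trans ih

lemma exists_abs_norm_sub_iteratedLimNorm_le (hR : ∀ᶠ y in (V : Filter Y), ‖y‖ ≤ R) {G : Y → Prop}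
    (hG : ∀ᶠ y in (V : Filter Y), G y) {α : Type*} [Finite α] {η : ℝ} (hη : 0 < η) {k : ℕ}
    (a : α → Fin k → ℝ) (v : α → Y) :
    ∃ φ : Fin k → Y, (∀ l, G (φ l)) ∧
      ∀ i, |‖v i + ∑ l, a i l • φ l‖ - iteratedLimNorm V k (a i) (v i)| ≤ k * η := by
  induction k generalizing v with
  | zero => exact ⟨Fin.elim0, fun l => l.elim0, fun i => by simp [iteratedLimNorm]⟩
  | succ k ih =>
    have hclose : ∀ᶠ y in (V : Filter Y), ∀ i,
        |iteratedLimNorm V k (fun l => a i l.succ) (v i + a i 0 • y) -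
          iteratedLimNorm V (k + 1) (a i) (v i)| < η :=
      eventually_all.2 fun i =>
        Metric.tendsto_nhds.1 (tendsto_iteratedLimNorm hR (a i) (v i)) η hη
    obtain ⟨y, hy, hGy⟩ := (hclose.and hG).exists
    obtain ⟨φ, hφG, hφ⟩ := ih (fun i l => a i l.succ) fun i => v i + a i 0 • y
    refine ⟨Fin.cons y φ, fun l => Fin.cases hGy hφG l, fun i => ?_⟩
    rw [Fin.sum_univ_succ]
    simp only [Fin.cons_zero, Fin.cons_succ, ← add_assoc]
    push_cast
    linarith [hφ i, hy i, abs_sub_le ‖v i + a i 0 • y + ∑ l : Fin k, a i l.succ • φ l‖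
      (iteratedLimNorm V k (fun l => a i l.succ) (v i + a i 0 • y))
      (iteratedLimNorm V (k + 1) (a i) (v i))]

/-- Dropping an increment drawn from the bounded ultrafilter `V` does not increase convex Lipschitz
functions. Under this condition the increments drawn successively from `V` are unconditional in
the limit. -/
structure IsSuppressionUltrafilter (V : Ultrafilter Y) (R : ℝ) : Prop where
  eventually_norm_le : ∀ᶠ y in (V : Filter Y), ‖y‖ ≤ R
  le_limUnder : ∀ F : Y → ℝ, LipschitzWith 1 F → ConvexOn ℝ univ F → ∀ (v : Y) (c : ℝ),
    F v ≤ limUnder V fun y => F (v + c • y)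

namespace IsSuppressionUltrafilter

lemma iteratedLimNorm_mono (hV : IsSuppressionUltrafilter V R) {k : ℕ} {a b : Fin k → ℝ}
    (hab : ∀ i, b i = 0 ∨ b i = a i) (v : Y) :
    iteratedLimNorm V k b v ≤ iteratedLimNorm V k a v := by
  have hR := hV.eventually_norm_le
  induction k generalizing v with
  | zero => exact le_rfl
  | succ k ih =>
    rcases hab 0 with h0 | h0
    · rw [iteratedLimNorm_succ_of_eq_zero hR h0]
      exact (ih (fun i => hab i.succ) v).trans (hV.le_limUnder _
        (lipschitzWith_iteratedLimNorm hR _) (convexOn_iteratedLimNorm hR _) v (a 0))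
    · refine le_of_tendsto_of_tendsto' (tendsto_iteratedLimNorm hR b v)
        (tendsto_iteratedLimNorm hR a v) fun y => ?_
      rw [h0]
      exact ih (fun i => hab i.succ) _

lemma iteratedLimNorm_le_two_mul (hV : IsSuppressionUltrafilter V R) {k : ℕ} {a b : Fin k → ℝ}
    (hab : ∀ i, b i = a i ∨ b i = -a i) :
    iteratedLimNorm V k b 0 ≤ 2 * iteratedLimNorm V k a 0 := by
  have hR := hV.eventually_norm_le
  set b₁ : Fin k → ℝ := fun i => if b i = a i then a i else 0
  set b₂ : Fin k → ℝ := fun i => if b i = a i then 0 else a i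
  have hb : b = b₁ + (-1 : ℝ) • b₂ := by
    ext i
    by_cases h : b i = a i
    · simp [b₁, b₂, h]
    · simpa [b₁, b₂, h] using (hab i).resolve_left h
  have hb₁ : iteratedLimNorm V k b₁ 0 ≤ iteratedLimNorm V k a 0 :=
    hV.iteratedLimNorm_mono (fun i => by simp only [b₁]; split_ifs <;> simp) 0
  have hb₂ : iteratedLimNorm V k b₂ 0 ≤ iteratedLimNorm V k a 0 :=
    hV.iteratedLimNorm_mono (fun i => by simp only [b₂]; split_ifs <;> simp) 0
  have hadd := iteratedLimNorm_add_le hR b₁ ((-1 : ℝ) • b₂) 0 ((-1 : ℝ) • 0)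
  rw [iteratedLimNorm_smul hR, smul_zero, add_zero, ← hb, abs_neg, abs_one, one_mul] at hadd
  linarith

lemma abs_le_iteratedLimNorm (hV : IsSuppressionUltrafilter V R)
    (h1 : ∀ᶠ y in (V : Filter Y), 1 ≤ ‖y‖) {k : ℕ} (a : Fin (k + 1) → ℝ) :
    |a 0| ≤ iteratedLimNorm V (k + 1) a 0 := by
  have hR := hV.eventually_norm_le
  have hmono := hV.iteratedLimNorm_mono (a := a) (b := Fin.cons (a 0) 0)
    (Fin.cases (by simp) (by simp)) 0
  refine le_trans (ge_of_tendsto (tendsto_iteratedLimNorm hR (Fin.cons (a 0) 0) 0) ?_) hmono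
  filter_upwards [h1] with y hy
  simp only [Fin.cons_zero, Fin.cons_succ, zero_add, Pi.zero_apply]
  have hzero := iteratedLimNorm_zero hR k (a 0 • y)
  rw [norm_smul, Real.norm_eq_abs] at hzero
  exact (le_mul_of_one_le_right (abs_nonneg _) hy).trans_eq hzero.symm

end IsSuppressionUltrafilter

variable {ψ : ℕ → Y}

/-- `ψ i - ψ k` is the average of `2 (ψ i - ψ j)` and `2 (ψ j - ψ k)` for an intermediate `j`. -/
lemma le_of_tendsto_differenceUltrafilter {F : Y → ℝ} (hF : ConvexOn ℝ univ F) {v : Y} {c r s : ℝ}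
    (hr : Tendsto (fun y => F (v + (c / 2) • y)) (differenceUltrafilter ψ) (𝓝 r))
    (hs : Tendsto (fun y => F (v + c • y)) (differenceUltrafilter ψ) (𝓝 s)) : r ≤ s := by
  refine le_of_forall_pos_le_add fun η hη => le_of_tendsto hr ?_
  have hlt := eventually_differenceUltrafilter.1 (hs.eventually_lt_const (lt_add_of_pos_right s hη))
  refine eventually_differenceUltrafilter.2 ?_
  filter_upwards [hlt] with i hi
  obtain ⟨j, hij, hj⟩ := (hi.and hlt).exists
  filter_upwards [hj] with k hjk
  have hmid : (1 / 2 : ℝ) • (v + c • (ψ i - ψ j)) + (1 / 2 : ℝ) • (v + c • (ψ j - ψ k)) =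
      v + (c / 2) • (ψ i - ψ k) := by module
  have hconv := hF.2 (mem_univ (v + c • (ψ i - ψ j))) (mem_univ (v + c • (ψ j - ψ k)))
    one_half_pos.le one_half_pos.le (add_halves 1)
  rw [hmid, smul_eq_mul, smul_eq_mul] at hconv
  linarith

lemma isSuppressionUltrafilter_differenceUltrafilter (hψ : ∀ n, ‖ψ n‖ ≤ R) :
    IsSuppressionUltrafilter (differenceUltrafilter ψ) (2 * R) := by
  have hR := eventually_norm_le_differenceUltrafilter hψ
  refine ⟨hR, fun F hF hconv v c => ?_⟩
  set ℓ : ℝ → ℝ := fun c => limUnder (differenceUltrafilter ψ) fun y => F (v + c • y)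
  have hℓ (c : ℝ) : Tendsto (fun y => F (v + c • y)) (differenceUltrafilter ψ) (𝓝 (ℓ c)) :=
    tendsto_limUnder_add_smul hF hR v c
  have hpow (n : ℕ) : ℓ (c / 2 ^ n) ≤ ℓ c := by
    induction n with
    | zero => simp
    | succ n ih =>
      rw [pow_succ, ← div_div]
      exact (le_of_tendsto_differenceUltrafilter hconv (hℓ _) (hℓ _)).trans ih
  have hlower (c : ℝ) : F v - |c| * (2 * R) ≤ ℓ c := by
    refine ge_of_tendsto (hℓ c) ?_
    filter_upwards [hR] with y hy
    have hdist := hF.norm_sub_le v (v + c • y)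
    rw [sub_add_cancel_left, norm_neg, norm_smul, NNReal.coe_one, one_mul, Real.norm_eq_abs,
      Real.norm_eq_abs] at hdist
    linarith [(le_abs_self _).trans hdist, mul_le_mul_of_nonneg_left hy (abs_nonneg c)]
  have hlim : Tendsto (fun n : ℕ => F v - |c / 2 ^ n| * (2 * R)) atTop (𝓝 (F v)) := by
    have hzero : Tendsto (fun n : ℕ => c / 2 ^ n) atTop (𝓝 0) :=
      tendsto_const_nhds.div_atTop (tendsto_pow_atTop_atTop_of_one_lt one_lt_two)
    simpa using tendsto_const_nhds.sub (hzero.abs.mul_const (2 * R))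
  exact le_of_tendsto' hlim fun n => (hlower _).trans (hpow n)

/-- The finite sequence `φ` is unconditional under changes of signs, with constant `C`. -/
def IsSignUnconditional {ι : Type*} [Fintype ι] (φ : ι → Y) (C : ℝ) : Prop :=
  ∀ δ δ' : ι → Bool, ‖rademacherSum φ δ‖ ≤ C * ‖rademacherSum φ δ'‖

lemma boolSign_eq_or_eq_neg (b b' : Bool) :
    boolSign b = boolSign b' ∨ boolSign b = -boolSign b' := by
  cases b <;> cases b' <;> simp [boolSign]

lemma IsSuppressionUltrafilter.exists_isSignUnconditional (hV : IsSuppressionUltrafilter V R)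
    (h1 : ∀ᶠ y in (V : Filter Y), 1 ≤ ‖y‖) (m : ℕ) :
    ∃ φ : Fin m → Y, (∀ l, 1 ≤ ‖φ l‖ ∧ ‖φ l‖ ≤ R) ∧ IsSignUnconditional φ 3 := by
  obtain ⟨φ, hφ, hclose⟩ := exists_abs_norm_sub_iteratedLimNorm_le hV.eventually_norm_le
    (h1.and hV.eventually_norm_le) (η := 1 / (4 * (m + 1))) (by positivity)
    (fun (δ : Fin m → Bool) l => boolSign (δ l)) fun _ => 0
  refine ⟨φ, hφ, fun δ δ' => ?_⟩
  cases m with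
  | zero => simp [rademacherSum]
  | succ k =>
    have herror (δ : Fin (k + 1) → Bool) :
        |‖rademacherSum φ δ‖ - iteratedLimNorm V (k + 1) (fun l => boolSign (δ l)) 0| ≤ 1 / 4 := by
      have hle : ((k + 1 : ℕ) : ℝ) * (1 / (4 * ((k + 1 : ℕ) + 1))) ≤ 1 / 4 := by
        rw [mul_one_div, div_le_div_iff₀ (by positivity) (by norm_num)]
        linarith
      simpa [rademacherSum] using (hclose δ).trans hle
    have hsigns := hV.iteratedLimNorm_le_two_mul fun l => boolSign_eq_or_eq_neg (δ l) (δ' l)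
    have hone := hV.abs_le_iteratedLimNorm h1 fun l => boolSign (δ' l)
    rw [abs_boolSign] at hone
    linarith [abs_le.1 (herror δ), abs_le.1 (herror δ')]

theorem exists_isSignUnconditional (hY : ¬ FiniteDimensional ℝ Y) :
    ∃ R : ℝ, 0 < R ∧ ∀ m : ℕ, ∃ φ : Fin m → Y,
      (∀ l, 1 ≤ ‖φ l‖ ∧ ‖φ l‖ ≤ R) ∧ IsSignUnconditional φ 3 := by
  obtain ⟨R, ψ, hR, hψ, hsep⟩ := exists_seq_norm_le_one_le_norm_sub (𝕜 := ℝ) (E := Y) hY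
  exact ⟨2 * R, by linarith, fun m => (isSuppressionUltrafilter_differenceUltrafilter hψ)
    |>.exists_isSignUnconditional (eventually_one_le_norm_differenceUltrafilter hsep) m⟩

lemma not_finiteDimensional_strongDual (hY : ¬ FiniteDimensional ℝ Y) :
    ¬ FiniteDimensional ℝ (StrongDual ℝ Y) := fun _ =>
  hY <| Module.Finite.of_injective (NormedSpace.inclusionInDoubleDualLi ℝ (E := Y)).toLinearMap
    (NormedSpace.inclusionInDoubleDualLi ℝ (E := Y)).injective

end Spreading

/-! ### Riesz products -/

section Rademacher

variable {ι E F : Type*} [Fintype ι] [DecidableEq ι]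

lemma sum_boolSign_mul_boolSign (k l : ι) :
    ∑ ω : ι → Bool, boolSign (ω k) * boolSign (ω l) =
      if k = l then 2 ^ Fintype.card ι else 0 := by
  simpa [walsh] using sum_walsh_mul_walsh ({k} : Finset ι) {l}

variable [NormedAddCommGroup E] [NormedSpace ℝ E] [NormedAddCommGroup F] [NormedSpace ℝ F]

lemma rademacherCoeff_rademacherSum (x : ι → E) : rademacherCoeff (rademacherSum x) = x := by
  ext i
  simp only [rademacherCoeff, rademacherSum, Finset.smul_sum, smul_smul]
  rw [Finset.sum_comm]
  simp [← Finset.sum_smul, ← Finset.mul_sum, sum_boolSign_mul_boolSign]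

lemma sum_apply_rademacherSum_apply (B : E →ₗ[ℝ] F →ₗ[ℝ] ℝ) (x : ι → E) (G : (ι → Bool) → F) :
    ∑ ω, B (rademacherSum x ω) (G ω) = 2 ^ Fintype.card ι * ∑ i, B (x i) (rademacherCoeff G i) := by
  simp only [rademacherSum, rademacherCoeff, map_sum, map_smul, LinearMap.sum_apply,
    LinearMap.smul_apply, smul_eq_mul, Finset.mul_sum]
  rw [Finset.sum_comm]
  refine Finset.sum_congr rfl fun i _ => Finset.sum_congr rfl fun ω _ => ?_
  field_simp

lemma sum_apply_rademacherSum_rademacherSum (B : E →ₗ[ℝ] F →ₗ[ℝ] ℝ) (x : ι → E) (y : ι → F) :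
    ∑ ω, B (rademacherSum x ω) (rademacherSum y ω) = 2 ^ Fintype.card ι * ∑ i, B (x i) (y i) := by
  rw [sum_apply_rademacherSum_apply, rademacherCoeff_rademacherSum]

lemma sum_rademacherCoeff_sq_le (g : (ι → Bool) → ℝ) :
    2 ^ Fintype.card ι * ∑ i, rademacherCoeff g i ^ 2 ≤ ∑ ω, g ω ^ 2 := by
  have hcross := sum_apply_rademacherSum_apply (.mul ℝ ℝ) (rademacherCoeff g) g
  have hself := sum_apply_rademacherSum_rademacherSum (.mul ℝ ℝ) (rademacherCoeff g)
    (rademacherCoeff g)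
  have hnonneg : 0 ≤ ∑ ω, (rademacherSum (rademacherCoeff g) ω - g ω) ^ 2 :=
    Finset.sum_nonneg fun ω _ => sq_nonneg _
  simp only [LinearMap.mul_apply', ← sq] at hcross hself
  simp only [sub_sq, Finset.sum_add_distrib, Finset.sum_sub_distrib, mul_assoc,
    ← Finset.mul_sum] at hnonneg
  linarith

end Rademacher

section RieszProduct

lemma norm_prod_sub_prod_le {ι R : Type*} [NormedCommRing R] [NormOneClass R] (s : Finset ι)
    {a b : ι → R} {c : ι → ℝ} (hc : ∀ i, 1 ≤ c i) (ha : ∀ i, ‖a i‖ ≤ c i)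
    (hb : ∀ i, ‖b i‖ ≤ c i) :
    ‖∏ i ∈ s, a i - ∏ i ∈ s, b i‖ ≤ (∏ i ∈ s, c i) * ∑ i ∈ s, ‖a i - b i‖ := by
  induction s using Finset.cons_induction with
  | empty => simp
  | cons i s hi ih =>
    simp only [Finset.prod_cons, Finset.sum_cons]
    have hprod : ‖∏ j ∈ s, b j‖ ≤ ∏ j ∈ s, c j :=
      (Finset.norm_prod_le s b).trans
        (Finset.prod_le_prod (fun _ _ => norm_nonneg _) fun j _ => hb j)
    have hc0 : 0 ≤ ∏ j ∈ s, c j := (norm_nonneg _).trans hprod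
    calc ‖a i * ∏ j ∈ s, a j - b i * ∏ j ∈ s, b j‖
        = ‖a i * (∏ j ∈ s, a j - ∏ j ∈ s, b j) + (a i - b i) * ∏ j ∈ s, b j‖ := by
          congr 1; ring
      _ ≤ ‖a i‖ * ‖∏ j ∈ s, a j - ∏ j ∈ s, b j‖ + ‖a i - b i‖ * ‖∏ j ∈ s, b j‖ :=
          (norm_add_le _ _).trans (add_le_add (norm_mul_le _ _) (norm_mul_le _ _))
      _ ≤ c i * ((∏ j ∈ s, c j) * ∑ j ∈ s, ‖a j - b j‖) +
            ‖a i - b i‖ * (c i * ∏ j ∈ s, c j) := by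
          have hci : 0 ≤ c i := zero_le_one.trans (hc i)
          gcongr
          · exact ha i
          · exact hprod.trans (le_mul_of_one_le_left hc0 (hc i))
      _ = (c i * ∏ j ∈ s, c j) * (‖a i - b i‖ + ∑ j ∈ s, ‖a j - b j‖) := by ring

lemma norm_one_add_mul_I_le (s : ℝ) : ‖1 + s * Complex.I‖ ≤ Real.exp (s ^ 2 / 2) := by
  have h := Complex.norm_add_mul_I 1 s
  rw [Complex.ofReal_one, one_pow] at h
  rw [h, Real.exp_half]
  exact Real.sqrt_le_sqrt (by linarith [Real.add_one_le_exp (s ^ 2)])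

variable {ι : Type*} [Fintype ι]

/-- The Riesz product `∏ l, (1 + i ε l u l)` with imaginary coefficients on the discrete cube. For
`∑ l, u l ^ 2 ≤ 1` its modulus is bounded independently of the number of factors. -/
def rieszProduct (u : ι → ℝ) (ε : ι → Bool) : ℂ :=
  ∏ l, (1 + (boolSign (ε l) * u l : ℝ) * Complex.I)

lemma norm_rieszProduct_sub_le {u v : ι → ℝ} (hu : ∑ l, u l ^ 2 ≤ 1) (hv : ∑ l, v l ^ 2 ≤ 1)
    (ε : ι → Bool) : ‖rieszProduct u ε - rieszProduct v ε‖ ≤ 3 * ∑ l, |u l - v l| := by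
  have hsq (w : ι → ℝ) (l : ι) : (boolSign (ε l) * w l) ^ 2 = w l ^ 2 := by
    rw [mul_pow, sq (boolSign _), boolSign_mul_self, one_mul]
  have hfactor (w : ι → ℝ) (l : ι) (hw : w l ^ 2 ≤ u l ^ 2 + v l ^ 2) :
      ‖1 + (boolSign (ε l) * w l : ℝ) * Complex.I‖ ≤ Real.exp ((u l ^ 2 + v l ^ 2) / 2) :=
    (norm_one_add_mul_I_le _).trans (Real.exp_le_exp.2 (by rw [hsq]; linarith))
  have hdiff (l : ι) : ‖(1 + (boolSign (ε l) * u l : ℝ) * Complex.I) -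
      (1 + (boolSign (ε l) * v l : ℝ) * Complex.I)‖ = |u l - v l| := by
    rw [add_sub_add_left_eq_sub, ← sub_mul, ← Complex.ofReal_sub, ← mul_sub, norm_mul,
      Complex.norm_I, mul_one, Complex.norm_real, Real.norm_eq_abs, abs_mul, abs_boolSign, one_mul]
  have hexp : ∏ l, Real.exp ((u l ^ 2 + v l ^ 2) / 2) ≤ 3 := by
    rw [← Real.exp_sum, ← Finset.sum_div, Finset.sum_add_distrib]
    exact (Real.exp_le_exp.2 (by linarith)).trans Real.exp_one_lt_three.le
  have hprod := norm_prod_sub_prod_le Finset.univ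
    (fun l => Real.one_le_exp (by positivity : 0 ≤ (u l ^ 2 + v l ^ 2) / 2))
    (fun l => hfactor u l (by linarith [sq_nonneg (v l)]))
    (fun l => hfactor v l (by linarith [sq_nonneg (u l)]))
  simp only [hdiff] at hprod
  exact hprod.trans
    (mul_le_mul_of_nonneg_right hexp (Finset.sum_nonneg fun l _ => abs_nonneg _))

variable [DecidableEq ι]

lemma sum_walsh_mul_rieszProduct (A : Finset ι) (u : ι → ℝ) :
    ∑ ε, (walsh A ε : ℂ) * rieszProduct u ε =
      2 ^ Fintype.card ι * ∏ l ∈ A, (u l * Complex.I) := by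
  have hexpand (ε : ι → Bool) : rieszProduct u ε =
      ∑ B : Finset ι, (walsh B ε : ℂ) * ∏ l ∈ B, (u l * Complex.I) := by
    simp only [rieszProduct, Finset.prod_one_add, Finset.powerset_univ, walsh, Complex.ofReal_prod,
      ← Finset.prod_mul_distrib, Complex.ofReal_mul, mul_assoc]
  have horth (B : Finset ι) : ∑ ε, (walsh A ε : ℂ) * walsh B ε =
      if A = B then 2 ^ Fintype.card ι else 0 := by
    simp only [← Complex.ofReal_mul, ← Complex.ofReal_sum, sum_walsh_mul_walsh]
    split_ifs <;> simp
  simp only [hexpand, Finset.mul_sum, ← mul_assoc]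
  rw [Finset.sum_comm]
  simp [← Finset.sum_mul, horth]

lemma sum_boolSign_mul_boolSign_mul_re_rieszProduct (u : ι → ℝ) {k l : ι} (hkl : k ≠ l) :
    ∑ ε : ι → Bool, boolSign (ε k) * boolSign (ε l) * (rieszProduct u ε).re =
      -(2 ^ Fintype.card ι * (u k * u l)) := by
  have h := congrArg Complex.re (sum_walsh_mul_rieszProduct {k, l} u)
  have hI : (2 : ℂ) ^ Fintype.card ι * ((u k * Complex.I) * (u l * Complex.I)) =
      (-(2 ^ Fintype.card ι * (u k * u l)) : ℝ) := by
    push_cast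
    linear_combination (2 : ℂ) ^ Fintype.card ι * u k * u l * Complex.I_sq
  rwa [Finset.prod_pair hkl, hI, Complex.ofReal_re, Complex.re_sum, ← Finset.sum_congr rfl
    fun ε _ => by rw [walsh, Finset.prod_pair hkl, Complex.re_ofReal_mul]] at h

end RieszProduct

/-! ### The trace inequality -/

section DualSequence

variable {X : Type*} [NormedAddCommGroup X] [NormedSpace ℝ X] {ι : Type*} [Fintype ι]
  {φ : ι → StrongDual ℝ X} {a A C R : ℝ}

lemma rademacherSum_apply (φ : ι → StrongDual ℝ X) (δ : ι → Bool) (x : X) :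
    rademacherSum φ δ x = ∑ l, boolSign (δ l) * φ l x := by
  simp [rademacherSum]

lemma sum_abs_apply_le (hA : ∀ δ, ‖rademacherSum φ δ‖ ≤ A) (x : X) :
    ∑ l, |φ l x| ≤ A * ‖x‖ := by
  have habs (l : ι) : boolSign (decide (0 ≤ φ l x)) * φ l x = |φ l x| := by
    rcases le_or_gt 0 (φ l x) with h | h
    · simp [boolSign, h, abs_of_nonneg h]
    · simp [boolSign, h.not_ge, abs_of_neg h]
  have hle := (rademacherSum φ fun l => decide (0 ≤ φ l x)).le_of_opNorm_le (hA _) x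
  simp only [rademacherSum_apply, habs] at hle
  exact (le_abs_self _).trans hle

lemma sum_apply_sq_le (hR0 : 0 ≤ R) (hR : ∀ l, ‖φ l‖ ≤ R) (hA : ∀ δ, ‖rademacherSum φ δ‖ ≤ A)
    (x : X) : ∑ l, φ l x ^ 2 ≤ R * A * ‖x‖ ^ 2 :=
  calc ∑ l, φ l x ^ 2 ≤ ∑ l, R * ‖x‖ * |φ l x| := by
        gcongr with l
        rw [← sq_abs, sq]
        exact mul_le_mul_of_nonneg_right ((φ l).le_of_opNorm_le (hR l) x) (abs_nonneg _)
    _ = R * ‖x‖ * ∑ l, |φ l x| := (Finset.mul_sum _ _ _).symm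
    _ ≤ R * ‖x‖ * (A * ‖x‖) := by
        gcongr
        exact sum_abs_apply_le hA x
    _ = R * A * ‖x‖ ^ 2 := by ring

lemma exists_norm_le_one_half_norm_le_apply (f : StrongDual ℝ X) :
    ∃ x : X, ‖x‖ ≤ 1 ∧ ‖f‖ / 2 ≤ f x := by
  rcases (norm_nonneg f).eq_or_lt with h | h
  · exact ⟨0, by simp, by simp [← h]⟩
  · obtain ⟨x, hx, hfx⟩ := f.exists_lt_apply_of_lt_opNorm (half_lt_self h)
    rcases lt_abs.1 hfx with h | h
    · exact ⟨x, hx.le, h.le⟩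
    · exact ⟨-x, by rw [norm_neg]; exact hx.le, by rw [map_neg]; exact h.le⟩

variable [DecidableEq ι]

lemma exists_le_trace_and_sum_sq_le_one (hφ : ∀ x, ∑ l, φ l x ^ 2 ≤ ‖x‖ ^ 2)
    (ha : ∀ δ, a ≤ ‖rademacherSum φ δ‖) (hC0 : 0 ≤ C)
    (hC : ∀ F : (ι → Bool) → X,
      ∑ ω, ‖rademacherSum (rademacherCoeff F) ω‖ ^ 2 ≤ C * ∑ ω, ‖F ω‖ ^ 2) :
    ∃ z : ι → X, a / 2 ≤ ∑ k, φ k (z k) ∧ ∑ k, ∑ l, φ k (z l) ^ 2 ≤ 1 ∧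
      ∑ ε, ‖rademacherSum z ε‖ ^ 2 ≤ C * 2 ^ Fintype.card ι := by
  choose x hx hφx using fun δ => exists_norm_le_one_half_norm_le_apply (rademacherSum φ δ)
  have hxsq (δ : ι → Bool) : ‖x δ‖ ^ 2 ≤ 1 := pow_le_one₀ (norm_nonneg _) (hx δ)
  have h2 : (0 : ℝ) < 2 ^ Fintype.card ι := by positivity
  refine ⟨rademacherCoeff x, ?_, ?_, ?_⟩
  · have htrace := sum_apply_rademacherSum_apply
      (ContinuousLinearMap.coeLM ℝ : StrongDual ℝ X →ₗ[ℝ] X →ₗ[ℝ] ℝ) φ x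
    have hsum : ∑ _δ : ι → Bool, a / 2 ≤ ∑ δ, rademacherSum φ δ (x δ) :=
      Finset.sum_le_sum fun δ _ => by linarith [ha δ, hφx δ]
    simp only [ContinuousLinearMap.coeLM_apply, ContinuousLinearMap.coe_coe] at htrace
    rw [htrace] at hsum
    exact le_of_mul_le_mul_left (by simpa using hsum) h2
  · have hcoeff (k l : ι) :
        φ k (rademacherCoeff x l) = rademacherCoeff (fun δ => φ k (x δ)) l := by
      simp [rademacherCoeff]
    refine le_of_mul_le_mul_left ?_ h2
    calc 2 ^ Fintype.card ι * ∑ k, ∑ l, φ k (rademacherCoeff x l) ^ 2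
        ≤ ∑ k, ∑ δ, φ k (x δ) ^ 2 := by
          simp only [hcoeff]
          rw [Finset.mul_sum]
          exact Finset.sum_le_sum fun k _ => sum_rademacherCoeff_sq_le _
      _ = ∑ δ, ∑ k, φ k (x δ) ^ 2 := Finset.sum_comm
      _ ≤ ∑ _δ : ι → Bool, (1 : ℝ) := Finset.sum_le_sum fun δ _ => (hφ _).trans (hxsq δ)
      _ = 2 ^ Fintype.card ι * 1 := by simp
  · refine (hC x).trans (mul_le_mul_of_nonneg_left ?_ hC0)
    calc ∑ ω, ‖x ω‖ ^ 2 ≤ ∑ _ω : ι → Bool, (1 : ℝ) := Finset.sum_le_sum fun ω _ => hxsq ω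
      _ = 2 ^ Fintype.card ι := by simp

end DualSequence

section QuadraticForm

open QuadraticMap (associated associated_apply associated_eq_self_apply linMulLin linMulLin_apply)

variable {ι : Type*} [Fintype ι]

lemma sum_sum_eq_sum_diag_add_sum_offDiag (f : ι → ι → ℝ) :
    ∑ k, ∑ l, f k l = ∑ k, f k k + ∑ q ∈ Finset.univ.offDiag, f q.1 q.2 := by
  classical
  rw [← Finset.sum_product', ← Finset.diag_union_offDiag,
    Finset.sum_union (Finset.disjoint_diag_offDiag _), Finset.sum_diag]

lemma sq_trace_sub_three_mul_sum_sq_le (Z : ι → ι → ℝ) :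
    (∑ k, Z k k) ^ 2 - 3 * ∑ k, ∑ l, Z k l ^ 2 ≤
      ∑ q ∈ Finset.univ.offDiag, (Z q.1 q.1 * Z q.2 q.2 + Z q.2 q.1 * Z q.1 q.2) := by
  have hsplit := sum_sum_eq_sum_diag_add_sum_offDiag fun k l => Z k k * Z l l + Z l k * Z k l
  have hdiag : ∑ k, Z k k ^ 2 ≤ ∑ k, ∑ l, Z k l ^ 2 := Finset.sum_le_sum fun k _ =>
    Finset.single_le_sum (f := fun l => Z k l ^ 2) (fun _ _ => sq_nonneg _) (Finset.mem_univ k)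
  have hcross : 0 ≤ ∑ k, ∑ l, (Z l k + Z k l) ^ 2 :=
    Finset.sum_nonneg fun k _ => Finset.sum_nonneg fun l _ => sq_nonneg _
  have htranspose : ∑ k, ∑ l, Z l k ^ 2 = ∑ k, ∑ l, Z k l ^ 2 := Finset.sum_comm
  simp only [add_sq, Finset.sum_add_distrib, htranspose, mul_assoc, ← Finset.mul_sum] at hcross
  simp only [Finset.sum_add_distrib, ← sq, ← Finset.sum_mul_sum] at hsplit ⊢
  linarith

variable [DecidableEq ι] {X : Type*} [NormedAddCommGroup X] [NormedSpace ℝ X]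

lemma quadraticForm_rademacherSum_sub_average (q : QuadraticForm ℝ X) (z : ι → X)
    (ε : ι → Bool) :
    q (rademacherSum z ε) - (2 ^ Fintype.card ι)⁻¹ * ∑ η, q (rademacherSum z η) =
      ∑ r ∈ Finset.univ.offDiag,
        boolSign (ε r.1) * boolSign (ε r.2) * associated (R := ℝ) q (z r.1) (z r.2) := by
  have hassoc (x : X) : associated (R := ℝ) q x x = q x := associated_eq_self_apply ℝ q x
  have hexpand : q (rademacherSum z ε) = ∑ k, ∑ l,
      boolSign (ε k) * boolSign (ε l) * associated (R := ℝ) q (z k) (z l) := by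
    rw [← hassoc]
    simp only [rademacherSum, map_sum, map_smul, LinearMap.sum_apply, LinearMap.smul_apply,
      smul_eq_mul, Finset.mul_sum]
    rw [Finset.sum_comm]
    exact Finset.sum_congr rfl fun k _ => Finset.sum_congr rfl fun l _ => by ring
  have haverage := sum_apply_rademacherSum_rademacherSum (associated (R := ℝ) q) z z
  simp only [hassoc] at haverage
  rw [haverage, inv_mul_cancel_left₀ (by positivity), hexpand, sum_sum_eq_sum_diag_add_sum_offDiag]
  simp [boolSign_mul_self, hassoc]

lemma abs_sum_offDiag_associated_le {q : (ι → Bool) → QuadraticForm ℝ X} {Λ : ℝ}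
    (hq : ∀ ε x, |q ε x| ≤ Λ * ‖x‖ ^ 2) (z : ι → X) :
    |∑ r ∈ Finset.univ.offDiag, ∑ ε,
        boolSign (ε r.1) * boolSign (ε r.2) * associated (R := ℝ) (q ε) (z r.1) (z r.2)| ≤
      2 * (Λ * ∑ ε, ‖rademacherSum z ε‖ ^ 2) := by
  have hsum (ε : ι → Bool) :
      ∑ η, |q ε (rademacherSum z η)| ≤ Λ * ∑ η, ‖rademacherSum z η‖ ^ 2 := by
    rw [Finset.mul_sum]
    exact Finset.sum_le_sum fun η _ => hq ε _
  rw [Finset.sum_comm]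
  simp only [← quadraticForm_rademacherSum_sub_average]
  calc |∑ ε, (q ε (rademacherSum z ε) - (2 ^ Fintype.card ι)⁻¹ * ∑ η, q ε (rademacherSum z η))|
      ≤ ∑ ε, (Λ * ‖rademacherSum z ε‖ ^ 2 +
          (2 ^ Fintype.card ι)⁻¹ * (Λ * ∑ η, ‖rademacherSum z η‖ ^ 2)) := by
        refine (Finset.abs_sum_le_sum_abs _ _).trans (Finset.sum_le_sum fun ε _ => ?_)
        refine (abs_sub _ _).trans (add_le_add (hq ε _) ?_)
        rw [abs_mul, abs_of_pos (by positivity)]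
        gcongr
        exact (Finset.abs_sum_le_sum_abs _ _).trans (hsum ε)
    _ = 2 * (Λ * ∑ ε, ‖rademacherSum z ε‖ ^ 2) := by
        rw [Finset.sum_add_distrib, ← Finset.mul_sum, Finset.sum_const, Finset.card_univ]
        rw [Fintype.card_fun, Fintype.card_bool, nsmul_eq_mul, Nat.cast_pow, Nat.cast_ofNat,
          mul_inv_cancel_left₀ (by positivity), two_mul]

lemma sum_associated_eq_of_sum_smul_eq {α : Type*} [Fintype α] {c : α → ℝ}
    {q : α → QuadraticForm ℝ X} {b : ℝ} {f g : X →ₗ[ℝ] ℝ}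
    (h : ∑ a, c a • q a = b • linMulLin f g) (x y : X) :
    ∑ a, c a * associated (R := ℝ) (q a) x y = b / 2 * (f x * g y + g x * f y) := by
  have hxy := congrArg (fun q => associated (R := ℝ) q x y) h
  simp only [map_sum, map_smul, LinearMap.sum_apply, LinearMap.smul_apply, smul_eq_mul] at hxy
  rw [hxy, associated_apply]
  simp only [linMulLin_apply, map_add, Module.End.smul_def,
    QuadraticMap.half_moduleEnd_apply_eq_half_smul, invOf_eq_inv, smul_eq_mul]
  ring

variable {φ : ι → StrongDual ℝ X} {a C Λ : ℝ}

lemma sq_half_le_three_add (hφ : ∀ x, ∑ l, φ l x ^ 2 ≤ ‖x‖ ^ 2) (ha0 : 0 ≤ a)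
    (ha : ∀ δ, a ≤ ‖rademacherSum φ δ‖) (hC0 : 0 ≤ C)
    (hC : ∀ F : (ι → Bool) → X,
      ∑ ω, ‖rademacherSum (rademacherCoeff F) ω‖ ^ 2 ≤ C * ∑ ω, ‖F ω‖ ^ 2)
    {q : (ι → Bool) → QuadraticForm ℝ X} (hΛ : 0 ≤ Λ) (hq : ∀ ε x, |q ε x| ≤ Λ * ‖x‖ ^ 2)
    (hcoeff : ∀ k l, k ≠ l → ∑ ε, (boolSign (ε k) * boolSign (ε l)) • q ε =
      (-2 ^ Fintype.card ι : ℝ) • linMulLin (φ k : X →ₗ[ℝ] ℝ) (φ l : X →ₗ[ℝ] ℝ)) :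
    (a / 2) ^ 2 ≤ 3 + 4 * Λ * C := by
  obtain ⟨z, htrace, hHS, hz⟩ := exists_le_trace_and_sum_sq_le_one hφ ha hC0 hC
  set W := ∑ r ∈ Finset.univ.offDiag,
    (φ r.1 (z r.1) * φ r.2 (z r.2) + φ r.2 (z r.1) * φ r.1 (z r.2)) with hW
  have hlower : (a / 2) ^ 2 - 3 ≤ W := by
    have hsq : (a / 2) ^ 2 ≤ (∑ k, φ k (z k)) ^ 2 := by gcongr
    linarith [sq_trace_sub_three_mul_sum_sq_le fun k l => φ k (z l)]
  have hoffDiag : ∑ r ∈ Finset.univ.offDiag, ∑ ε,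
      boolSign (ε r.1) * boolSign (ε r.2) * associated (R := ℝ) (q ε) (z r.1) (z r.2) =
        -2 ^ Fintype.card ι / 2 * W := by
    rw [hW, Finset.mul_sum]
    refine Finset.sum_congr rfl fun r hr => ?_
    exact sum_associated_eq_of_sum_smul_eq (hcoeff _ _ (Finset.mem_offDiag.1 hr).2.2) _ _
  have hupper := (neg_le_abs _).trans (abs_sum_offDiag_associated_le hq z)
  rw [hoffDiag] at hupper
  have hΛz := mul_le_mul_of_nonneg_left hz hΛ
  have hWle : W ≤ 4 * Λ * C :=
    le_of_mul_le_mul_left (by linarith) (by positivity : (0 : ℝ) < 2 ^ Fintype.card ι)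
  linarith

end QuadraticForm

/-! ### Projections onto the quadratic forms -/

section UnitBall

variable {X : Type*} [NormedAddCommGroup X] [NormedSpace ℝ X]

lemma exists_quadraticForm_of_mem_PhomB {f : ↥(UBall X) → ℝ} (hf : f ∈ PhomB 2 X) :
    ∃ q : QuadraticForm ℝ X, ∀ x : ↥(UBall X), f x = q x := by
  obtain ⟨M, hM⟩ := hf
  let B : X →ₗ[ℝ] X →ₗ[ℝ] ℝ := ContinuousLinearMap.coeLM ℝ ∘ₗ
    (continuousMultilinearCurryFin1 ℝ X ℝ).toLinearEquiv.toLinearMap ∘ₗ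
      M.curryLeft.toLinearMap
  refine ⟨LinearMap.BilinMap.toQuadraticMap B, fun x => ?_⟩
  rw [hM, LinearMap.BilinMap.toQuadraticMap_apply]
  change M _ = M _
  congr 1
  ext i
  fin_cases i <;> rfl

lemma const_mul_mul_mem_PhomB (c : ℝ) (f g : StrongDual ℝ X) :
    (fun x : ↥(UBall X) => c * (f x * g x)) ∈ PhomB 2 X := by
  refine ⟨c • (ContinuousMultilinearMap.mkPiAlgebra ℝ (Fin 2) ℝ).compContinuousLinearMap
    fun i => (![f, g] i : X →L[ℝ] ℝ), fun x => ?_⟩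
  simp

lemma quadraticForm_eq_sq_norm_mul (q : QuadraticForm ℝ X) (x : X) :
    q x = ‖x‖ ^ 2 * q (‖x‖⁻¹ • x) := by
  rcases eq_or_ne x 0 with rfl | hx
  · simp
  · rw [q.map_smul, smul_eq_mul, ← mul_assoc, ← sq, ← mul_pow,
      mul_inv_cancel₀ (norm_ne_zero_iff.2 hx), one_pow, one_mul]

lemma inv_norm_smul_mem_UBall (x : X) : ‖x‖⁻¹ • x ∈ UBall X :=
  inv_norm_smul_mem_unitClosedBall x

lemma abs_quadraticForm_le {q : QuadraticForm ℝ X} {c : ℝ} (h : ∀ u ∈ UBall X, |q u| ≤ c)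
    (x : X) : |q x| ≤ c * ‖x‖ ^ 2 := by
  rw [quadraticForm_eq_sq_norm_mul, abs_mul, abs_of_nonneg (sq_nonneg _), mul_comm]
  exact mul_le_mul_of_nonneg_right (h _ (inv_norm_smul_mem_UBall x)) (sq_nonneg _)

lemma quadraticForm_ext_of_eqOn_UBall {q q' : QuadraticForm ℝ X}
    (h : EqOn q q' (UBall X)) : q = q' := by
  ext x
  rw [quadraticForm_eq_sq_norm_mul, h (inv_norm_smul_mem_UBall x), ← quadraticForm_eq_sq_norm_mul]

/-- `Q` restricts to a projection of norm at most `K` from `Lip₀(B_X)` onto `P(ᵏX)`. -/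
structure IsProjectionOntoPhomB (k : ℕ) (Q : (↥(UBall X) → ℝ) →ₗ[ℝ] (↥(UBall X) → ℝ))
    (K : NNReal) : Prop where
  mem_PhomB : ∀ f ∈ Lip0B X, Q f ∈ PhomB k X
  apply_eq_self : ∀ f ∈ PhomB k X, Q f = f
  lipschitzWith : ∀ f ∈ Lip0B X, ∀ L : NNReal, LipschitzWith L f → LipschitzWith (K * L) (Q f)

lemma IsProjectionOntoPhomB.exists_quadraticForm
    {Q : (↥(UBall X) → ℝ) →ₗ[ℝ] (↥(UBall X) → ℝ)} {K : NNReal}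
    (hQ : IsProjectionOntoPhomB 2 Q K) {f : ↥(UBall X) → ℝ} {L : NNReal}
    (hf : LipschitzWith L f) (hf0 : f (zeroB X) = 0) :
    ∃ q : QuadraticForm ℝ X, (∀ x : ↥(UBall X), Q f x = q x) ∧ ∀ x, |q x| ≤ K * L * ‖x‖ ^ 2 := by
  have hmem : f ∈ Lip0B X := ⟨⟨L, hf⟩, hf0⟩
  obtain ⟨q, hq⟩ := exists_quadraticForm_of_mem_PhomB (hQ.mem_PhomB f hmem)
  refine ⟨q, hq, abs_quadraticForm_le fun u hu => ?_⟩
  have hzero : Q f (zeroB X) = 0 := by rw [hq, zeroB, q.map_zero]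
  have hdist := (hQ.lipschitzWith f hmem L hf).dist_le_mul ⟨u, hu⟩ (zeroB X)
  rw [hzero, hq, Real.dist_0_eq_abs] at hdist
  refine hdist.trans (mul_le_of_le_one_right (K * L).2 ?_)
  exact hu

variable {ι : Type*} [Fintype ι] {φ : ι → StrongDual ℝ X} {A : NNReal}

/-- The real part of the Riesz product of the functionals `φ l`, as a function on the unit ball
vanishing at `0`. -/
def rieszTestFunction (φ : ι → StrongDual ℝ X) (ε : ι → Bool) (x : ↥(UBall X)) : ℝ :=
  (rieszProduct (fun l => φ l x) ε).re - 1

lemma rieszTestFunction_zeroB (φ : ι → StrongDual ℝ X) (ε : ι → Bool) :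
    rieszTestFunction φ ε (zeroB X) = 0 := by
  simp [rieszTestFunction, rieszProduct, zeroB]

lemma lipschitzWith_rieszTestFunction (hsq : ∀ x, ∑ l, φ l x ^ 2 ≤ ‖x‖ ^ 2)
    (habs : ∀ x, ∑ l, |φ l x| ≤ A * ‖x‖) (ε : ι → Bool) :
    LipschitzWith (3 * A) (rieszTestFunction φ ε) := by
  have hsq1 (x : ↥(UBall X)) : ∑ l, φ l x ^ 2 ≤ 1 :=
    (hsq x).trans (pow_le_one₀ (norm_nonneg _) (mem_closedBall_zero_iff.1 x.2))
  refine LipschitzWith.of_dist_le_mul fun x y => ?_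
  calc dist (rieszTestFunction φ ε x) (rieszTestFunction φ ε y)
      = |(rieszProduct (fun l => φ l x) ε - rieszProduct (fun l => φ l y) ε).re| := by
        rw [Real.dist_eq, rieszTestFunction, rieszTestFunction, sub_sub_sub_cancel_right,
          Complex.sub_re]
    _ ≤ 3 * ∑ l, |φ l x - φ l y| :=
        (Complex.abs_re_le_norm _).trans (norm_rieszProduct_sub_le (hsq1 x) (hsq1 y) ε)
    _ ≤ 3 * (A * ‖(x : X) - y‖) := by
        simp only [← map_sub]
        gcongr
        exact habs _
    _ = ↑(3 * A) * dist x y := by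
        rw [Subtype.dist_eq, dist_eq_norm, NNReal.coe_mul, NNReal.coe_ofNat, mul_assoc]

variable [DecidableEq ι]

lemma sum_smul_rieszTestFunction (φ : ι → StrongDual ℝ X) {k l : ι} (hkl : k ≠ l) :
    ∑ ε, (boolSign (ε k) * boolSign (ε l)) • rieszTestFunction φ ε =
      fun x : ↥(UBall X) => -2 ^ Fintype.card ι * (φ k x * φ l x) := by
  ext x
  simp only [Finset.sum_apply, Pi.smul_apply, smul_eq_mul, rieszTestFunction, mul_sub, mul_one,
    Finset.sum_sub_distrib]
  rw [sum_boolSign_mul_boolSign_mul_re_rieszProduct _ hkl, sum_boolSign_mul_boolSign,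
    if_neg hkl, sub_zero, neg_mul]

variable {Q : (↥(UBall X) → ℝ) →ₗ[ℝ] (↥(UBall X) → ℝ)} {K : NNReal}

lemma IsProjectionOntoPhomB.exists_quadraticForm_rieszTestFunction
    (hQ : IsProjectionOntoPhomB 2 Q K) (hsq : ∀ x, ∑ l, φ l x ^ 2 ≤ ‖x‖ ^ 2)
    (habs : ∀ x, ∑ l, |φ l x| ≤ A * ‖x‖) :
    ∃ q : (ι → Bool) → QuadraticForm ℝ X, (∀ ε x, |q ε x| ≤ K * (3 * A) * ‖x‖ ^ 2) ∧
      ∀ k l, k ≠ l → ∑ ε, (boolSign (ε k) * boolSign (ε l)) • q ε =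
        (-2 ^ Fintype.card ι : ℝ) •
          QuadraticMap.linMulLin (φ k : X →ₗ[ℝ] ℝ) (φ l : X →ₗ[ℝ] ℝ) := by
  choose q hq hbound using fun ε => hQ.exists_quadraticForm
    (lipschitzWith_rieszTestFunction hsq habs ε) (rieszTestFunction_zeroB φ ε)
  refine ⟨q, by simpa using hbound, fun k l hkl => quadraticForm_ext_of_eqOn_UBall fun u hu => ?_⟩
  have hfix := hQ.apply_eq_self _ (const_mul_mul_mem_PhomB (-2 ^ Fintype.card ι) (φ k) (φ l))
  rw [← sum_smul_rieszTestFunction φ hkl, map_sum, sum_smul_rieszTestFunction φ hkl] at hfix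
  simpa [hq] using congrFun hfix ⟨u, hu⟩

end UnitBall

section UnconditionalBound

variable {X : Type*} [NormedAddCommGroup X] [NormedSpace ℝ X]
  {Q : (↥(UBall X) → ℝ) →ₗ[ℝ] (↥(UBall X) → ℝ)} {K : NNReal} {ι : Type*} [Fintype ι]
  [DecidableEq ι] {φ : ι → StrongDual ℝ X} {C D : ℝ}

lemma IsProjectionOntoPhomB.sq_le_of_forall_div_le_norm_rademacherSum
    (hQ : IsProjectionOntoPhomB 2 Q K) (hC0 : 0 ≤ C)
    (hC : ∀ F : (ι → Bool) → X,
      ∑ ω, ‖rademacherSum (rademacherCoeff F) ω‖ ^ 2 ≤ C * ∑ ω, ‖F ω‖ ^ 2)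
    (hD : 0 < D) (hsq : ∀ x, ∑ l, φ l x ^ 2 ≤ ‖x‖ ^ 2) {A : ℝ} (hA0 : 0 ≤ A)
    (hA : ∀ δ, ‖rademacherSum φ δ‖ ≤ A) (hAD : ∀ δ, A / D ≤ ‖rademacherSum φ δ‖) :
    A ^ 2 ≤ 24 * D ^ 2 + (48 * D ^ 2 * K * C) ^ 2 := by
  lift A to NNReal using hA0
  obtain ⟨q, hq, hcoeff⟩ := hQ.exists_quadraticForm_rieszTestFunction hsq (sum_abs_apply_le hA)
  have hle := sq_half_le_three_add hsq (by positivity) hAD hC0 hC (by positivity) hq hcoeff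
  have hquad : (A : ℝ) ^ 2 ≤ 12 * D ^ 2 + 48 * D ^ 2 * K * C * A := by
    rw [div_div, div_pow, div_le_iff₀ (by positivity)] at hle
    linarith
  linarith [two_mul_le_add_sq (48 * D ^ 2 * K * C) (A : ℝ)]

/-- Normalising `φ` by the square root of `R * A`, where `A` is the largest norm of its signed
sums, makes the sum of the squares of the functionals at most the square of the norm. -/
lemma IsProjectionOntoPhomB.norm_rademacherSum_le (hQ : IsProjectionOntoPhomB 2 Q K)
    (hC0 : 0 ≤ C) (hC : ∀ F : (ι → Bool) → X,
      ∑ ω, ‖rademacherSum (rademacherCoeff F) ω‖ ^ 2 ≤ C * ∑ ω, ‖F ω‖ ^ 2)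
    (hD : 0 < D) (hφ : IsSignUnconditional φ D) {R : ℝ} (hR0 : 0 < R) (hR : ∀ l, ‖φ l‖ ≤ R)
    (δ : ι → Bool) :
    ‖rademacherSum φ δ‖ ≤ R * (24 * D ^ 2 + (48 * D ^ 2 * K * C) ^ 2) := by
  obtain ⟨δ₀, hmax⟩ := Finite.exists_max fun δ => ‖rademacherSum φ δ‖
  refine (hmax δ).trans ?_
  set A := ‖rademacherSum φ δ₀‖ with hA
  rcases (hA ▸ norm_nonneg _ : 0 ≤ A).eq_or_lt with h0 | hpos
  · rw [← h0]
    positivity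
  set t := (√(R * A))⁻¹ with ht
  have ht0 : 0 ≤ t := by positivity
  have ht2 : t ^ 2 * (R * A) = 1 := by
    rw [ht, inv_pow, Real.sq_sqrt (by positivity), inv_mul_cancel₀ (by positivity)]
  have hnorm (δ : ι → Bool) : ‖rademacherSum (t • φ) δ‖ = t * ‖rademacherSum φ δ‖ := by
    rw [rademacherSum_smul, norm_smul, Real.norm_of_nonneg ht0]
  have hbound : (t * A) ^ 2 ≤ 24 * D ^ 2 + (48 * D ^ 2 * K * C) ^ 2 := by
    refine hQ.sq_le_of_forall_div_le_norm_rademacherSum (φ := t • φ) hC0 hC hD (fun x => ?_)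
      (by positivity) (fun δ => ?_) fun δ => ?_
    · have hsum := mul_le_mul_of_nonneg_left (sum_apply_sq_le hR0.le hR hmax x) (sq_nonneg t)
      rw [← mul_assoc, ht2, one_mul, Finset.mul_sum] at hsum
      simpa [mul_pow] using hsum
    · rw [hnorm]
      exact mul_le_mul_of_nonneg_left (hmax δ) ht0
    · rw [hnorm, mul_div_assoc]
      exact mul_le_mul_of_nonneg_left ((div_le_iff₀' hD).2 (hφ δ₀ δ)) ht0
  calc A = R * (t * A) ^ 2 := by linear_combination -A * ht2
    _ ≤ _ := mul_le_mul_of_nonneg_left hbound hR0.le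

lemma HasRademacherType.half_le_of_norm_rademacherSum_le {p T A : ℝ}
    (h : HasRademacherType X p T) (hp : 0 < p) {m : ℕ} {φ : Fin m → StrongDual ℝ X}
    (hφ : ∀ l, 1 ≤ ‖φ l‖) (hA : ∀ δ, ‖rademacherSum φ δ‖ ≤ A) (hA0 : 0 ≤ A) :
    (m : ℝ) / 2 ≤ A * (|T| * (m : ℝ) ^ (1 / p)) := by
  choose y hy hφy using fun l => exists_norm_le_one_half_norm_le_apply (φ l)
  have hlower : (m : ℝ) / 2 ≤ ∑ l, φ l (y l) :=
    calc (m : ℝ) / 2 = ∑ _l : Fin m, (1 / 2 : ℝ) := by simp [div_eq_mul_inv]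
      _ ≤ ∑ l, φ l (y l) := Finset.sum_le_sum fun l _ => by linarith [hφy l, hφ l]
  have htype : (∑ ε, ‖rademacherSum y ε‖) / 2 ^ m ≤ |T| * (m : ℝ) ^ (1 / p) := by
    have hsum : ∑ i, ‖y i‖ ^ p ≤ m := by
      simpa using Finset.sum_le_card_nsmul Finset.univ (fun i => ‖y i‖ ^ p) 1
        fun i _ => Real.rpow_le_one (norm_nonneg _) (hy i) hp.le
    refine (h m y).trans ?_
    gcongr
    exact le_abs_self T
  have hduality := sum_apply_rademacherSum_rademacherSum
    (ContinuousLinearMap.coeLM ℝ : StrongDual ℝ X →ₗ[ℝ] X →ₗ[ℝ] ℝ) φ y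
  simp only [ContinuousLinearMap.coeLM_apply, ContinuousLinearMap.coe_coe, Fintype.card_fin]
    at hduality
  calc (m : ℝ) / 2 ≤ (∑ ε, rademacherSum φ ε (rademacherSum y ε)) / 2 ^ m := by
        rwa [hduality, mul_div_cancel_left₀ _ (by positivity)]
    _ ≤ A * ((∑ ε, ‖rademacherSum y ε‖) / 2 ^ m) := by
        rw [← mul_div_assoc, Finset.mul_sum]
        gcongr with ε
        exact (le_abs_self _).trans ((rademacherSum φ ε).le_of_opNorm_le (hA ε) _)
    _ ≤ A * (|T| * (m : ℝ) ^ (1 / p)) := mul_le_mul_of_nonneg_left htype hA0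

end UnconditionalBound

theorem statement3_general (X : Type*) [NormedAddCommGroup X] [NormedSpace ℝ X]
    (hinf : ¬ FiniteDimensional ℝ X)
    (p : ℝ) (hp : 1 < p) (T : ℝ)
    (htype : ∀ (m : ℕ) (x : Fin m → X),
      (∑ ε : Fin m → Bool, ‖∑ i, (if ε i then x i else -x i)‖) / 2 ^ m
        ≤ T * (∑ i, ‖x i‖ ^ p) ^ (1 / p)) :
    ¬ ∃ (Q : (↥(UBall X) → ℝ) →ₗ[ℝ] (↥(UBall X) → ℝ)) (K : NNReal),
      (∀ f ∈ Lip0B X, Q f ∈ PhomB 2 X) ∧ (∀ f ∈ PhomB 2 X, Q f = f) ∧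
      (∀ f ∈ Lip0B X, ∀ L : NNReal, LipschitzWith L f → LipschitzWith (K * L) (Q f)) := by
  rintro ⟨Q, K, hmem, hfix, hlip⟩
  have hQ : IsProjectionOntoPhomB 2 Q K := ⟨hmem, hfix, hlip⟩
  have hX : HasRademacherType X p T := fun m x => by
    simpa only [rademacherSum, boolSign, ite_smul, one_smul, neg_smul] using htype m x
  obtain ⟨C, hC0, hC⟩ := hX.exists_sum_norm_rademacherSum_rademacherCoeff_sq_le hp
  obtain ⟨R, hR0, hR⟩ := exists_isSignUnconditional (not_finiteDimensional_strongDual hinf)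
  set A := R * (24 * 3 ^ 2 + (48 * 3 ^ 2 * K * C) ^ 2)
  obtain ⟨m, hm⟩ := exists_mul_natCast_rpow_lt (2 * A * |T|) ((div_lt_one₀ (by linarith)).2 hp)
  obtain ⟨φ, hφ, hφ3⟩ := hR m
  have hA := hQ.norm_rademacherSum_le hC0 (hC m) zero_lt_three hφ3 hR0 fun l => (hφ l).2
  have hle := hX.half_le_of_norm_rademacherSum_le (by linarith) (fun l => (hφ l).1) hA
    (by positivity)
  linarith

/-- **Theorem B (i).** If an infinite-dimensional Banach space `X` has non-trivial
Rademacher type (type `p` for some `p > 1`), then `P(²X)` is not complemented in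
`Lip₀(B_X)`. -/
theorem statement3 (X : Type*) [NormedAddCommGroup X] [NormedSpace ℝ X] [CompleteSpace X]
    (hinf : ¬ FiniteDimensional ℝ X)
    (p : ℝ) (hp : 1 < p) (T : ℝ)
    (htype : ∀ (m : ℕ) (x : Fin m → X),
      (∑ ε : Fin m → Bool, ‖∑ i, (if ε i then x i else - x i)‖) / 2 ^ m
        ≤ T * (∑ i, ‖x i‖ ^ p) ^ (1 / p)) :
    ¬ ∃ (Q : (↥(UBall X) → ℝ) →ₗ[ℝ] (↥(UBall X) → ℝ)) (K : NNReal),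
      (∀ f ∈ Lip0B X, Q f ∈ PhomB 2 X) ∧ (∀ f ∈ PhomB 2 X, Q f = f) ∧
      (∀ f ∈ Lip0B X, ∀ L : NNReal, LipschitzWith L f → LipschitzWith (K * L) (Q f)) :=
  statement3_general X hinf p hp T htype
end
end

section
/- P(²ℓ₂) is not complemented in Lip₀(B_{ℓ₂}): there is no bounded linear projection from Lip₀(B_{ℓ₂}) onto the image of the space of 2-homogeneous polynomials on ℓ₂ under the restriction embedding. -/
open Metric Set Real

noncomputable section

/-!
Suppose `Q` is a projection of norm at most `K`. For a unit vector `u` and `v = t u`, write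
`⟪v, x⟫² / 2 = (1 - cos ⟪v, x⟫) + r_v(x)`. The left side is fixed by `Q`, while `1 - cos ⟪v, ·⟫` is
`t`-Lipschitz, so `Q r_v (u) ≥ t² / 2 - K t`, which is positive once `t > 2 K`.

Now average over the `2ⁿ` sign vectors `u_ε = (∑ i, ε i • e i) / √n` of an orthonormal family.
The local Lipschitz constant of `r_{t u_ε}` at `x` is of order `t⁴ |⟪u_ε, x⟫|³`, and the mean of
this over `ε` is `O(t⁴ n^{-3/2})` by a Khintchine-type moment bound. Expanding the quadratic form
`Q r_{t u_ε}` at `u_ε` and exchanging `Q` with the average, the mean of `Q r_{t u_ε} (u_ε)` is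
`1 / n` times a sum of `n²` polarized coefficients of `Q` applied to signed averages of the
`r_{t u_ε}`. Each is `O(K t⁴ n^{-3/2})`, so the mean is `O(K t⁴ n^{-1/2})`. Letting `n → ∞` gives
`t² / 2 - K t ≤ 0` for every `t ≥ 0`, which is absurd.
-/

open scoped BigOperators Nat

section Signs

lemma abs_intCast_units (u : ℤˣ) : |((u : ℤ) : ℝ)| = 1 := by
  rcases Int.units_eq_one_or u with rfl | rfl <;> simp

lemma intCast_units_mul_self (u : ℤˣ) : ((u : ℤ) : ℝ) * (u : ℤ) = 1 := by
  exact_mod_cast Int.units_coe_mul_self u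

variable {ι : Type*} [Fintype ι] [DecidableEq ι]

lemma expect_exp_sum_sign_mul (a : ι → ℝ) :
    𝔼 ε : ι → ℤˣ, exp (∑ i, (ε i : ℤ) * a i) = ∏ i, cosh (a i) := by
  have sum_units (i : ι) : ∑ u : ℤˣ, exp ((u : ℤ) * a i) = 2 * cosh (a i) := by
    simp only [UnitsInt.univ, cosh_eq, Finset.sum_pair (show (1 : ℤˣ) ≠ -1 by decide)]
    simp only [Units.val_one, Units.val_neg, Int.cast_one, Int.cast_neg, one_mul, neg_mul]
    ring
  calc 𝔼 ε : ι → ℤˣ, exp (∑ i, (ε i : ℤ) * a i)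
      = (∑ ε : ι → ℤˣ, ∏ i, exp ((ε i : ℤ) * a i)) / 2 ^ Fintype.card ι := by
        simp [Fintype.expect_eq_sum_div_card, exp_sum]
    _ = (∏ i, ∑ u : ℤˣ, exp ((u : ℤ) * a i)) / 2 ^ Fintype.card ι := by
        rw [Finset.prod_univ_sum, Fintype.piFinset_univ]
    _ = ∏ i, cosh (a i) := by
        simp_rw [sum_units, Finset.prod_mul_distrib]
        simp

lemma expect_exp_sum_sign_mul_le (a : ι → ℝ) :
    𝔼 ε : ι → ℤˣ, exp (∑ i, (ε i : ℤ) * a i) ≤ exp ((∑ i, a i ^ 2) / 2) := by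
  rw [expect_exp_sum_sign_mul, Finset.sum_div, exp_sum]
  exact Finset.prod_le_prod (fun i _ => (cosh_pos _).le) fun i _ => cosh_le_exp_half_sq _

lemma expect_abs_sum_sign_mul_pow_le (a : ι → ℝ) (k : ℕ) :
    𝔼 ε : ι → ℤˣ, |∑ i, (ε i : ℤ) * a i| ^ k ≤ 2 * k ! * exp ((∑ i, a i ^ 2) / 2) := by
  have abs_pow_le (s : ℝ) : |s| ^ k ≤ k ! * (exp s + exp (-s)) := by
    have h := pow_div_factorial_le_exp |s| (abs_nonneg s) k
    rw [div_le_iff₀' (by positivity)] at h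
    exact h.trans (by gcongr; exact exp_abs_le s)
  calc 𝔼 ε : ι → ℤˣ, |∑ i, (ε i : ℤ) * a i| ^ k
      ≤ 𝔼 ε : ι → ℤˣ, k ! * (exp (∑ i, (ε i : ℤ) * a i) + exp (∑ i, (ε i : ℤ) * -a i)) := by
        refine Finset.expect_le_expect fun ε _ => ?_
        simpa only [mul_neg, Finset.sum_neg_distrib] using abs_pow_le _
    _ ≤ k ! * (exp ((∑ i, a i ^ 2) / 2) + exp ((∑ i, (-a i) ^ 2) / 2)) := by
        rw [← Finset.mul_expect, Finset.expect_add_distrib]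
        gcongr <;> exact expect_exp_sum_sign_mul_le _
    _ = 2 * k ! * exp ((∑ i, a i ^ 2) / 2) := by
        simp only [neg_sq]; ring

end Signs

/-- The error of the approximation of `1 - cos t` by `t ^ 2 / 2`. -/
def cosRemainder (t : ℝ) : ℝ := t ^ 2 / 2 - (1 - cos t)

lemma hasDerivAt_cosRemainder (t : ℝ) : HasDerivAt cosRemainder (t - sin t) t := by
  simpa [cosRemainder] using!
    (((hasDerivAt_id t).pow 2).div_const 2).sub ((hasDerivAt_cos t).const_sub 1)

lemma abs_cosRemainder_sub_le (s t : ℝ) :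
    |cosRemainder s - cosRemainder t| ≤ (|s| ^ 3 + |t| ^ 3) / 6 * |s - t| := by
  have deriv_le (x : ℝ) (hx : x ∈ uIcc t s) : ‖x - sin x‖ ≤ (|s| ^ 3 + |t| ^ 3) / 6 := by
    have abs_le : |x| ≤ |s| ∨ |x| ≤ |t| := by
      rw [← le_max_iff]
      rcases mem_uIcc.1 hx with ⟨htx, hxs⟩ | ⟨hsx, hxt⟩
      · exact max_comm |t| |s| ▸ abs_le_max_abs_abs htx hxs
      · exact abs_le_max_abs_abs hsx hxt
    refine (abs_sub_sin_le x).trans ?_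
    gcongr
    rcases abs_le with h | h
    · exact le_add_of_le_of_nonneg (by gcongr) (by positivity)
    · exact le_add_of_nonneg_of_le (by positivity) (by gcongr)
  exact (convex_uIcc t s).norm_image_sub_le_of_norm_hasDerivWithin_le
    (fun x _ => (hasDerivAt_cosRemainder x).hasDerivWithinAt) deriv_le left_mem_uIcc right_mem_uIcc

section Polarization

variable {X : Type*} [NormedAddCommGroup X]

lemma mem_UBall_iff {x : X} : x ∈ UBall X ↔ ‖x‖ ≤ 1 := mem_closedBall_zero_iff

lemma norm_coe_UBall_le (x : ↥(UBall X)) : ‖(x : X)‖ ≤ 1 := mem_UBall_iff.1 x.2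

lemma neg_mem_UBall {x : X} (hx : x ∈ UBall X) : -x ∈ UBall X := by
  simpa only [mem_UBall_iff, norm_neg] using hx

variable [NormedSpace ℝ X]

lemma midpoint_mem_UBall {x y : X} (hx : x ∈ UBall X) (hy : y ∈ UBall X) :
    midpoint ℝ x y ∈ UBall X :=
  (convex_closedBall 0 1).midpoint_mem hx hy

/-- The functional `g ↦ g ((x + y) / 2) - g ((x - y) / 2)`, which recovers `b x y` from the
diagonal `g x = b x x` of a symmetric bilinear form and involves points of the ball only. -/
def polarization (x y : ↥(UBall X)) : (↥(UBall X) → ℝ) →ₗ[ℝ] ℝ :=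
  LinearMap.proj ⟨midpoint ℝ (x : X) y, midpoint_mem_UBall x.2 y.2⟩ -
    LinearMap.proj ⟨midpoint ℝ (x : X) (-y), midpoint_mem_UBall x.2 (neg_mem_UBall y.2)⟩

lemma abs_polarization_le {g : ↥(UBall X) → ℝ} {L : NNReal} (hg : LipschitzWith L g)
    (x y : ↥(UBall X)) : |polarization x y g| ≤ L := by
  have dist_le : dist (midpoint ℝ (x : X) y) (midpoint ℝ (x : X) (-y)) ≤ 1 := by
    have h : midpoint ℝ (x : X) y - midpoint ℝ (x : X) (-y) = y := by
      simp only [midpoint_eq_smul_add, invOf_eq_inv]; module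
    rw [dist_eq_norm, h]
    exact norm_coe_UBall_le y
  exact (hg.dist_le_mul _ _).trans (mul_le_of_le_one_right L.2 dist_le)

lemma PhomB_apply_zeroB {k : ℕ} (hk : k ≠ 0) {f : ↥(UBall X) → ℝ} (hf : f ∈ PhomB k X) :
    f (zeroB X) = 0 := by
  obtain ⟨M, hM⟩ := hf
  have : NeZero k := ⟨hk⟩
  exact (hM _).trans M.map_zero

lemma sub_mem_PhomB {k : ℕ} {f g : ↥(UBall X) → ℝ} (hf : f ∈ PhomB k X) (hg : g ∈ PhomB k X) :
    f - g ∈ PhomB k X := by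
  obtain ⟨M, hM⟩ := hf
  obtain ⟨N, hN⟩ := hg
  exact ⟨M - N, fun x => by simp [hM, hN]⟩

lemma exists_symm_bilinForm_of_mem_PhomB {f : ↥(UBall X) → ℝ} (hf : f ∈ PhomB 2 X) :
    ∃ b : LinearMap.BilinForm ℝ X, b.IsSymm ∧ ∀ x, f x = b x x := by
  obtain ⟨M, hM⟩ := hf
  let q : QuadraticForm ℝ X :=
    ((continuousMultilinearCurryFin1 ℝ X ℝ).toLinearIsometry.toContinuousLinearMap ∘L
      M.curryLeft).toBilinForm.toQuadraticMap
  refine ⟨QuadraticMap.associated q, ⟨QuadraticMap.associated_isSymm ℝ q⟩, fun x => ?_⟩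
  rw [hM, QuadraticMap.associated_eq_self_apply]
  change M _ = M _
  congr 1
  ext i
  fin_cases i <;> rfl

lemma polarization_eq {b : LinearMap.BilinForm ℝ X} (hb : b.IsSymm) {g : ↥(UBall X) → ℝ}
    (hg : ∀ x, g x = b x x) (x y : ↥(UBall X)) : polarization x y g = b x y := by
  have symm : b y x = b x y := hb.eq y x
  simp only [polarization, LinearMap.sub_apply, LinearMap.proj_apply, hg, midpoint_eq_smul_add,
    map_smul, map_add, map_neg, LinearMap.smul_apply, LinearMap.add_apply, LinearMap.neg_apply,
    smul_eq_mul, invOf_eq_inv, symm]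
  ring

lemma PhomB_apply_sum_smul {ι : Type*} [Fintype ι] {f : ↥(UBall X) → ℝ} (hf : f ∈ PhomB 2 X)
    (c : ι → ℝ) (e : ι → ↥(UBall X)) (hmem : ∑ i, c i • (e i : X) ∈ UBall X) :
    f ⟨∑ i, c i • (e i : X), hmem⟩ = ∑ i, ∑ j, c i * c j * polarization (e i) (e j) f := by
  obtain ⟨b, hb, hfb⟩ := exists_symm_bilinForm_of_mem_PhomB hf
  simp only [hfb, polarization_eq hb hfb, map_sum, map_smul, LinearMap.sum_apply,
    LinearMap.smul_apply, smul_eq_mul, Finset.mul_sum, mul_assoc]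
  rw [Finset.sum_comm]
  simp only [mul_left_comm]

end Polarization

section Ridge

variable {E : Type*} [NormedAddCommGroup E] [InnerProductSpace ℝ E]

/-- The ridge function `x ↦ p ⟪v, x⟫` on the unit ball, with profile `p` and direction `v`. -/
def ridge (p : ℝ → ℝ) (v : E) : ↥(UBall E) → ℝ := fun x => p (inner ℝ v (x : E))

lemma lipschitzWith_inner_UBall (v : E) :
    LipschitzWith ‖v‖₊ fun x : ↥(UBall E) => inner ℝ v (x : E) := by
  have h : ‖innerSL ℝ v‖₊ = ‖v‖₊ := NNReal.eq (innerSL_apply_norm ℝ v)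
  simpa [h] using! (innerSL ℝ v).lipschitz.comp (LipschitzWith.subtype_val _)

lemma abs_inner_sub_inner_le (v : E) (x y : ↥(UBall E)) :
    |inner ℝ v (x : E) - inner ℝ v (y : E)| ≤ ‖v‖ * dist x y :=
  (lipschitzWith_inner_UBall v).dist_le_mul x y

lemma lipschitzWith_ridge {p : ℝ → ℝ} {C : NNReal} (hp : LipschitzWith C p) (v : E) :
    LipschitzWith (C * ‖v‖₊) (ridge p v) :=
  hp.comp (lipschitzWith_inner_UBall v)

lemma ridge_mem_Lip0B {p : ℝ → ℝ} {C : NNReal} (hp : LipschitzWith C p) (h0 : p 0 = 0) (v : E) :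
    ridge p v ∈ Lip0B E :=
  ⟨⟨_, lipschitzWith_ridge hp v⟩, by simp [ridge, zeroB, h0]⟩

lemma ridge_sq_div_two_mem_PhomB (v : E) : ridge (fun t => t ^ 2 / 2) v ∈ PhomB 2 E := by
  refine ⟨(1 / 2 : ℝ) • (ContinuousMultilinearMap.mkPiAlgebra ℝ (Fin 2) ℝ).compContinuousLinearMap
    fun _ => innerSL ℝ v, fun x => ?_⟩
  simp only [ridge, _root_.smul_apply,
    ContinuousMultilinearMap.compContinuousLinearMap_apply,
    ContinuousMultilinearMap.mkPiAlgebra_apply, innerSL_apply_apply, Finset.prod_const,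
    Finset.card_univ, Fintype.card_fin, smul_eq_mul]
  ring

lemma lipschitzWith_one_sub_cos : LipschitzWith 1 fun t : ℝ => 1 - cos t :=
  LipschitzWith.of_dist_le_mul fun s t => by
    rw [Real.dist_eq, Real.dist_eq, sub_sub_sub_cancel_left, abs_sub_comm, NNReal.coe_one, one_mul]
    exact abs_cos_sub_cos_le s t

/-- `Q` restricts to a projection of norm at most `K` from `Lip₀(B_E)` onto `P(²E)`; as in the
theorem, `Q` is defined on all functions on the ball, but only its values on `Lip₀(B_E)` are
controlled. -/
structure IsLip0Projection (Q : (↥(UBall E) → ℝ) →ₗ[ℝ] (↥(UBall E) → ℝ)) (K : NNReal) :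
    Prop where
  map_mem : ∀ f ∈ Lip0B E, Q f ∈ PhomB 2 E
  map_eq_self : ∀ f ∈ PhomB 2 E, Q f = f
  lipschitzWith_map : ∀ f ∈ Lip0B E, ∀ L : NNReal, LipschitzWith L f → LipschitzWith (K * L) (Q f)

namespace IsLip0Projection

variable {Q : (↥(UBall E) → ℝ) →ₗ[ℝ] (↥(UBall E) → ℝ)} {K : NNReal}

lemma map_ridge_cosRemainder (hQ : IsLip0Projection Q K) (v : E) :
    Q (ridge cosRemainder v) = ridge (fun t => t ^ 2 / 2) v - Q (ridge (fun t => 1 - cos t) v) := by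
  have h : ridge cosRemainder v = ridge (fun t => t ^ 2 / 2) v - ridge (fun t => 1 - cos t) v := rfl
  rw [h, map_sub, hQ.map_eq_self _ (ridge_sq_div_two_mem_PhomB v)]

lemma map_ridge_one_sub_cos_mem_PhomB (hQ : IsLip0Projection Q K) (v : E) :
    Q (ridge (fun t => 1 - cos t) v) ∈ PhomB 2 E :=
  hQ.map_mem _ (ridge_mem_Lip0B lipschitzWith_one_sub_cos (by simp) v)

lemma map_ridge_cosRemainder_mem_PhomB (hQ : IsLip0Projection Q K) (v : E) :
    Q (ridge cosRemainder v) ∈ PhomB 2 E := by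
  rw [hQ.map_ridge_cosRemainder]
  exact sub_mem_PhomB (ridge_sq_div_two_mem_PhomB v) (hQ.map_ridge_one_sub_cos_mem_PhomB v)

lemma abs_map_ridge_one_sub_cos_le (hQ : IsLip0Projection Q K) (v : E) (x : ↥(UBall E)) :
    |Q (ridge (fun t => 1 - cos t) v) x| ≤ K * ‖v‖ := by
  have lip := hQ.lipschitzWith_map _ (ridge_mem_Lip0B lipschitzWith_one_sub_cos (by simp) v) _
    (lipschitzWith_ridge lipschitzWith_one_sub_cos v)
  have zero := PhomB_apply_zeroB two_ne_zero (hQ.map_ridge_one_sub_cos_mem_PhomB v)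
  have dist_le : dist x (zeroB E) ≤ 1 := x.2
  calc |Q (ridge (fun t => 1 - cos t) v) x|
      ≤ K * ‖v‖ * dist x (zeroB E) := by
        simpa [Real.dist_eq, zero] using lip.dist_le_mul x (zeroB E)
    _ ≤ K * ‖v‖ := mul_le_of_le_one_right (by positivity) dist_le

lemma le_map_ridge_cosRemainder (hQ : IsLip0Projection Q K) {t : ℝ} (ht : 0 ≤ t)
    (u : ↥(UBall E)) (hu : ‖(u : E)‖ = 1) :
    t ^ 2 / 2 - K * t ≤ Q (ridge cosRemainder (t • (u : E))) u := by
  have sq_eq : ridge (fun t => t ^ 2 / 2) (t • (u : E)) u = t ^ 2 / 2 := by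
    simp [ridge, inner_smul_left, hu]
  have h := (le_abs_self _).trans (hQ.abs_map_ridge_one_sub_cos_le (t • (u : E)) u)
  rw [norm_smul, hu, mul_one, norm_of_nonneg ht] at h
  rw [hQ.map_ridge_cosRemainder, Pi.sub_apply, sq_eq]
  gcongr

end IsLip0Projection

end Ridge

lemma map_expect_smul {V W κ : Type*} [Fintype κ] [AddCommGroup V] [Module ℝ V]
    [Module ℚ≥0 V] [IsScalarTower ℚ≥0 ℝ V] [AddCommGroup W] [Module ℝ W] [Module ℚ≥0 W]
    [IsScalarTower ℚ≥0 ℝ W] (A : V →ₗ[ℝ] W) (c : κ → ℝ) (v : κ → V) :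
    A (𝔼 k, c k • v k) = 𝔼 k, c k • A (v k) := by
  simpa only [map_smul, LinearMap.coe_restrictScalars] using
    map_expect (A.restrictScalars ℚ≥0) (fun k => c k • v k) Finset.univ

section SignVector

variable {E : Type*} [NormedAddCommGroup E] [InnerProductSpace ℝ E]
variable {ι : Type*} [Fintype ι] {e : ι → E}

lemma orthonormal_mem_UBall {κ : Type*} {e : κ → E} (he : Orthonormal ℝ e) (i : κ) :
    e i ∈ UBall E :=
  mem_UBall_iff.2 (he.1 i).le

/-- The normalised sign combination `(∑ i, ε i • e i) / √n`, where `n` is the number of vectors. -/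
def signVector (e : ι → E) (ε : ι → ℤˣ) : E := ∑ i, ((ε i : ℤ) / √(Fintype.card ι)) • e i

lemma norm_signVector [Nonempty ι] (he : Orthonormal ℝ e) (ε : ι → ℤˣ) :
    ‖signVector e ε‖ = 1 := by
  rw [← sq_eq_sq₀ (norm_nonneg _) zero_le_one, ← real_inner_self_eq_norm_sq, signVector,
    he.inner_sum]
  simp [div_mul_div_comm, intCast_units_mul_self]

lemma signVector_mem_UBall [Nonempty ι] (he : Orthonormal ℝ e) (ε : ι → ℤˣ) :
    signVector e ε ∈ UBall E :=
  mem_UBall_iff.2 (norm_signVector he ε).le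

lemma inner_signVector (e : ι → E) (ε : ι → ℤˣ) (x : E) :
    inner ℝ (signVector e ε) x = (∑ i, (ε i : ℤ) * inner ℝ (e i) x) / √(Fintype.card ι) := by
  simp [signVector, sum_inner, inner_smul_left, Finset.sum_div, div_mul_eq_mul_div]

lemma PhomB_apply_signVector [Nonempty ι] (he : Orthonormal ℝ e) {f : ↥(UBall E) → ℝ}
    (hf : f ∈ PhomB 2 E) (ε : ι → ℤˣ) :
    f ⟨signVector e ε, signVector_mem_UBall he ε⟩ =
      (∑ i, ∑ j, (ε i : ℤ) * (ε j : ℤ) *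
        polarization ⟨e i, orthonormal_mem_UBall he i⟩ ⟨e j, orthonormal_mem_UBall he j⟩ f) /
        Fintype.card ι := by
  refine (PhomB_apply_sum_smul hf _ (fun i => ⟨e i, orthonormal_mem_UBall he i⟩)
    (signVector_mem_UBall he ε)).trans ?_
  simp only [div_mul_div_comm, mul_self_sqrt (Nat.cast_nonneg _)]
  simp only [Finset.sum_div, div_mul_eq_mul_div]

variable [DecidableEq ι]

lemma expect_abs_inner_signVector_pow_le (he : Orthonormal ℝ e) (k : ℕ) (x : ↥(UBall E)) :
    𝔼 ε : ι → ℤˣ, |inner ℝ (signVector e ε) (x : E)| ^ k ≤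
      2 * k ! * exp (1 / 2) / √(Fintype.card ι) ^ k := by
  have bessel : ∑ i, (inner ℝ (e i) (x : E)) ^ 2 ≤ 1 := by
    have h := he.sum_inner_products_le (x : E) (s := Finset.univ)
    simp only [Real.norm_eq_abs, sq_abs] at h
    exact h.trans (pow_le_one₀ (norm_nonneg _) (norm_coe_UBall_le x))
  simp only [inner_signVector, abs_div, abs_of_nonneg (sqrt_nonneg _), div_pow]
  rw [← Finset.expect_div]
  gcongr
  refine (expect_abs_sum_sign_mul_pow_le _ k).trans ?_
  gcongr

lemma abs_ridge_cosRemainder_smul_sub_le {t : ℝ} (ht : 0 ≤ t) {u : E} (hu : ‖u‖ ≤ 1)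
    (x y : ↥(UBall E)) :
    |ridge cosRemainder (t • u) x - ridge cosRemainder (t • u) y| ≤
      t ^ 4 / 6 * (|inner ℝ u (x : E)| ^ 3 + |inner ℝ u (y : E)| ^ 3) * dist x y := by
  simp only [ridge, real_inner_smul_left]
  refine (abs_cosRemainder_sub_le _ _).trans ?_
  have h : |inner ℝ u (x : E) - inner ℝ u (y : E)| ≤ dist x y :=
    (abs_inner_sub_inner_le u x y).trans (mul_le_of_le_one_left dist_nonneg hu)
  rw [← mul_sub]
  simp only [abs_mul, abs_of_nonneg ht, mul_pow]
  calc _ = t ^ 4 / 6 * (|inner ℝ u (x : E)| ^ 3 + |inner ℝ u (y : E)| ^ 3) *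
        |inner ℝ u (x : E) - inner ℝ u (y : E)| := by ring
    _ ≤ _ := by gcongr

lemma lipschitzWith_expect_smul_ridge_cosRemainder [Nonempty ι] (he : Orthonormal ℝ e) {t : ℝ}
    (ht : 0 ≤ t) {c : (ι → ℤˣ) → ℝ} (hc : ∀ ε, |c ε| ≤ 1) :
    LipschitzWith (4 * exp (1 / 2) * t ^ 4 / √(Fintype.card ι) ^ 3).toNNReal
      (𝔼 ε : ι → ℤˣ, c ε • ridge cosRemainder (t • signVector e ε)) := by
  refine LipschitzWith.of_dist_le' fun x y => ?_
  set r := fun ε => ridge cosRemainder (t • signVector e ε)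
  set s := fun ε (x : ↥(UBall E)) => |inner ℝ (signVector e ε) (x : E)| ^ 3
  have cube_le (x : ↥(UBall E)) :
      𝔼 ε, s ε x ≤ 12 * exp (1 / 2) / √(Fintype.card ι) ^ 3 := by
    convert expect_abs_inner_signVector_pow_le he 3 x using 3
    norm_num [Nat.factorial]
  calc dist ((𝔼 ε, c ε • r ε) x) ((𝔼 ε, c ε • r ε) y)
      = |𝔼 ε, c ε * (r ε x - r ε y)| := by
        simp [Real.dist_eq, Finset.expect_apply, mul_sub, Finset.expect_sub_distrib]
    _ ≤ 𝔼 ε, |r ε x - r ε y| := by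
        refine (Finset.abs_expect_le _ _).trans (Finset.expect_le_expect fun ε _ => ?_)
        rw [abs_mul]
        exact mul_le_of_le_one_left (abs_nonneg _) (hc ε)
    _ ≤ 𝔼 ε, t ^ 4 / 6 * (s ε x + s ε y) * dist x y :=
        Finset.expect_le_expect fun ε _ =>
          abs_ridge_cosRemainder_smul_sub_le ht (norm_signVector he ε).le x y
    _ = t ^ 4 / 6 * (𝔼 ε, s ε x + 𝔼 ε, s ε y) * dist x y := by
        rw [← Finset.expect_mul, ← Finset.mul_expect, Finset.expect_add_distrib]
    _ ≤ t ^ 4 / 6 * (12 * exp (1 / 2) / √(Fintype.card ι) ^ 3 +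
          12 * exp (1 / 2) / √(Fintype.card ι) ^ 3) * dist x y := by
        gcongr <;> exact cube_le _
    _ = 4 * exp (1 / 2) * t ^ 4 / √(Fintype.card ι) ^ 3 * dist x y := by ring

lemma expect_PhomB_apply_signVector [Nonempty ι] (he : Orthonormal ℝ e)
    {f : (ι → ℤˣ) → ↥(UBall E) → ℝ} (hf : ∀ ε, f ε ∈ PhomB 2 E) :
    𝔼 ε, f ε ⟨signVector e ε, signVector_mem_UBall he ε⟩ =
      (∑ i, ∑ j, polarization ⟨e i, orthonormal_mem_UBall he i⟩ ⟨e j, orthonormal_mem_UBall he j⟩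
        (𝔼 ε : ι → ℤˣ, ((ε i : ℤ) * (ε j : ℤ) : ℝ) • f ε)) / Fintype.card ι := by
  simp only [PhomB_apply_signVector he (hf _), map_expect_smul, smul_eq_mul]
  rw [← Finset.expect_div]
  simp only [Finset.expect_sum_comm]

lemma expect_smul_ridge_cosRemainder_mem_Lip0B [Nonempty ι] (he : Orthonormal ℝ e) {t : ℝ}
    (ht : 0 ≤ t) {c : (ι → ℤˣ) → ℝ} (hc : ∀ ε, |c ε| ≤ 1) :
    𝔼 ε : ι → ℤˣ, c ε • ridge cosRemainder (t • signVector e ε) ∈ Lip0B E :=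
  ⟨⟨_, lipschitzWith_expect_smul_ridge_cosRemainder he ht hc⟩, by
    simp [Finset.expect_apply, ridge, zeroB, cosRemainder]⟩

end SignVector

lemma IsLip0Projection.sq_div_two_sub_le {E ι : Type*} [NormedAddCommGroup E]
    [InnerProductSpace ℝ E] [Fintype ι] [Nonempty ι] {e : ι → E}
    {Q : (↥(UBall E) → ℝ) →ₗ[ℝ] (↥(UBall E) → ℝ)} {K : NNReal} (hQ : IsLip0Projection Q K)
    (he : Orthonormal ℝ e) {t : ℝ} (ht : 0 ≤ t) :
    t ^ 2 / 2 - K * t ≤ 4 * exp (1 / 2) * K * t ^ 4 / √(Fintype.card ι) := by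
  classical
  set n : ℝ := (Fintype.card ι : ℝ) with hn
  let r (ε : ι → ℤˣ) : ↥(UBall E) → ℝ := ridge cosRemainder (t • signVector e ε)
  have coeff_le (i j : ι) :
      polarization ⟨e i, orthonormal_mem_UBall he i⟩ ⟨e j, orthonormal_mem_UBall he j⟩
        (𝔼 ε : ι → ℤˣ, ((ε i : ℤ) * (ε j : ℤ) : ℝ) • Q (r ε)) ≤
        K * (4 * exp (1 / 2) * t ^ 4 / √n ^ 3) := by
    have abs_sign_le (ε : ι → ℤˣ) : |((ε i : ℤ) * (ε j : ℤ) : ℝ)| ≤ 1 := by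
      rw [abs_mul, abs_intCast_units, abs_intCast_units, one_mul]
    have lip := hQ.lipschitzWith_map _ (expect_smul_ridge_cosRemainder_mem_Lip0B he ht abs_sign_le)
      _ (lipschitzWith_expect_smul_ridge_cosRemainder he ht abs_sign_le)
    rw [map_expect_smul] at lip
    refine (le_abs_self _).trans ((abs_polarization_le lip _ _).trans_eq ?_)
    rw [NNReal.coe_mul, coe_toNNReal _ (by positivity)]
  calc t ^ 2 / 2 - K * t
      ≤ 𝔼 ε, Q (r ε) ⟨signVector e ε, signVector_mem_UBall he ε⟩ :=
        Finset.le_expect Finset.univ_nonempty fun ε _ =>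
          hQ.le_map_ridge_cosRemainder ht ⟨_, signVector_mem_UBall he ε⟩ (norm_signVector he ε)
    _ ≤ (∑ _i : ι, ∑ _j : ι, K * (4 * exp (1 / 2) * t ^ 4 / √n ^ 3)) / n := by
        rw [expect_PhomB_apply_signVector he fun ε => hQ.map_ridge_cosRemainder_mem_PhomB _]
        gcongr
        exact coeff_le _ _
    _ = 4 * exp (1 / 2) * K * t ^ 4 / √n := by
        have n_pos : 0 < n := Nat.cast_pos.2 Fintype.card_pos
        simp only [Finset.sum_const, Finset.card_univ, nsmul_eq_mul, ← hn]
        field_simp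
        rw [sq_sqrt n_pos.le]
        ring

lemma exists_orthonormal_fin {E : Type*} [NormedAddCommGroup E] [InnerProductSpace ℝ E]
    (hE : ¬ FiniteDimensional ℝ E) (n : ℕ) : ∃ e : Fin n → E, Orthonormal ℝ e := by
  obtain ⟨v, hv⟩ := exists_linearIndependent_of_le_rank (R := ℝ) (M := E) (n := n)
    (Cardinal.natCast_lt_aleph0.le.trans (not_lt.1 (mt Module.rank_lt_aleph0_iff.1 hE)))
  exact ⟨_, InnerProductSpace.gramSchmidtNormed_orthonormal hv⟩

lemma not_finiteDimensional_lp_nat : ¬ FiniteDimensional ℝ (lp (fun _ : ℕ => ℝ) 2) := fun _ =>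
  let b : HilbertBasis ℕ ℝ (lp (fun _ : ℕ => ℝ) 2) := ⟨LinearIsometryEquiv.refl ℝ _⟩
  not_finite_iff_infinite.2 inferInstance b.orthonormal.linearIndependent.finite

theorem statement4_general {E : Type*} [NormedAddCommGroup E] [InnerProductSpace ℝ E]
    (hE : ¬ FiniteDimensional ℝ E) :
    ¬ ∃ (Q : (↥(UBall E) → ℝ) →ₗ[ℝ] (↥(UBall E) → ℝ)) (K : NNReal),
      (∀ f ∈ Lip0B E, Q f ∈ PhomB 2 E) ∧
      (∀ f ∈ PhomB 2 E, Q f = f) ∧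
      (∀ f ∈ Lip0B E, ∀ L : NNReal, LipschitzWith L f → LipschitzWith (K * L) (Q f)) := by
  rintro ⟨Q, K, map_mem, map_eq_self, lipschitzWith_map⟩
  have hQ : IsLip0Projection Q K := ⟨map_mem, map_eq_self, lipschitzWith_map⟩
  have le_div_sqrt (t : ℝ) (ht : 0 ≤ t) (n : ℕ) :
      t ^ 2 / 2 - K * t ≤ 4 * exp (1 / 2) * K * t ^ 4 / √((n + 1 : ℕ) : ℝ) := by
    obtain ⟨e, he⟩ := exists_orthonormal_fin hE (n + 1)
    simpa only [Fintype.card_fin] using hQ.sq_div_two_sub_le he ht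
  have le_zero (t : ℝ) (ht : 0 ≤ t) : t ^ 2 / 2 - K * t ≤ 0 := by
    have tendsto_sqrt : Filter.Tendsto (fun n : ℕ => √((n + 1 : ℕ) : ℝ)) .atTop .atTop :=
      tendsto_sqrt_atTop.comp
        (tendsto_natCast_atTop_atTop.comp (Filter.tendsto_add_atTop_nat 1))
    exact ge_of_tendsto' (tendsto_sqrt.const_div_atTop _) (le_div_sqrt t ht)
  have h := le_zero (2 * K + 2) (by positivity)
  nlinarith [K.coe_nonneg]

/-- **Theorem B (ii).** `P(²ℓ₂)` is not complemented in `Lip₀(B_{ℓ₂})`. -/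
theorem statement4 :
    ¬ ∃ (Q : (↥(UBall (lp (fun _ : ℕ => ℝ) 2)) → ℝ) →ₗ[ℝ]
             (↥(UBall (lp (fun _ : ℕ => ℝ) 2)) → ℝ)) (K : NNReal),
      (∀ f ∈ Lip0B (lp (fun _ : ℕ => ℝ) 2), Q f ∈ PhomB 2 (lp (fun _ : ℕ => ℝ) 2)) ∧
      (∀ f ∈ PhomB 2 (lp (fun _ : ℕ => ℝ) 2), Q f = f) ∧
      (∀ f ∈ Lip0B (lp (fun _ : ℕ => ℝ) 2), ∀ L : NNReal,
        LipschitzWith L f → LipschitzWith (K * L) (Q f)) :=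
  statement4_general not_finiteDimensional_lp_nat
end
end
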